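/- arXiv:1311.0335 — 3 statements merged into one kernel-verified Lean document; each statement's English description precedes it below -/
import Mathlib

section
/- The set of absolutely normal numbers is Π⁰₃-hard: for every set A ⊆ ℕ^ℕ that is Π⁰₃ in Baire space (i.e., A = ⋂_n ⋃_m C_{n,m} for closed sets C_{n,m} ⊆ ℕ^ℕ in the product topology), there is a continuous function g : ℕ^ℕ → ℝ such that for every f ∈ ℕ^ℕ: if f ∈ A then g(f) is absolutely normal, and if f ∉ A then g(f) is absolutely abnormal. In particular, f ∈ A iff g(f) is absolutely normal. -/
open Filter

/-- The `(i+1)`-st digit (for `i = 0, 1, 2, ...`) of the base-`b` expansion of the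
fractional part of a real `R`.  For `R ∈ [0,1)` this is the unique expansion of `R`
whose digits are not eventually all equal to `b - 1`; for general `R`, normality is
defined via the fractional part. -/
noncomputable def rdigit (b : ℕ) (R : ℝ) (i : ℕ) : ℕ :=
  (⌊Int.fract R * (b : ℝ) ^ (i + 1)⌋).toNat % b

/-- The block consisting of the first `n` digits of the base-`b` expansion of `R`. -/
noncomputable def rdigits (b : ℕ) (R : ℝ) (n : ℕ) : List ℕ := (List.range n).map (rdigit b R)

/-- `R` is simply normal to base `b`: every digit `d < b` occurs with limiting
frequency `1/b` in the base-`b` expansion of `R`. -/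
def SimplyNormal (b : ℕ) (R : ℝ) : Prop :=
  ∀ d < b, Tendsto (fun n => ((rdigits b R n).count d : ℝ) / n) atTop (nhds (1 / (b : ℝ)))

/-- `R` is normal to base `b`: it is simply normal to base `b ^ ℓ` for every `ℓ ≥ 1`. -/
def NormalBase (b : ℕ) (R : ℝ) : Prop := ∀ ℓ : ℕ, 1 ≤ ℓ → SimplyNormal (b ^ ℓ) R

/-- `R` is absolutely normal: normal to every base `b ≥ 2`. -/
def AbsolutelyNormal (R : ℝ) : Prop := ∀ b : ℕ, 2 ≤ b → NormalBase b R

/-- `R` is absolutely abnormal: normal to no base `b ≥ 2`. -/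
def AbsolutelyAbnormal (R : ℝ) : Prop := ∀ b : ℕ, 2 ≤ b → ¬ NormalBase b R

/-!
Fix bases `β 0, β 1, …` and requests `q 0, q 1, …`. A nested sequence of intervals is built, in
stages, around a real number `g q`. Stage `t` first inserts a run of zeros in base `β t`, of length
about `1 / q t` of the digits determined so far, and then passes to a much smaller interval whose
points have well distributed new digits in all bases up to `t + 2`. Such an interval exists because
almost every real is simply normal to every base. A zero run of proportion `1 / p` disturbs the
digit frequencies in every base by `O(1 / p)` only, so `g q` is simply normal to every base if each
proportion is requested only finitely often, while a proportion requested infinitely often in one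
base destroys simple normality to that base. As stage `t` depends on the first requests only, `g` is
continuous.

Membership in a `Σ⁰₂` set is read off continuously as a binary sequence that is eventually zero
exactly at its members. Given the sequences of countably many `Σ⁰₂` sets, each event of the `n`-th
sequence is answered, for every `k`, by a run of proportion `1 / (n + k + 1)` in base `k + 2`. If
all sequences are eventually zero, every proportion is requested finitely often; if the `n`-th is
not, then every base `k + 2` receives infinitely many runs of one fixed proportion.
-/

section Digits

variable {b : ℕ} {x y : ℝ}

lemma rdigit_cast_eq_floor_emod (b : ℕ) (x : ℝ) (i : ℕ) :
    (rdigit b x i : ℤ) = ⌊(b : ℝ) ^ (i + 1) * x⌋ % b := by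
  have hfloor : ⌊Int.fract x * (b : ℝ) ^ (i + 1)⌋ =
      ⌊(b : ℝ) ^ (i + 1) * x⌋ - ⌊x⌋ * (b : ℤ) ^ i * b := by
    rw [← Int.floor_sub_intCast, Int.fract]
    congr 1
    push_cast
    ring
  have hnonneg : 0 ≤ ⌊Int.fract x * (b : ℝ) ^ (i + 1)⌋ :=
    Int.floor_nonneg.2 (mul_nonneg (Int.fract_nonneg x) (by positivity))
  rw [rdigit, Int.natCast_mod, Int.toNat_of_nonneg hnonneg, hfloor, Int.sub_mul_emod_self_right]

lemma rdigit_pow_mul (b m : ℕ) (x : ℝ) (i : ℕ) :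
    rdigit b ((b : ℝ) ^ m * x) i = rdigit b x (m + i) := by
  zify
  rw [rdigit_cast_eq_floor_emod, rdigit_cast_eq_floor_emod, ← mul_assoc, ← pow_add]
  congr 4
  ring

lemma rdigit_add_one (b : ℕ) (x : ℝ) (i : ℕ) : rdigit b (x + 1) i = rdigit b x i := by
  rw [rdigit, Int.fract_add_one, rdigit]

lemma rdigit_congr_of_floor_eq (hb : 0 < b) {i Q : ℕ} (hi : i < Q)
    (h : ⌊(b : ℝ) ^ Q * x⌋ = ⌊(b : ℝ) ^ Q * y⌋) : rdigit b x i = rdigit b y i := by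
  have floor_eq_div (z : ℝ) :
      ⌊(b : ℝ) ^ (i + 1) * z⌋ = ⌊(b : ℝ) ^ Q * z⌋ / ((b ^ (Q - (i + 1)) : ℕ) : ℤ) := by
    rw [← Int.floor_div_natCast, Nat.cast_pow, mul_div_right_comm,
      div_eq_mul_inv _ ((b : ℝ) ^ _), ← pow_sub₀ _ (Nat.cast_ne_zero.2 hb.ne') (Nat.sub_le _ _),
      Nat.sub_sub_self hi]
  zify
  rw [rdigit_cast_eq_floor_emod, rdigit_cast_eq_floor_emod, floor_eq_div, floor_eq_div, h]

lemma rdigit_zero_eq_natFloor (hx : x ∈ Set.Ico (0 : ℝ) 1) : rdigit b x 0 = ⌊(b : ℝ) * x⌋₊ := by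
  have hlt : ⌊(b : ℝ) * x⌋₊ < b ∨ b = 0 := by
    rcases b.eq_zero_or_pos with rfl | hb
    · exact .inr rfl
    · have hb' : (0 : ℝ) < b := Nat.cast_pos.2 hb
      exact .inl ((Nat.floor_lt (mul_nonneg hb'.le hx.1)).2 (mul_lt_of_lt_one_right hb' hx.2))
  rw [rdigit, Int.fract_eq_self.2 hx, zero_add, pow_one, mul_comm, Int.floor_toNat]
  rcases hlt with hlt | rfl
  · exact Nat.mod_eq_of_lt hlt
  · simp

lemma measurable_rdigit (b i : ℕ) : Measurable fun x => rdigit b x i :=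
  (measurable_from_top (f := fun z : ℤ => z.toNat % b)).comp
    (Int.measurable_floor.comp (measurable_fract.mul_const _))

lemma length_rdigits (b : ℕ) (x : ℝ) (n : ℕ) : (rdigits b x n).length = n := by
  simp [rdigits]

lemma rdigits_add (b : ℕ) (x : ℝ) (m n : ℕ) :
    rdigits b x (m + n) = rdigits b x m ++ rdigits b ((b : ℝ) ^ m * x) n := by
  simp [rdigits, List.range_add, rdigit_pow_mul]

lemma rdigits_add_one (b : ℕ) (x : ℝ) (n : ℕ) : rdigits b (x + 1) n = rdigits b x n :=
  List.map_congr_left fun i _ => rdigit_add_one b x i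

lemma rdigits_congr_of_floor_eq (hb : 0 < b) {n Q : ℕ} (hn : n ≤ Q)
    (h : ⌊(b : ℝ) ^ Q * x⌋ = ⌊(b : ℝ) ^ Q * y⌋) : rdigits b x n = rdigits b y n :=
  List.map_congr_left fun _ hi =>
    rdigit_congr_of_floor_eq hb ((List.mem_range.1 hi).trans_le hn) h

lemma rdigits_eq_replicate_zero {r : ℕ} (hb : 1 ≤ b) (h : Int.fract x * (b : ℝ) ^ r < 1) :
    rdigits b x r = List.replicate r 0 := by
  refine List.eq_replicate_iff.2 ⟨length_rdigits b x r, fun k hk => ?_⟩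
  obtain ⟨i, hi, rfl⟩ := List.mem_map.1 hk
  have hle : Int.fract x * (b : ℝ) ^ (i + 1) ≤ Int.fract x * (b : ℝ) ^ r :=
    mul_le_mul_of_nonneg_left
      (pow_le_pow_right₀ (by exact_mod_cast hb) (List.mem_range.1 hi)) (Int.fract_nonneg x)
  have hfloor : ⌊Int.fract x * (b : ℝ) ^ (i + 1)⌋ = 0 :=
    Int.floor_eq_zero_iff.2
      ⟨mul_nonneg (Int.fract_nonneg x) (by positivity), hle.trans_lt h⟩
  simp [rdigit, hfloor]

end Digits

section Discrepancy

variable {b d : ℕ} {x y : ℝ}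

/-- The discrepancy of the digit `d` among the first `n` base-`b` digits of `x`: its number of
occurrences minus the number `n / b` expected of a simply normal number. -/
noncomputable def digitDiscrepancy (b d : ℕ) (x : ℝ) (n : ℕ) : ℝ :=
  (rdigits b x n).count d - n / b

lemma digitDiscrepancy_add (b d : ℕ) (x : ℝ) (m n : ℕ) :
    digitDiscrepancy b d x (m + n) =
      digitDiscrepancy b d x m + digitDiscrepancy b d ((b : ℝ) ^ m * x) n := by
  simp only [digitDiscrepancy, rdigits_add, List.count_append, Nat.cast_add]
  ring

lemma digitDiscrepancy_add_one (b d : ℕ) (x : ℝ) (n : ℕ) :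
    digitDiscrepancy b d (x + 1) n = digitDiscrepancy b d x n := by
  rw [digitDiscrepancy, rdigits_add_one, digitDiscrepancy]

lemma abs_digitDiscrepancy_le (b d : ℕ) (x : ℝ) (n : ℕ) : |digitDiscrepancy b d x n| ≤ n := by
  have hcount : ((rdigits b x n).count d : ℝ) ≤ n := by
    exact_mod_cast List.count_le_length.trans_eq (length_rdigits b x n)
  have hdiv : (n : ℝ) / b ≤ n := by
    rcases b.eq_zero_or_pos with rfl | hb
    · simp
    · exact div_le_self n.cast_nonneg (Nat.one_le_cast.2 hb)
  have hdiv_nonneg : (0 : ℝ) ≤ n / b := by positivity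
  rw [digitDiscrepancy, abs_le]
  constructor <;> linarith [(rdigits b x n).count d |>.cast_nonneg (α := ℝ)]

lemma abs_digitDiscrepancy_add_le (b d : ℕ) (x : ℝ) (m n : ℕ) :
    |digitDiscrepancy b d x (m + n)| ≤ |digitDiscrepancy b d x m| + n := by
  rw [digitDiscrepancy_add]
  exact (abs_add_le _ _).trans (by gcongr; exact abs_digitDiscrepancy_le ..)

lemma digitDiscrepancy_congr_of_floor_eq (hb : 0 < b) {n Q : ℕ} (hn : n ≤ Q)
    (h : ⌊(b : ℝ) ^ Q * x⌋ = ⌊(b : ℝ) ^ Q * y⌋) :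
    digitDiscrepancy b d x n = digitDiscrepancy b d y n := by
  rw [digitDiscrepancy, rdigits_congr_of_floor_eq hb hn h, digitDiscrepancy]

lemma simplyNormal_iff_isLittleO :
    SimplyNormal b x ↔ ∀ d < b, (digitDiscrepancy b d x) =o[atTop] fun n => (n : ℝ) := by
  refine forall₂_congr fun d _ => ?_
  rw [Asymptotics.isLittleO_iff_tendsto'
    ((eventually_ne_atTop 0).mono fun n hn h => absurd h (Nat.cast_ne_zero.2 hn)),
    ← tendsto_sub_nhds_zero_iff]
  refine tendsto_congr' ((eventually_ne_atTop 0).mono fun n hn => ?_)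
  have hn' : (n : ℝ) ≠ 0 := Nat.cast_ne_zero.2 hn
  simp only [digitDiscrepancy, sub_div, div_right_comm _ (b : ℝ), div_self hn']

lemma not_simplyNormal_of_frequently_rdigits_eq_zero {p : ℕ} (hb : 2 ≤ b) (hp : 0 < p)
    (h : ∃ᶠ n in atTop, rdigits b ((b : ℝ) ^ n * x) (n / p) = List.replicate (n / p) 0) :
    ¬ SimplyNormal b x := by
  intro hx
  have hsmall := (simplyNormal_iff_isLittleO.1 hx 0 (by lia)).def
    (c := 1 / (16 * p)) (by positivity)
  have hsmall' : ∀ᶠ n in atTop,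
      ‖digitDiscrepancy b 0 x (n + n / p)‖ ≤ 1 / (16 * p) * ‖((n + n / p : ℕ) : ℝ)‖ :=
    (tendsto_atTop_mono (fun n => Nat.le_add_right n (n / p)) tendsto_id).eventually hsmall
  obtain ⟨n, hzeros, hn, hn', hlarge⟩ :=
    (h.and_eventually (hsmall.and (hsmall'.and (eventually_ge_atTop (2 * p))))).exists
  set r := n / p with hr
  have hp' : (0 : ℝ) < p := Nat.cast_pos.2 hp
  have hrn : (r : ℝ) ≤ n := Nat.cast_le.2 (Nat.div_le_self n p)
  have hnr : (n : ℝ) < 2 * p * r := by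
    have hlt : n < p * (r + 1) := Nat.lt_mul_div_succ n hp
    have hle : 2 ≤ r := (Nat.le_div_iff_mul_le hp).2 hlarge
    exact_mod_cast (by nlinarith [hlt, hle] : n < 2 * p * r)
  have hrun : digitDiscrepancy b 0 ((b : ℝ) ^ n * x) r = r - r / b := by
    rw [digitDiscrepancy, hzeros, List.count_replicate_self]
  have hhalf : (r : ℝ) / b ≤ r / 2 := by gcongr; exact_mod_cast hb
  rw [digitDiscrepancy_add, hrun] at hn'
  rw [Real.norm_eq_abs, Real.norm_natCast] at hn hn'
  push_cast at hn'
  have hupper : (r : ℝ) / 2 ≤ 1 / (16 * p) * (3 * n) := by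
    have := (abs_le.1 hn).1
    have := (abs_le.1 hn').2
    have : 1 / (16 * (p : ℝ)) * r ≤ 1 / (16 * p) * n := by gcongr
    linarith
  rw [div_mul_eq_mul_div, one_mul, le_div_iff₀ (by positivity)] at hupper
  nlinarith

end Discrepancy

section UnitInterval

open MeasureTheory

/-- Lebesgue measure on `[0, 1)`. -/
noncomputable abbrev unitMeasure : Measure ℝ := volume.restrict (Set.Ico 0 1)

instance : IsProbabilityMeasure unitMeasure := ⟨by simp⟩

lemma unitMeasure_apply (B : Set ℝ) : unitMeasure B = volume (B ∩ Set.Ico 0 1) :=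
  Measure.restrict_apply' measurableSet_Ico

lemma volume_mul_mem_inter_Ico (B : Set ℝ) {M : ℝ} (hM : 0 < M) (a c : ℝ) :
    volume ({x | M * x ∈ B} ∩ Set.Ico a c) =
      ENNReal.ofReal M⁻¹ * volume (B ∩ Set.Ico (M * a) (M * c)) := by
  rw [← abs_of_pos (inv_pos.2 hM), ← Real.volume_preimage_mul_left hM.ne']
  congr 1 with x
  simp only [Set.mem_preimage, Set.mem_inter_iff, Set.mem_Ico, Set.mem_ofPred_eq,
    mul_le_mul_iff_right₀ hM, mul_lt_mul_iff_right₀ hM]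

variable {B : Set ℝ}

lemma volume_inter_Ico_add_one (hBper : Function.Periodic (· ∈ B) 1) (hBmeas : MeasurableSet B)
    (a : ℝ) :
    volume (B ∩ Set.Ico a (a + 1)) = unitMeasure B := by
  have hinv (g : AddSubgroup.zmultiples (1 : ℝ)) : (fun x => g +ᵥ x) ⁻¹' B = B := by
    obtain ⟨_, n, rfl⟩ := g
    ext x
    simpa [AddSubgroup.vadd_def, add_comm] using hBper.int_mul n x
  have hae (c : ℝ) :
      volume (B ∩ Set.Ico c (c + 1)) = volume (B ∩ Set.Ioc c (c + 1)) :=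
    measure_congr ((ae_eq_refl B).inter Ico_ae_eq_Ioc)
  have hzero := hae 0
  rw [zero_add] at hzero
  rw [unitMeasure_apply, hae, hzero]
  simpa using (isAddFundamentalDomain_Ioc zero_lt_one a volume).measure_set_eq
    (isAddFundamentalDomain_Ioc zero_lt_one 0 volume) hBmeas hinv

lemma volume_inter_Ico_add_natCast (hBper : Function.Periodic (· ∈ B) 1) (hBmeas : MeasurableSet B)
    (a : ℝ) (n : ℕ) :
    volume (B ∩ Set.Ico a (a + n)) = n * unitMeasure B := by
  induction n with
  | zero => simp
  | succ n ih =>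
    have hsplit : B ∩ Set.Ico a (a + (n + 1 : ℕ)) =
        (B ∩ Set.Ico a (a + n)) ∪ (B ∩ Set.Ico (a + n) (a + n + 1)) := by
      rw [← Set.inter_union_distrib_left, Set.Ico_union_Ico_eq_Ico (by simp) (by simp),
        Nat.cast_succ, add_assoc]
    have hdisj : Disjoint (B ∩ Set.Ico a (a + n)) (B ∩ Set.Ico (a + n) (a + n + 1)) :=
      (Set.Ico_disjoint_Ico_same (c := a + n + 1)).mono Set.inter_subset_right
        Set.inter_subset_right
    rw [hsplit, measure_union hdisj (hBmeas.inter measurableSet_Ico), ih,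
      volume_inter_Ico_add_one hBper hBmeas, Nat.cast_succ, add_mul, one_mul]

lemma volume_mul_mem_inter_Ico_le (hBper : Function.Periodic (· ∈ B) 1) (hBmeas : MeasurableSet B)
    {M δ : ℝ} (hM : 0 < M) (hδ : 0 ≤ δ) (a : ℝ) :
    volume ({x | M * x ∈ B} ∩ Set.Ico a (a + δ)) ≤
      ENNReal.ofReal (δ + M⁻¹) * unitMeasure B := by
  have hsub : Set.Ico (M * a) (M * (a + δ)) ⊆ Set.Ico (M * a) (M * a + ⌈M * δ⌉₊) :=
    Set.Ico_subset_Ico_right (by rw [mul_add]; gcongr; exact Nat.le_ceil _)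
  calc volume ({x | M * x ∈ B} ∩ Set.Ico a (a + δ))
      ≤ ENNReal.ofReal M⁻¹ * volume (B ∩ Set.Ico (M * a) (M * a + ⌈M * δ⌉₊)) := by
        rw [volume_mul_mem_inter_Ico B hM]
        gcongr
    _ = ENNReal.ofReal (M⁻¹ * ⌈M * δ⌉₊) * unitMeasure B := by
        rw [volume_inter_Ico_add_natCast hBper hBmeas, ← mul_assoc,
          ENNReal.ofReal_mul (inv_pos.2 hM).le, ENNReal.ofReal_natCast]
    _ ≤ ENNReal.ofReal (δ + M⁻¹) * unitMeasure B := by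
        gcongr
        rw [inv_mul_le_iff₀ hM, mul_add, mul_inv_cancel₀ hM.ne']
        exact (Nat.ceil_lt_add_one (by positivity)).le

lemma unitMeasure_natCast_mul_mem (hBper : Function.Periodic (· ∈ B) 1) (hBmeas : MeasurableSet B)
    {M : ℕ} (hM : 0 < M) :
    unitMeasure {x | (M : ℝ) * x ∈ B} = unitMeasure B := by
  have hvol := volume_inter_Ico_add_natCast hBper hBmeas 0 M
  rw [zero_add] at hvol
  rw [unitMeasure_apply, volume_mul_mem_inter_Ico B (Nat.cast_pos.2 hM), mul_zero, mul_one, hvol,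
    ← mul_assoc, ENNReal.ofReal_inv_of_pos (Nat.cast_pos.2 hM), ENNReal.ofReal_natCast,
    ENNReal.inv_mul_cancel (Nat.cast_ne_zero.2 hM.ne') (ENNReal.natCast_ne_top M), one_mul]

lemma unitMeasure_rdigit_zero_eq_and_mul_mem (hBper : Function.Periodic (· ∈ B) 1)
    (hBmeas : MeasurableSet B) {b d : ℕ} (hd : d < b) :
    unitMeasure {x | rdigit b x 0 = d ∧ (b : ℝ) * x ∈ B} = (b : ENNReal)⁻¹ * unitMeasure B := by
  have hb : (0 : ℝ) < b := by exact_mod_cast hd.pos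
  have hsucc : (d : ℝ) + 1 ≤ b := by exact_mod_cast hd
  have hset : {x | rdigit b x 0 = d ∧ (b : ℝ) * x ∈ B} ∩ Set.Ico 0 1 =
      {x | (b : ℝ) * x ∈ B} ∩ Set.Ico (d / b : ℝ) ((d + 1) / b) := by
    ext x
    have hfloor (hx : 0 ≤ x) : ⌊(b : ℝ) * x⌋₊ = d ↔ x ∈ Set.Ico (d / b : ℝ) ((d + 1) / b) := by
      rw [Nat.floor_eq_iff (by positivity), Set.mem_Ico, div_le_iff₀' hb, lt_div_iff₀' hb]
    have hunit (hx : x ∈ Set.Ico (d / b : ℝ) ((d + 1) / b)) : x ∈ Set.Ico (0 : ℝ) 1 :=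
      Set.Ico_subset_Ico (by positivity) ((div_le_one hb).2 hsucc) hx
    refine ⟨fun ⟨⟨hdigit, hxB⟩, hx⟩ => ⟨hxB, ?_⟩, fun ⟨hxB, hx⟩ => ⟨⟨?_, hxB⟩, hunit hx⟩⟩
    · rwa [rdigit_zero_eq_natFloor hx, hfloor hx.1] at hdigit
    · rwa [rdigit_zero_eq_natFloor (hunit hx), hfloor (hunit hx).1]
  rw [unitMeasure_apply, hset, volume_mul_mem_inter_Ico B hb, mul_div_cancel₀ _ hb.ne',
    mul_div_cancel₀ _ hb.ne', volume_inter_Ico_add_one hBper hBmeas,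
    ENNReal.ofReal_inv_of_pos hb, ENNReal.ofReal_natCast]

end UnitInterval

section Independence

open MeasureTheory ProbabilityTheory

variable {Ω : Type*} {mΩ : MeasurableSpace Ω} {μ : Measure Ω} {s t : Set Ω}

lemma indepFun_indicator_one_of_indepSet (h : IndepSet s t μ) :
    IndepFun (s.indicator (1 : Ω → ℝ)) (t.indicator (1 : Ω → ℝ)) μ := by
  have comap_le (u : Set Ω) : MeasurableSpace.comap (u.indicator (1 : Ω → ℝ)) inferInstance ≤
      MeasurableSpace.generateFrom {u} :=
    Measurable.comap_le (Measurable.indicator (m := MeasurableSpace.generateFrom {u})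
      measurable_const (MeasurableSpace.measurableSet_generateFrom (Set.mem_singleton u)))
  exact indep_of_indep_of_le_left (indep_of_indep_of_le_right h (comap_le t)) (comap_le s)

lemma identDistrib_indicator_one_of_measure_eq [IsProbabilityMeasure μ] (hs : MeasurableSet s)
    (ht : MeasurableSet t) (h : μ s = μ t) :
    IdentDistrib (s.indicator (1 : Ω → ℝ)) (t.indicator (1 : Ω → ℝ)) μ μ := by
  have hsm : Measurable (s.indicator (1 : Ω → ℝ)) := measurable_one.indicator hs
  have htm : Measurable (t.indicator (1 : Ω → ℝ)) := measurable_one.indicator ht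
  refine ⟨hsm.aemeasurable, htm.aemeasurable, Measure.ext fun u hu => ?_⟩
  classical
  rw [Measure.map_apply hsm hu, Measure.map_apply htm hu, Pi.one_def,
    Set.indicator_const_preimage_eq_union, Set.indicator_const_preimage_eq_union]
  split_ifs <;> simp [h, prob_compl_eq_one_sub, hs, ht]

lemma tendsto_sum_indicator_div_of_pairwise_indepSet [IsProbabilityMeasure μ] {E : ℕ → Set Ω}
    (hE : ∀ i, MeasurableSet (E i)) (hindep : Pairwise fun i j => IndepSet (E i) (E j) μ)
    (hμ : ∀ i, μ (E i) = μ (E 0)) :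
    ∀ᵐ ω ∂μ, Tendsto (fun n : ℕ => (∑ i ∈ Finset.range n, (E i).indicator (1 : Ω → ℝ) ω) / n)
      atTop (nhds (μ.real (E 0))) := by
  have hlaw := strong_law_ae_real (μ := μ) (fun i => (E i).indicator (1 : Ω → ℝ))
    ((integrable_const (1 : ℝ)).indicator (hE 0))
    (fun i j hij => indepFun_indicator_one_of_indepSet (hindep hij))
    (fun i => identDistrib_indicator_one_of_measure_eq (hE i) (hE 0) (hμ i))
  rwa [integral_indicator_one (hE 0)] at hlaw

end Independence

section AlmostEverySimplyNormal

open MeasureTheory ProbabilityTheory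

variable {b d : ℕ}

lemma measurableSet_rdigit_eq (b d i : ℕ) : MeasurableSet {x | rdigit b x i = d} :=
  measurable_rdigit b i (measurableSet_singleton d)

lemma periodic_rdigit_eq (b d i : ℕ) : Function.Periodic (· ∈ {x | rdigit b x i = d}) 1 :=
  fun x => by simp only [Set.mem_ofPred_eq, rdigit_add_one]

lemma unitMeasure_rdigit_eq (hd : d < b) (i : ℕ) :
    unitMeasure {x | rdigit b x i = d} = (b : ENNReal)⁻¹ := by
  have hzero : unitMeasure {x | rdigit b x 0 = d} = (b : ENNReal)⁻¹ := by
    simpa using unitMeasure_rdigit_zero_eq_and_mul_mem (B := Set.univ) (fun _ => rfl) .univ hd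
  rw [← hzero, ← unitMeasure_natCast_mul_mem (periodic_rdigit_eq b d 0)
    (measurableSet_rdigit_eq b d 0) (pow_pos hd.pos i)]
  simp only [Nat.cast_pow, Set.mem_ofPred_eq, rdigit_pow_mul, add_zero]

lemma unitMeasure_rdigit_eq_and_rdigit_eq (hd : d < b) {i j : ℕ} (hij : i < j) :
    unitMeasure {x | rdigit b x i = d ∧ rdigit b x j = d} = (b : ENNReal)⁻¹ * (b : ENNReal)⁻¹ := by
  obtain ⟨k, rfl⟩ := Nat.exists_eq_add_of_lt hij
  have hmeas : MeasurableSet {x | rdigit b x 0 = d ∧ rdigit b x (k + 1) = d} :=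
    (measurableSet_rdigit_eq b d 0).inter (measurableSet_rdigit_eq b d (k + 1))
  have hper : Function.Periodic (· ∈ {x | rdigit b x 0 = d ∧ rdigit b x (k + 1) = d}) 1 :=
    fun x => by simp only [Set.mem_ofPred_eq, rdigit_add_one]
  have hmul (x : ℝ) : rdigit b ((b : ℝ) * x) k = rdigit b x (k + 1) := by
    rw [← pow_one (b : ℝ), rdigit_pow_mul, add_comm]
  have hzero := unitMeasure_rdigit_zero_eq_and_mul_mem (periodic_rdigit_eq b d k)
    (measurableSet_rdigit_eq b d k) hd
  have hshift := unitMeasure_natCast_mul_mem hper hmeas (pow_pos hd.pos i)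
  simp only [Set.mem_ofPred_eq, hmul, unitMeasure_rdigit_eq hd] at hzero
  simpa only [Nat.cast_pow, Set.mem_ofPred_eq, rdigit_pow_mul, add_zero, hzero,
    ← add_assoc] using hshift

lemma indepSet_rdigit_eq (hd : d < b) {i j : ℕ} (hij : i ≠ j) :
    IndepSet {x | rdigit b x i = d} {x | rdigit b x j = d} unitMeasure := by
  wlog hlt : i < j generalizing i j
  · exact (this hij.symm (by lia)).symm
  rw [indepSet_iff_measure_inter_eq_mul (measurableSet_rdigit_eq b d i)
    (measurableSet_rdigit_eq b d j) unitMeasure, unitMeasure_rdigit_eq hd, unitMeasure_rdigit_eq hd]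
  exact unitMeasure_rdigit_eq_and_rdigit_eq hd hlt

lemma count_rdigits_eq_sum_indicator (b d : ℕ) (x : ℝ) (n : ℕ) :
    ((rdigits b x n).count d : ℝ) =
      ∑ i ∈ Finset.range n, {y | rdigit b y i = d}.indicator (1 : ℝ → ℝ) x := by
  induction n with
  | zero => simp [rdigits]
  | succ n ih =>
    rw [Finset.sum_range_succ, ← ih]
    simp [rdigits, List.range_succ, List.count_singleton, Set.indicator_apply]

lemma ae_simplyNormal (b : ℕ) : ∀ᵐ x ∂unitMeasure, SimplyNormal b x := by
  simp only [SimplyNormal, ae_all_iff]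
  intro d hd
  have hlaw := tendsto_sum_indicator_div_of_pairwise_indepSet (μ := unitMeasure)
    (measurableSet_rdigit_eq b d) (fun _ _ => indepSet_rdigit_eq hd)
    (fun i => (unitMeasure_rdigit_eq hd i).trans (unitMeasure_rdigit_eq hd 0).symm)
  simpa [Measure.real, unitMeasure_rdigit_eq hd, count_rdigits_eq_sum_indicator] using hlaw

end AlmostEverySimplyNormal

section LargeDiscrepancy

open MeasureTheory

/-- The set of reals for which, among the first `n` base-`b` digits for some `n ≥ N`, some digit has
a discrepancy larger than the fraction `ε` of the number of digits. -/
def largeDiscrepancySet (b : ℕ) (ε : ℝ) (N : ℕ) : Set ℝ :=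
  {x | ∃ n ≥ N, ∃ d < b, ε * n < |digitDiscrepancy b d x n|}

variable {b : ℕ} {ε : ℝ}

lemma measurable_digitDiscrepancy (b d n : ℕ) : Measurable fun x => digitDiscrepancy b d x n := by
  simp only [digitDiscrepancy, count_rdigits_eq_sum_indicator]
  exact (Finset.measurable_sum _ fun i _ =>
    measurable_one.indicator (measurableSet_rdigit_eq b d i)).sub_const _

lemma measurableSet_largeDiscrepancySet (b : ℕ) (ε : ℝ) (N : ℕ) :
    MeasurableSet (largeDiscrepancySet b ε N) := by
  have hunion : largeDiscrepancySet b ε N =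
      ⋃ n ≥ N, ⋃ d < b, {x | ε * n < |digitDiscrepancy b d x n|} := by
    ext x
    simp [largeDiscrepancySet]
  rw [hunion]
  exact .biUnion (Set.to_countable _) fun n _ => .biUnion (Set.to_countable _) fun d _ =>
    measurableSet_lt measurable_const (measurable_digitDiscrepancy b d n).abs

lemma periodic_largeDiscrepancySet (b : ℕ) (ε : ℝ) (N : ℕ) :
    Function.Periodic (· ∈ largeDiscrepancySet b ε N) 1 :=
  fun x => by simp only [largeDiscrepancySet, Set.mem_ofPred_eq, digitDiscrepancy_add_one]

lemma abs_digitDiscrepancy_le_of_notMem_largeDiscrepancySet {N d : ℕ} {x : ℝ} (hd : d < b)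
    (hε : 0 ≤ ε) (hx : x ∉ largeDiscrepancySet b ε N) (n : ℕ) :
    |digitDiscrepancy b d x n| ≤ N + ε * n := by
  rcases le_total N n with hn | hn
  · simp only [largeDiscrepancySet, Set.mem_ofPred_eq, not_exists, not_and, not_lt] at hx
    exact (hx n hn d hd).trans (le_add_of_nonneg_left N.cast_nonneg)
  · calc |digitDiscrepancy b d x n| ≤ n := abs_digitDiscrepancy_le b d x n
      _ ≤ N := Nat.cast_le.2 hn
      _ ≤ N + ε * n := le_add_of_nonneg_right (by positivity)

lemma exists_notMem_largeDiscrepancySet_of_simplyNormal {x : ℝ} (hx : SimplyNormal b x)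
    (hε : 0 < ε) : ∃ N, x ∉ largeDiscrepancySet b ε N := by
  have hall : ∀ᶠ n : ℕ in atTop, ∀ d ∈ Finset.range b,
      ‖digitDiscrepancy b d x n‖ ≤ ε * ‖(n : ℝ)‖ :=
    (eventually_all_finset _).2 fun d hd =>
      (simplyNormal_iff_isLittleO.1 hx d (Finset.mem_range.1 hd)).def hε
  obtain ⟨N, hN⟩ := eventually_atTop.1 hall
  refine ⟨N, fun ⟨n, hn, d, hd, hlt⟩ => hlt.not_ge ?_⟩
  simpa using hN n hn d (Finset.mem_range.2 hd)

lemma tendsto_unitMeasure_largeDiscrepancySet (b : ℕ) (hε : 0 < ε) :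
    Tendsto (fun N => unitMeasure (largeDiscrepancySet b ε N)) atTop (nhds 0) := by
  have hanti : Antitone (largeDiscrepancySet b ε) :=
    fun _ _ hNN' _ ⟨n, hn, hx⟩ => ⟨n, hNN'.trans hn, hx⟩
  have hzero : unitMeasure (⋂ N, largeDiscrepancySet b ε N) = 0 := by
    rw [measure_eq_zero_iff_ae_notMem]
    filter_upwards [ae_simplyNormal b] with x hx
    simpa using exists_notMem_largeDiscrepancySet_of_simplyNormal hx hε
  rw [← hzero]
  exact tendsto_measure_iInter_atTop
    (fun N => (measurableSet_largeDiscrepancySet b ε N).nullMeasurableSet) hanti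
    ⟨0, measure_ne_top _ _⟩

lemma exists_forall_unitMeasure_largeDiscrepancySet_le (s : Finset ℕ) (hε : 0 < ε)
    {η : ENNReal} (hη : 0 < η) :
    ∃ N, ∀ b ∈ s, unitMeasure (largeDiscrepancySet b ε N) ≤ η :=
  ((eventually_all_finset s).2 fun b _ =>
    (tendsto_unitMeasure_largeDiscrepancySet b hε).eventually_le_const hη).exists

end LargeDiscrepancy

section Avoidance

open MeasureTheory

lemma exists_mem_Ico_forall_notMem {ι : Type*} (s : Finset ι) {E : ι → Set ℝ} {a δ θ : ℝ}
    (hE : ∀ i ∈ s, volume (E i ∩ Set.Ico a (a + δ)) ≤ ENNReal.ofReal (δ * θ)) (hδ : 0 < δ)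
    (hθ : s.card * θ < 1) : ∃ x ∈ Set.Ico a (a + δ), ∀ i ∈ s, x ∉ E i := by
  by_contra! hcover
  have hsub : Set.Ico a (a + δ) ⊆ ⋃ i ∈ s, E i ∩ Set.Ico a (a + δ) := by
    intro x hx
    obtain ⟨i, hi, hxi⟩ := hcover x hx
    exact Set.mem_biUnion hi ⟨hxi, hx⟩
  have hle := calc ENNReal.ofReal δ = volume (Set.Ico a (a + δ)) := by simp
    _ ≤ ∑ i ∈ s, volume (E i ∩ Set.Ico a (a + δ)) :=
      (measure_mono hsub).trans (measure_biUnion_finset_le _ _)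
    _ ≤ s.card • ENNReal.ofReal (δ * θ) := Finset.sum_le_card_nsmul _ _ _ hE
    _ = ENNReal.ofReal (δ * (s.card * θ)) := by
      rw [← ENNReal.ofReal_nsmul, nsmul_eq_mul, mul_left_comm]
  exact hle.not_gt ((ENNReal.ofReal_lt_ofReal_iff hδ).2 (mul_lt_of_lt_one_right hδ hθ))

lemma volume_mul_mem_inter_Ico_le_of_inv_le {B : Set ℝ} (hBper : Function.Periodic (· ∈ B) 1)
    (hBmeas : MeasurableSet B) {M c δ η : ℝ} (hM : 0 < M) (hδ : 0 ≤ δ) (hMδ : M⁻¹ ≤ c * δ)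
    (hη : unitMeasure B ≤ ENNReal.ofReal η) (a : ℝ) :
    volume ({x | M * x ∈ B} ∩ Set.Ico a (a + δ)) ≤ ENNReal.ofReal (δ * ((1 + c) * η)) := by
  have hcδ : 0 ≤ δ + c * δ := add_nonneg hδ ((inv_pos.2 hM).le.trans hMδ)
  calc volume ({x | M * x ∈ B} ∩ Set.Ico a (a + δ))
      ≤ ENNReal.ofReal (δ + c * δ) * ENNReal.ofReal η := by
        refine (volume_mul_mem_inter_Ico_le hBper hBmeas hM hδ a).trans ?_
        gcongr
    _ = ENNReal.ofReal (δ * ((1 + c) * η)) := by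
        rw [← ENNReal.ofReal_mul hcδ]
        ring_nf

lemma unitMeasure_one_sub_le_fract {η : ℝ} (hη : η ≤ 1) :
    unitMeasure {x | 1 - η ≤ Int.fract x} = ENNReal.ofReal η := by
  have hset : {x | 1 - η ≤ Int.fract x} ∩ Set.Ico 0 1 = Set.Ico (1 - η) 1 := by
    ext x
    refine ⟨fun ⟨hx, hx01⟩ => ⟨?_, hx01.2⟩, fun hx => ?_⟩
    · rwa [Set.mem_ofPred_eq, Int.fract_eq_self.2 hx01] at hx
    · have hx01 : x ∈ Set.Ico (0 : ℝ) 1 := ⟨(sub_nonneg.2 hη).trans hx.1, hx.2⟩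
      exact ⟨by rw [Set.mem_ofPred_eq, Int.fract_eq_self.2 hx01]; exact hx.1, hx01⟩
  rw [unitMeasure_apply, hset, Real.volume_Ico, sub_sub_cancel]

lemma floor_eq_floor_of_fract_add_lt_one {x y η : ℝ} (hx : Int.fract x + η < 1) (hxy : x ≤ y)
    (hyx : y ≤ x + η) : ⌊x⌋ = ⌊y⌋ := by
  rw [eq_comm, Int.floor_eq_iff]
  rw [Int.fract] at hx
  exact ⟨(Int.floor_le x).trans hxy, by linarith⟩

lemma inv_pow_log_le {b S V : ℕ} (hb : 2 ≤ b) (hS : 0 < S) (hSV : S ≤ V) :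
    ((b : ℝ) ^ Nat.log b V)⁻¹ ≤ b / S := by
  have hlt : S < b ^ (Nat.log b V + 1) := hSV.trans_lt (Nat.lt_pow_succ_log_self hb V)
  rw [inv_le_iff_one_le_mul₀ (by positivity), div_mul_eq_mul_div,
    one_le_div (Nat.cast_pos.2 hS), ← pow_succ']
  exact_mod_cast hlt.le

end Avoidance

section Cells

/-- A closed interval `[left, left + 1 / scale]`. -/
structure Cell where
  /-- The left endpoint. -/
  left : ℝ
  /-- The reciprocal of the length. -/
  scale : ℕ
  scale_pos : 0 < scale

namespace Cell

/-- The interval as a set of reals. -/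
def carrier (I : Cell) : Set ℝ := Set.Icc I.left (I.left + 1 / I.scale)

/-- The number of base-`b` digits resolved by a cell: `b ^ I.depth b` is at most `I.scale`, up to a
factor less than `b`. -/
def depth (I : Cell) (b : ℕ) : ℕ := Nat.log b I.scale

lemma left_le_right (I : Cell) : I.left ≤ I.left + 1 / I.scale :=
  le_add_of_nonneg_right (by positivity)

lemma scale_mono {I J : Cell} (h : J.carrier ⊆ I.carrier) : I.scale ≤ J.scale := by
  obtain ⟨hleft, hright⟩ := (Set.Icc_subset_Icc_iff J.left_le_right).1 h
  have hI : (0 : ℝ) < I.scale := Nat.cast_pos.2 I.scale_pos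
  have hJ : (0 : ℝ) < J.scale := Nat.cast_pos.2 J.scale_pos
  exact_mod_cast (one_div_le_one_div hJ hI).1 (by linarith)

lemma depth_mono {I J : Cell} (h : J.carrier ⊆ I.carrier) (b : ℕ) : I.depth b ≤ J.depth b :=
  Nat.log_mono_right (scale_mono h)

end Cell

open MeasureTheory in
lemma volume_largeDiscrepancySet_union_fract_le (I : Cell) {W K b N : ℕ} {ε η : ℝ}
    (hIW : I.scale ≤ W) (hb : b ∈ Finset.Icc 2 K) (hη0 : 0 ≤ η) (hη1 : η ≤ 1)
    (hN : unitMeasure (largeDiscrepancySet b ε N) ≤ ENNReal.ofReal η) :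
    volume (({x | (b : ℝ) ^ I.depth b * x ∈ largeDiscrepancySet b ε N} ∪
      {x | (b : ℝ) ^ Nat.log b W * x ∈ {z : ℝ | 1 - η ≤ Int.fract z}}) ∩
        Set.Ico I.left (I.left + 1 / (2 * I.scale))) ≤
      ENNReal.ofReal (1 / (2 * I.scale) * (2 * ((1 + 2 * K) * η))) := by
  obtain ⟨hb2, hbK⟩ := Finset.mem_Icc.1 hb
  have hpow (m : ℕ) : (0 : ℝ) < (b : ℝ) ^ m := by positivity
  have hinv {V : ℕ} (hV : I.scale ≤ V) :
      ((b : ℝ) ^ Nat.log b V)⁻¹ ≤ 2 * K * (1 / (2 * I.scale)) := by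
    calc ((b : ℝ) ^ Nat.log b V)⁻¹ ≤ b / I.scale := inv_pow_log_le hb2 I.scale_pos hV
      _ ≤ K / I.scale := by gcongr
      _ = 2 * K * (1 / (2 * I.scale)) := by rw [mul_one_div, mul_div_mul_left _ _ two_ne_zero]
  rw [Set.union_inter_distrib_right, two_mul ((1 + 2 * (K : ℝ)) * η), mul_add,
    ENNReal.ofReal_add (by positivity) (by positivity)]
  refine (measure_union_le _ _).trans (add_le_add ?_ ?_)
  · exact volume_mul_mem_inter_Ico_le_of_inv_le (periodic_largeDiscrepancySet b ε N)
      (measurableSet_largeDiscrepancySet b ε N) (hpow _) (by positivity) (hinv le_rfl) hN _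
  · exact volume_mul_mem_inter_Ico_le_of_inv_le (fun x => by simp)
      (measurableSet_le measurable_const measurable_fract) (hpow _) (by positivity) (hinv hIW)
      (unitMeasure_one_sub_le_fract hη1).le _

lemma exists_notMem_largeDiscrepancySet_and_fract_lt (K : ℕ) {ε : ℝ} (hε : 0 < ε) :
    ∃ N H : ℕ, 0 < H ∧ ∀ (I : Cell) (W : ℕ), I.scale ≤ W →
      ∃ x ∈ Set.Ico I.left (I.left + 1 / (2 * I.scale)), ∀ b ∈ Finset.Icc 2 K,
        (b : ℝ) ^ I.depth b * x ∉ largeDiscrepancySet b ε N ∧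
          Int.fract ((b : ℝ) ^ Nat.log b W * x) < 1 - 1 / H := by
  obtain ⟨H, hH⟩ : ∃ H : ℕ, H = 8 * (K + 1) ^ 2 := ⟨_, rfl⟩
  have hH0 : (0 : ℝ) < H := by rw [hH]; positivity
  have hη : (1 : ℝ) / H ≤ 1 := (div_le_one hH0).2 (by exact_mod_cast Nat.cast_pos.1 hH0)
  obtain ⟨N, hN⟩ := exists_forall_unitMeasure_largeDiscrepancySet_le (Finset.Icc 2 K) hε
    (ENNReal.ofReal_pos.2 (one_div_pos.2 hH0))
  refine ⟨N, H, Nat.cast_pos.1 hH0, fun I W hIW => ?_⟩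
  have hcard : ((Finset.Icc 2 K).card : ℝ) ≤ K := by
    exact_mod_cast (by rw [Nat.card_Icc]; lia : (Finset.Icc 2 K).card ≤ K)
  have hsmall : ((Finset.Icc 2 K).card : ℝ) * (2 * ((1 + 2 * K) * (1 / H))) < 1 := by
    calc _ ≤ (K : ℝ) * (2 * ((1 + 2 * K) * (1 / H))) := by gcongr
      _ = 2 * K * (1 + 2 * K) / H := by ring
      _ < 1 := by
        rw [div_lt_one hH0, hH]
        push_cast
        nlinarith [K.cast_nonneg (α := ℝ)]
  have hlength : (0 : ℝ) < 1 / (2 * I.scale) :=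
    one_div_pos.2 (mul_pos two_pos (Nat.cast_pos.2 I.scale_pos))
  obtain ⟨x, hx, hgood⟩ := exists_mem_Ico_forall_notMem (Finset.Icc 2 K)
    (fun b hb => volume_largeDiscrepancySet_union_fract_le I hIW hb (by positivity) hη (hN b hb))
    hlength hsmall
  refine ⟨x, hx, fun b hb => ?_⟩
  simpa only [Set.mem_union, not_or, Set.mem_ofPred_eq, not_le] using hgood b hb

/-- `J` extends `I`, appending digits of discrepancy `ε` up to an error `C`: the bound holds at each
point of `J`, in each base at most `K`, for every block of digits that starts at the depth of `I`
and ends before the depth of `J`. -/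
structure IsExtension (K : ℕ) (ε C : ℝ) (I J : Cell) : Prop where
  subset : J.carrier ⊆ I.carrier
  abs_digitDiscrepancy_le : ∀ y ∈ J.carrier, ∀ b ∈ Finset.Icc 2 K, ∀ d < b, ∀ k,
    I.depth b + k ≤ J.depth b →
      |digitDiscrepancy b d ((b : ℝ) ^ I.depth b * y) k| ≤ C + ε * k

lemma abs_digitDiscrepancy_le_of_floor_eq {b d L Q H k N : ℕ} {ε x y : ℝ} (hd : d < b)
    (hε : 0 ≤ ε) (hx : (b : ℝ) ^ L * x ∉ largeDiscrepancySet b ε N)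
    (hfloor : ⌊(b : ℝ) ^ Q * x⌋ = ⌊(b : ℝ) ^ Q * y⌋) (hLQ : L ≤ Q) (hk : L + k ≤ Q + H) :
    |digitDiscrepancy b d ((b : ℝ) ^ L * y) k| ≤ N + H + ε * k := by
  have hfloor' : ⌊(b : ℝ) ^ (Q - L) * ((b : ℝ) ^ L * x)⌋ =
      ⌊(b : ℝ) ^ (Q - L) * ((b : ℝ) ^ L * y)⌋ := by
    rwa [← mul_assoc, ← mul_assoc, ← pow_add, Nat.sub_add_cancel hLQ]
  have hshared {n : ℕ} (hn : n ≤ Q - L) :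
      |digitDiscrepancy b d ((b : ℝ) ^ L * y) n| ≤ N + ε * n := by
    rw [← digitDiscrepancy_congr_of_floor_eq hd.pos hn hfloor']
    exact abs_digitDiscrepancy_le_of_notMem_largeDiscrepancySet hd hε hx n
  obtain ⟨n, j, rfl, hn, hj⟩ : ∃ n j, k = n + j ∧ n ≤ Q - L ∧ j ≤ H :=
    ⟨min k (Q - L), k - min k (Q - L), by lia, by lia, by lia⟩
  have hj' : (j : ℝ) ≤ H := Nat.cast_le.2 hj
  have hεj : 0 ≤ ε * j := by positivity
  push_cast
  linarith [abs_digitDiscrepancy_add_le b d ((b : ℝ) ^ L * y) n j, hshared hn]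

lemma floor_pow_log_mul_eq_of_fract_lt (b : ℕ) {W H : ℕ} {x y : ℝ} (hW : 0 < W)
    (hx : Int.fract ((b : ℝ) ^ Nat.log b W * x) < 1 - 1 / H) (hxy : x ≤ y)
    (hyx : y ≤ x + 1 / (H * W : ℕ)) :
    ⌊(b : ℝ) ^ Nat.log b W * x⌋ = ⌊(b : ℝ) ^ Nat.log b W * y⌋ := by
  have hpow : (b : ℝ) ^ Nat.log b W ≤ W := by exact_mod_cast Nat.pow_log_le_self b hW.ne'
  have hW0 : (W : ℝ) ≠ 0 := Nat.cast_ne_zero.2 hW.ne'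
  refine floor_eq_floor_of_fract_add_lt_one (lt_sub_iff_add_lt.1 hx)
    (mul_le_mul_of_nonneg_left hxy (by positivity)) ?_
  calc (b : ℝ) ^ Nat.log b W * y
      ≤ (b : ℝ) ^ Nat.log b W * (x + 1 / (H * W : ℕ)) := by gcongr
    _ ≤ (b : ℝ) ^ Nat.log b W * x + W * (1 / (H * W : ℕ)) := by
      rw [mul_add]
      gcongr
    _ = (b : ℝ) ^ Nat.log b W * x + 1 / H := by
      rw [Nat.cast_mul, mul_one_div, div_mul_cancel_right₀ hW0, one_div]

lemma log_mul_le_log_add {b W : ℕ} (hb : 2 ≤ b) (hW : 0 < W) (H : ℕ) :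
    Nat.log b (H * W) ≤ Nat.log b W + H := by
  rcases H.eq_zero_or_pos with rfl | hH
  · simp
  refine Nat.le_of_lt_succ (Nat.log_lt_of_lt_pow (by positivity) ?_)
  calc H * W < b ^ H * b ^ (Nat.log b W + 1) :=
        Nat.mul_lt_mul'' (Nat.lt_pow_self hb) (Nat.lt_pow_succ_log_self hb W)
    _ = b ^ (Nat.log b W + H).succ := by rw [← pow_add]; congr 1; lia

lemma exists_forall_exists_isExtension (K : ℕ) {ε : ℝ} (hε : 0 < ε) :
    ∃ C, ∀ I W, ∃ J, W ≤ J.scale ∧ IsExtension K ε C I J := by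
  obtain ⟨N, H, hH, hchoose⟩ := exists_notMem_largeDiscrepancySet_and_fract_lt K hε
  refine ⟨N + H, fun I W₀ => ?_⟩
  obtain ⟨W, hW₀, hW⟩ : ∃ W, W₀ ≤ W ∧ 2 * I.scale ≤ W := ⟨_, le_max_left _ _, le_max_right _ _⟩
  have hS := I.scale_pos
  obtain ⟨x, hx, hgood⟩ := hchoose I W (by lia)
  have hWH : W ≤ H * W := Nat.le_mul_of_pos_left W hH
  have hlength : (1 : ℝ) / (H * W : ℕ) ≤ 1 / (2 * I.scale) :=
    one_div_le_one_div_of_le (by positivity) (by exact_mod_cast hW.trans hWH)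
  refine ⟨⟨x, H * W, by lia⟩, hW₀.trans hWH, ?_, ?_⟩
  · refine Set.Icc_subset_Icc hx.1 ?_
    have hhalf : (1 : ℝ) / (2 * I.scale) + 1 / (2 * I.scale) = 1 / I.scale := by
      rw [← add_div, one_add_one_eq_two, div_mul_cancel_left₀ two_ne_zero, one_div]
    linarith [hx.2]
  · intro y hy b hb d hd k hk
    have hb2 := (Finset.mem_Icc.1 hb).1
    have hfloor := floor_pow_log_mul_eq_of_fract_lt b (by lia) (hgood b hb).2 hy.1 hy.2
    exact abs_digitDiscrepancy_le_of_floor_eq hd hε.le (hgood b hb).1 hfloor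
      (Nat.log_mono_right (by lia)) (hk.trans (log_mul_le_log_add hb2 (by lia) H))

end Cells

section ZeroRuns

variable {β : ℕ}

lemma rdigits_eq_replicate_zero_of_mem_Icc (hβ : 2 ≤ β) {n r : ℕ} {m : ℤ} {y : ℝ}
    (hy : y ∈ Set.Icc (m / (β : ℝ) ^ n) (m / (β : ℝ) ^ n + 1 / (β ^ (n + r + 1) : ℕ))) :
    rdigits β ((β : ℝ) ^ n * y) r = List.replicate r 0 := by
  have hβ1 : (1 : ℝ) < β := by exact_mod_cast hβ
  have hpow (k : ℕ) : (0 : ℝ) < (β : ℝ) ^ k := by positivity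
  refine rdigits_eq_replicate_zero (by lia) ?_
  have hlower : (m : ℝ) ≤ (β : ℝ) ^ n * y := by
    have := mul_le_mul_of_nonneg_left hy.1 (hpow n).le
    rwa [mul_div_cancel₀ _ (hpow n).ne'] at this
  have hfract : Int.fract ((β : ℝ) ^ n * y) ≤ (β : ℝ) ^ n * y - m := by
    have : (m : ℝ) ≤ ⌊(β : ℝ) ^ n * y⌋ := by exact_mod_cast Int.le_floor.2 hlower
    rw [Int.fract]
    linarith
  calc Int.fract ((β : ℝ) ^ n * y) * (β : ℝ) ^ r
      ≤ ((β : ℝ) ^ n * (m / (β : ℝ) ^ n + 1 / (β ^ (n + r + 1) : ℕ)) - m) * (β : ℝ) ^ r := by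
        gcongr
        refine hfract.trans ?_
        gcongr
        exact hy.2
    _ = 1 / β := by
      push_cast
      field_simp
      ring
    _ < 1 := (div_lt_one (by linarith)).2 hβ1

lemma log_pow_add_div_add_one_le {b S : ℕ} (hb : 2 ≤ b) (hβ : 2 ≤ β) (hS : 0 < S) {n : ℕ}
    (hn : n = Nat.log β S + 2) (p : ℕ) :
    (Nat.log b (β ^ (n + n / p + 1)) : ℝ) ≤ (1 + 1 / p) * Nat.log b S + (5 * β + 2) := by
  have hb1 : (1 : ℝ) < b := by exact_mod_cast hb
  have hβ1 : (1 : ℝ) < β := by exact_mod_cast hβ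
  set L := Real.logb b β with hL
  have hL0 : 0 ≤ L := Real.logb_nonneg hb1 hβ1.le
  have hLβ : L ≤ β := by
    rw [hL, Real.logb_le_iff_le_rpow hb1 (by linarith), Real.rpow_natCast]
    exact_mod_cast (Nat.lt_pow_self hb).le
  have hlog : (Nat.log b (β ^ (n + n / p + 1)) : ℝ) ≤ (n + n / p + 1 : ℕ) * L := by
    rw [← Real.natFloor_logb_natCast, Nat.cast_pow, Real.logb_pow]
    exact Nat.floor_le (by positivity)
  have hdepth : Nat.log β S * L ≤ Nat.log b S + 1 := by
    calc Nat.log β S * L = Real.logb b ((β ^ Nat.log β S : ℕ) : ℝ) := by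
          rw [Nat.cast_pow, Real.logb_pow]
      _ ≤ Real.logb b S := Real.logb_le_logb_of_le hb1 (by positivity)
          (by exact_mod_cast Nat.pow_log_le_self β hS.ne')
      _ ≤ Nat.log b S + 1 := by
          rw [← Real.natFloor_logb_natCast]
          exact (Nat.lt_floor_add_one _).le
  have hnL : n * L ≤ Nat.log b S + 1 + 2 * β := by
    rw [hn]
    push_cast
    linarith
  have hp : (1 : ℝ) / p ≤ 1 := by
    rw [one_div]
    exact Nat.cast_inv_le_one p
  have hrun : ((n / p : ℕ) : ℝ) ≤ 1 / p * n :=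
    Nat.cast_div_le.trans_eq (by ring)
  calc (Nat.log b (β ^ (n + n / p + 1)) : ℝ) ≤ (n + n / p + 1 : ℕ) * L := hlog
    _ ≤ (1 + 1 / p) * (n * L) + L := by
      push_cast
      nlinarith
    _ ≤ (1 + 1 / p) * (Nat.log b S + 1 + 2 * β) + β := by gcongr
    _ ≤ (1 + 1 / p) * Nat.log b S + (5 * β + 2) := by nlinarith [β.cast_nonneg (α := ℝ)]

lemma Icc_ceil_div_subset {a : ℝ} {V W S : ℕ} (hS : 0 < S) (hSV : 2 * S ≤ V) (hVW : V ≤ W) :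
    Set.Icc (⌈V * a⌉ / (V : ℝ)) (⌈V * a⌉ / (V : ℝ) + 1 / W) ⊆ Set.Icc a (a + 1 / S) := by
  have hV : (0 : ℝ) < V := Nat.cast_pos.2 (by lia)
  refine Set.Icc_subset_Icc ?_ ?_
  · rw [le_div_iff₀' hV]
    exact Int.le_ceil _
  · have hceil : ⌈V * a⌉ / (V : ℝ) ≤ a + 1 / V := by
      rw [div_le_iff₀' hV, mul_add, mul_one_div_cancel hV.ne']
      exact (Int.ceil_lt_add_one _).le
    have hW : (1 : ℝ) / W ≤ 1 / V := one_div_le_one_div_of_le hV (by exact_mod_cast hVW)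
    have hSV' : (1 : ℝ) / V + 1 / V ≤ 1 / S := by
      rw [← add_div, one_add_one_eq_two, div_le_div_iff₀ hV (Nat.cast_pos.2 hS), one_mul]
      exact_mod_cast hSV
    linarith

lemma exists_subset_rdigits_eq_replicate_zero (I : Cell) (hβ : 2 ≤ β) (p : ℕ) :
    ∃ J : Cell, J.carrier ⊆ I.carrier ∧
      (∀ b, 2 ≤ b → (J.depth b : ℝ) ≤ (1 + 1 / p) * I.depth b + (5 * β + 2)) ∧
      ∃ n, I.depth β ≤ n ∧
        ∀ y ∈ J.carrier, rdigits β ((β : ℝ) ^ n * y) (n / p) = List.replicate (n / p) 0 := by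
  obtain ⟨n, hn⟩ : ∃ n, n = I.depth β + 2 := ⟨_, rfl⟩
  have hscale : 2 * I.scale ≤ β ^ n := by
    calc 2 * I.scale ≤ β * β ^ (I.depth β + 1) :=
          Nat.mul_le_mul hβ (Nat.lt_pow_succ_log_self hβ I.scale).le
      _ = β ^ n := by rw [hn, ← pow_succ']
  refine ⟨⟨⌈(β ^ n : ℕ) * I.left⌉ / (β ^ n : ℕ), β ^ (n + n / p + 1), by positivity⟩, ?_, ?_, n,
    by lia, fun y hy => ?_⟩
  · exact Icc_ceil_div_subset I.scale_pos hscale (Nat.pow_le_pow_right (by lia) (by lia))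
  · exact fun b hb => log_pow_add_div_add_one_le hb hβ I.scale_pos hn p
  · exact rdigits_eq_replicate_zero_of_mem_Icc hβ (by simpa [Cell.carrier] using hy)

end ZeroRuns

section Stages

variable {K K' : ℕ} {ε ε' C δ : ℝ} {I J : Cell}

/-- A cell resolves the bases at most `K` to precision `ε`: in each of them, the digits it resolves
have discrepancy at most `ε`, and the error `C` is negligible against their number. -/
structure Settled (K : ℕ) (ε C : ℝ) (I : Cell) : Prop where
  error_le : ∀ b ∈ Finset.Icc 2 K, C ≤ ε * I.depth b
  abs_digitDiscrepancy_le : ∀ b ∈ Finset.Icc 2 K, ∀ y ∈ I.carrier, ∀ d < b,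
    |digitDiscrepancy b d y (I.depth b)| ≤ ε * I.depth b

/-- In each base at most `K`, the prefixes of points of `J` that end between the depths of `I` and
`J` have discrepancy at most `δ`. -/
def DiscrepancyBetweenLE (K : ℕ) (δ : ℝ) (I J : Cell) : Prop :=
  ∀ y ∈ J.carrier, ∀ b ∈ Finset.Icc 2 K, ∀ d < b, ∀ n, I.depth b ≤ n → n ≤ J.depth b →
    |digitDiscrepancy b d y n| ≤ δ * n

lemma exists_forall_depth_ge (K : ℕ) (M : ℝ) :
    ∃ W : ℕ, ∀ I : Cell, W ≤ I.scale → ∀ b ∈ Finset.Icc 2 K, M ≤ I.depth b := by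
  obtain ⟨D, hD⟩ := exists_nat_ge M
  refine ⟨K ^ D, fun I hI b hb => hD.trans (Nat.cast_le.2 ?_)⟩
  obtain ⟨hb2, hbK⟩ := Finset.mem_Icc.1 hb
  exact Nat.le_log_of_pow_le hb2 ((Nat.pow_le_pow_left hbK D).trans hI)

lemma exists_forall_settled (K : ℕ) (hε : 0 < ε) (C C' : ℝ) (I : Cell) :
    ∃ W : ℕ, ∀ J, W ≤ J.scale → IsExtension K (ε / 2) C I J → Settled K ε C' J := by
  obtain ⟨W, hW⟩ := exists_forall_depth_ge K (max (C' / ε) ((I.scale + C) / (ε / 2)))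
  refine ⟨W, fun J hJ hIJ => ⟨fun b hb => ?_, fun b hb y hy d hd => ?_⟩⟩
  · exact (div_le_iff₀' hε).1 ((le_max_left _ _).trans (hW J hJ b hb))
  · obtain ⟨k, hk⟩ := Nat.exists_eq_add_of_le (Cell.depth_mono hIJ.subset b)
    have herror : I.scale + C ≤ ε / 2 * J.depth b :=
      (div_le_iff₀' (half_pos hε)).1 ((le_max_right _ _).trans (hW J hJ b hb))
    have hold : |digitDiscrepancy b d y (I.depth b)| ≤ I.scale :=
      (abs_digitDiscrepancy_le b d y _).trans (Nat.cast_le.2 (Nat.log_le_self b I.scale))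
    have hnew := hIJ.abs_digitDiscrepancy_le y hy b hb d hd k hk.ge
    have hkJ : ε / 2 * k ≤ ε / 2 * J.depth b := by
      gcongr
      lia
    calc |digitDiscrepancy b d y (J.depth b)|
        ≤ |digitDiscrepancy b d y (I.depth b)| +
          |digitDiscrepancy b d ((b : ℝ) ^ I.depth b * y) k| := by
          rw [hk, digitDiscrepancy_add]
          exact abs_add_le _ _
      _ ≤ ε * J.depth b := by linarith

lemma Settled.discrepancyBetweenLE {θ : ℝ} (hI : Settled K ε C I) (hε : 0 ≤ ε) (hθ : 0 ≤ θ)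
    (hIJ : J.carrier ⊆ I.carrier)
    (hdepth : ∀ b, 2 ≤ b → (J.depth b : ℝ) ≤ (1 + θ) * I.depth b + C) :
    DiscrepancyBetweenLE K (2 * ε + θ) I J := by
  intro y hy b hb d hd n hIn hnJ
  obtain ⟨j, rfl⟩ := Nat.exists_eq_add_of_le hIn
  have hlength : ((I.depth b + j : ℕ) : ℝ) ≤ (1 + θ) * I.depth b + C :=
    (Nat.cast_le.2 hnJ).trans (hdepth b (Finset.mem_Icc.1 hb).1)
  push_cast at hlength ⊢
  calc |digitDiscrepancy b d y (I.depth b + j)|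
      ≤ |digitDiscrepancy b d y (I.depth b)| + j := abs_digitDiscrepancy_add_le b d y _ j
    _ ≤ (2 * ε + θ) * I.depth b := by
      linarith [hI.abs_digitDiscrepancy_le b hb y (hIJ hy) d hd, hI.error_le b hb]
    _ ≤ (2 * ε + θ) * (I.depth b + j) := by
      gcongr
      exact le_add_of_nonneg_right j.cast_nonneg

lemma DiscrepancyBetweenLE.trans_isExtension {I' : Cell} (h : DiscrepancyBetweenLE K δ I I')
    (hI : ∀ b ∈ Finset.Icc 2 K, C ≤ ε * I.depth b) (hII' : I'.carrier ⊆ I.carrier) (hKK' : K ≤ K')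
    (hε : 0 ≤ ε) (hεδ : ε' ≤ δ) (hJ : IsExtension K' ε' C I' J) :
    DiscrepancyBetweenLE K (δ + ε) I J := by
  intro y hy b hb d hd n hIn hnJ
  have hb' : b ∈ Finset.Icc 2 K' := Finset.Icc_subset_Icc_right hKK' hb
  have hmono := Cell.depth_mono hII' b
  rcases le_total n (I'.depth b) with hn | hn
  · have := h y (hJ.subset hy) b hb d hd n hIn hn
    nlinarith [mul_nonneg hε n.cast_nonneg]
  · obtain ⟨k, rfl⟩ := Nat.exists_eq_add_of_le hn
    have hdepth : ε * I.depth b ≤ ε * (I'.depth b + k) := by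
      gcongr
      exact_mod_cast hIn
    have hk : ε' * k ≤ δ * k := by gcongr
    push_cast
    rw [digitDiscrepancy_add]
    refine (abs_add_le _ _).trans ?_
    linarith [h y (hJ.subset hy) b hb d hd _ hmono le_rfl, hI b hb,
      hJ.abs_digitDiscrepancy_le y hy b hb' d hd k hnJ]

/-- `J` is an admissible choice of the cell following `I` in stage `t` of the construction, when a
run of zeros in base `β` is to be inserted whose length is the proportion `1 / p` of the preceding
digits; for `p = 0` this run is empty, as both `n / p` and `1 / p` vanish. -/
structure IsSuccessor (t β p : ℕ) (I J : Cell) : Prop where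
  subset : J.carrier ⊆ I.carrier
  le_scale : t + 1 ≤ J.scale
  discrepancyBetweenLE : DiscrepancyBetweenLE (t + 1) (3 * (1 / (t + 1)) + 1 / p) I J
  rdigits_eq : ∃ n, I.depth β ≤ n ∧
    ∀ y ∈ J.carrier, rdigits β ((β : ℝ) ^ n * y) (n / p) = List.replicate (n / p) 0

lemma exists_isSuccessor {t β : ℕ} (hβ : 2 ≤ β)
    (hC : ∀ I W, ∃ J, W ≤ J.scale ∧ IsExtension (t + 2) (1 / (t + 2) / 2) C I J)
    (hI : Settled (t + 1) (1 / (t + 1)) (max (5 * β + 2) C) I) (C' : ℝ) (p : ℕ) :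
    ∃ J, Settled (t + 2) (1 / (t + 2)) C' J ∧ IsSuccessor t β p I J := by
  have hε : (0 : ℝ) ≤ 1 / (t + 1) := by positivity
  have hp : (0 : ℝ) ≤ 1 / p := by positivity
  obtain ⟨I', hI'I, hdepth, n, hn, hzeros⟩ := exists_subset_rdigits_eq_replicate_zero I hβ p
  have hbetween : DiscrepancyBetweenLE (t + 1) (2 * (1 / (t + 1)) + 1 / p) I I' :=
    hI.discrepancyBetweenLE hε hp hI'I
      fun b hb => (hdepth b hb).trans (by gcongr; exact le_max_left _ _)
  obtain ⟨W, hW⟩ := exists_forall_settled (t + 2) (ε := 1 / (t + 2)) (by positivity) C C' I'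
  obtain ⟨J, hJ, hIJ⟩ := hC I' (max W (t + 1))
  refine ⟨J, hW J ((le_max_left _ _).trans hJ) hIJ, hIJ.subset.trans hI'I,
    (le_max_right _ _).trans hJ, ?_, n, hn, fun y hy => hzeros y (hIJ.subset hy)⟩
  have hεδ : (1 : ℝ) / (t + 2) / 2 ≤ 2 * (1 / (t + 1)) + 1 / p := by
    have : (1 : ℝ) / (t + 2) ≤ 1 / (t + 1) := by gcongr; norm_num
    have : (0 : ℝ) ≤ 1 / (t + 2) := by positivity
    linarith
  convert hbetween.trans_isExtension
    (fun b hb => (le_max_right _ _).trans (hI.error_le b hb)) hI'I (Nat.le_succ _) hε hεδ hIJ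
    using 1
  ring

end Stages

section Limit

lemma simplyNormal_of_discrepancyBetweenLE {b : ℕ} (hb : 2 ≤ b) {I : ℕ → Cell} {K : ℕ → ℕ}
    {δ : ℕ → ℝ} {x : ℝ} (hx : ∀ t, x ∈ (I t).carrier) (hK : Tendsto K atTop atTop)
    (hscale : Tendsto (fun t => (I t).scale) atTop atTop) (hδ : Tendsto δ atTop (nhds 0))
    (h : ∀ t, DiscrepancyBetweenLE (K t) (δ t) (I t) (I (t + 1))) : SimplyNormal b x := by
  refine simplyNormal_iff_isLittleO.2 fun d hd => Asymptotics.isLittleO_iff.2 fun ε hε => ?_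
  obtain ⟨T, hT⟩ := eventually_atTop.1
    ((hδ.eventually_le_const hε).and (hK.eventually_ge_atTop b))
  filter_upwards [eventually_ge_atTop ((I T).depth b)] with n hn
  obtain ⟨t, hTt, htn, hnt⟩ : ∃ t ≥ T, (I t).depth b ≤ n ∧ n ≤ (I (t + 1)).depth b := by
    by_contra! hlt
    have hbounded : ∀ t ≥ T, (I t).depth b ≤ n := fun t ht =>
      Nat.le_induction hn (fun s hs hsn => (hlt s hs hsn).le) t ht
    obtain ⟨t, hTt, ht⟩ :=
      ((eventually_ge_atTop T).and (hscale.eventually_ge_atTop (b ^ (n + 1)))).exists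
    exact (Nat.le_log_of_pow_le hb ht).not_gt (Nat.lt_succ_of_le (hbounded t hTt))
  obtain ⟨hδt, hbK⟩ := hT t hTt
  rw [Real.norm_eq_abs, Real.norm_natCast]
  exact (h t x (hx (t + 1)) b (Finset.mem_Icc.2 ⟨hb, hbK⟩) d hd n htn hnt).trans (by gcongr)

lemma tendsto_one_div_of_forall_eventually_ne {q : ℕ → ℕ}
    (hq : ∀ p, 0 < p → ∀ᶠ t in atTop, q t ≠ p) :
    Tendsto (fun t => 1 / (q t : ℝ)) atTop (nhds 0) := by
  refine Metric.tendsto_nhds.2 fun ε hε => ?_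
  obtain ⟨N, hN⟩ := exists_nat_one_div_lt hε
  have hlarge : ∀ᶠ t in atTop, ∀ p ∈ Finset.Icc 1 N, q t ≠ p :=
    (Filter.eventually_all_finset _).2 fun p hp => hq p (Finset.mem_Icc.1 hp).1
  filter_upwards [hlarge] with t ht
  rw [Real.dist_0_eq_abs, abs_of_nonneg (by positivity)]
  rcases (q t).eq_zero_or_pos with h0 | hpos
  · simpa [h0] using hε
  · have hNq : N + 1 ≤ q t := by
      by_contra! hlt
      exact ht (q t) (Finset.mem_Icc.2 ⟨hpos, by lia⟩) rfl
    refine lt_of_le_of_lt (one_div_le_one_div_of_le (by positivity) ?_) hN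
    exact_mod_cast hNq

lemma exists_run {α σ : Type*} {P : ℕ → σ → Prop} {R : ℕ → α → σ → σ → Prop} (hinit : ∃ x, P 0 x)
    (hstep : ∀ t x, P t x → ∀ a, ∃ y, P (t + 1) y ∧ R t a x y) :
    ∃ run : (ℕ → α) → ℕ → σ, (∀ q t, R t (q t) (run q t) (run q (t + 1))) ∧
      ∀ t q q', (∀ s < t, q s = q' s) → run q t = run q' t := by
  choose next hP hR using hstep
  obtain ⟨x₀, hx₀⟩ := hinit
  let advance (t : ℕ) (a : α) (x : {x // P t x}) : {x // P (t + 1) x} :=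
    ⟨next t x.1 x.2 a, hP t x.1 x.2 a⟩
  let run (q : ℕ → α) (t : ℕ) : {x // P t x} := Nat.rec ⟨x₀, hx₀⟩ (fun t => advance t (q t)) t
  refine ⟨fun q t => (run q t).1, fun q t => hR t _ (run q t).2 (q t), fun t q q' h => ?_⟩
  suffices run q t = run q' t from congrArg Subtype.val this
  induction t with
  | zero => rfl
  | succ t ih =>
    change advance t (q t) (run q t) = advance t (q' t) (run q' t)
    rw [ih fun s hs => h s (hs.trans t.lt_succ_self), h t t.lt_succ_self]

lemma exists_continuous_mem_carrier {run : (ℕ → ℕ) → ℕ → Cell}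
    (hsubset : ∀ q t, (run q (t + 1)).carrier ⊆ (run q t).carrier)
    (hscale : ∀ q t, t ≤ (run q t).scale)
    (hcongr : ∀ t q q', (∀ s < t, q s = q' s) → run q t = run q' t) :
    ∃ g : (ℕ → ℕ) → ℝ, Continuous g ∧ ∀ q t, g q ∈ (run q t).carrier := by
  have hnonempty (q : ℕ → ℕ) : (⋂ t, (run q t).carrier).Nonempty :=
    IsCompact.nonempty_iInter_of_sequence_nonempty_isCompact_isClosed _ (hsubset q)
      (fun t => Set.nonempty_Icc.2 (run q t).left_le_right) isCompact_Icc fun t => isClosed_Icc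
  choose g hg using hnonempty
  have hmem (q t) : g q ∈ (run q t).carrier := Set.mem_iInter.1 (hg q) t
  refine ⟨g, continuous_iff_continuousAt.2 fun q => Metric.tendsto_nhds.2 fun ε hε => ?_, hmem⟩
  obtain ⟨t, ht⟩ := exists_nat_one_div_lt hε
  filter_upwards [(PiNat.isOpen_cylinder _ q (t + 1)).mem_nhds (PiNat.self_mem_cylinder q (t + 1))]
    with q' hq'
  have hmem' : g q' ∈ (run q (t + 1)).carrier := hcongr (t + 1) q' q hq' ▸ hmem q' (t + 1)
  calc dist (g q') (g q) ≤ 1 / (run q (t + 1)).scale :=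
        (Real.dist_le_of_mem_Icc hmem' (hmem q (t + 1))).trans_eq (add_sub_cancel_left _ _)
    _ ≤ 1 / (t + 1) := by
      refine one_div_le_one_div_of_le (by positivity) ?_
      exact_mod_cast hscale q (t + 1)
    _ < ε := ht

lemma exists_run_isSuccessor {β : ℕ → ℕ} (hβ : ∀ t, 2 ≤ β t) :
    ∃ run : (ℕ → ℕ) → ℕ → Cell, (∀ q t, IsSuccessor t (β t) (q t) (run q t) (run q (t + 1))) ∧
      ∀ t q q', (∀ s < t, q s = q' s) → run q t = run q' t := by
  have hextension (t : ℕ) := exists_forall_exists_isExtension (t + 2)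
    (ε := 1 / (t + 2) / 2) (by positivity)
  choose C hC using hextension
  refine exists_run
    (P := fun t => Settled (t + 1) (1 / ((t : ℝ) + 1)) (max (5 * β t + 2) (C t)))
    (R := fun t p => IsSuccessor t (β t) p) ⟨⟨0, 1, one_pos⟩, ?_, ?_⟩ fun t I hI p => ?_
  · simp
  · simp
  · convert exists_isSuccessor (hβ t) (hC t) hI (max (5 * β (t + 1) + 2) (C (t + 1))) p using 5
    push_cast
    ring

theorem exists_continuous_simplyNormal_of_eventually_ne {β : ℕ → ℕ} (hβ : ∀ t, 2 ≤ β t) :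
    ∃ g : (ℕ → ℕ) → ℝ, Continuous g ∧ ∀ q,
      ((∀ p, 0 < p → ∀ᶠ t in atTop, q t ≠ p) → ∀ b, 2 ≤ b → SimplyNormal b (g q)) ∧
      ∀ b p, 0 < p → (∃ᶠ t in atTop, β t = b ∧ q t = p) → ¬ SimplyNormal b (g q) := by
  obtain ⟨run, hrun, hcongr⟩ := exists_run_isSuccessor hβ
  have hscale (q t) : t ≤ (run q t).scale := by
    cases t with
    | zero => exact Nat.zero_le _
    | succ t => exact (hrun q t).le_scale
  obtain ⟨g, hg, hmem⟩ := exists_continuous_mem_carrier (fun q t => (hrun q t).subset) hscale hcongr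
  have htendsto (q) : Tendsto (fun t => (run q t).scale) atTop atTop :=
    tendsto_atTop_mono (hscale q) tendsto_id
  refine ⟨g, hg, fun q => ⟨fun hq b hb => ?_, fun b p hp hq => ?_⟩⟩
  · have hδ : Tendsto (fun t : ℕ => 3 * (1 / ((t : ℝ) + 1)) + 1 / (q t : ℝ)) atTop (nhds 0) := by
      simpa using (tendsto_one_div_add_atTop_nhds_zero_nat.const_mul (3 : ℝ)).add
        (tendsto_one_div_of_forall_eventually_ne hq)
    exact simplyNormal_of_discrepancyBetweenLE hb (hmem q) (tendsto_add_atTop_nat 1) (htendsto q) hδ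
      fun t => (hrun q t).discrepancyBetweenLE
  · have hb : 2 ≤ b := by
      obtain ⟨t, rfl, -⟩ := hq.exists
      exact hβ t
    refine not_simplyNormal_of_frequently_rdigits_eq_zero hb hp (frequently_atTop.2 fun N => ?_)
    obtain ⟨t, ⟨rfl, rfl⟩, ht⟩ :=
      (hq.and_eventually ((htendsto q).eventually_ge_atTop (b ^ N))).exists
    obtain ⟨n, hn, hzeros⟩ := (hrun q t).rdigits_eq
    exact ⟨n, (Nat.le_log_of_pow_le hb ht).trans hn, hzeros _ (hmem q (t + 1))⟩

end Limit

section Reduction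

lemma exists_isClopen_iInter_eq_of_isClosed {E : ℕ → Type*} [∀ n, TopologicalSpace (E n)]
    [∀ n, DiscreteTopology (E n)] {C : Set (∀ n, E n)} (hC : IsClosed C) :
    ∃ D : ℕ → Set (∀ n, E n), (∀ s, IsClopen (D s)) ∧ C = ⋂ s, D s := by
  have hD {s : ℕ} {x y : ∀ n, E n} (hxy : y ∈ PiNat.cylinder x s) :
      (C ∩ PiNat.cylinder y s).Nonempty ↔ (C ∩ PiNat.cylinder x s).Nonempty := by
    rw [(PiNat.mem_cylinder_iff_eq).1 hxy]
  have hopen (P : Prop → Prop) (s : ℕ) :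
      IsOpen {x : ∀ n, E n | P (C ∩ PiNat.cylinder x s).Nonempty} :=
    isOpen_iff_mem_nhds.2 fun x hx => Filter.mem_of_superset
      ((PiNat.isOpen_cylinder E x s).mem_nhds (PiNat.self_mem_cylinder x s))
      fun y hy => by simpa only [Set.mem_ofPred_eq, hD hy] using hx
  refine ⟨fun s => {x | (C ∩ PiNat.cylinder x s).Nonempty},
    fun s => ⟨⟨hopen Not s⟩, hopen id s⟩, Set.Subset.antisymm ?_ fun x hx => ?_⟩
  · exact fun x hx => Set.mem_iInter.2 fun s => ⟨x, hx, PiNat.self_mem_cylinder x s⟩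
  · by_contra hxC
    obtain ⟨s, hs⟩ := PiNat.exists_disjoint_cylinder hC hxC
    exact (Set.mem_iInter.1 hx s).ne_empty hs.inter_eq

variable {X : Type*} {D : ℕ → ℕ → Set X} {s m : ℕ} {x y : X}

open Classical in
/-- The least index `m` that has not been refuted after `s` tests of the intersections
`⋂ i, D m i`, where indices `m ≥ s` count as untested. It stabilizes as `s → ∞` exactly at the
points of `⋃ m, ⋂ i, D m i`. -/
noncomputable def leastUnrefuted (D : ℕ → ℕ → Set X) (s : ℕ) (x : X) : ℕ :=
  Nat.find (⟨s, .inr le_rfl⟩ : ∃ m, (∀ i < s, x ∈ D m i) ∨ s ≤ m)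

lemma leastUnrefuted_le_iff :
    leastUnrefuted D s x ≤ m ↔ ∃ k ≤ m, (∀ i < s, x ∈ D k i) ∨ s ≤ k := by
  classical exact Nat.find_le_iff _ _

lemma monotone_leastUnrefuted (D : ℕ → ℕ → Set X) (x : X) :
    Monotone fun s => leastUnrefuted D s x := by
  intro s s' hss'
  obtain ⟨k, hk, h⟩ := leastUnrefuted_le_iff.1 (le_refl (leastUnrefuted D s' x))
  exact leastUnrefuted_le_iff.2
    ⟨k, hk, h.imp (fun h i hi => h i (hi.trans_le hss')) hss'.trans⟩

lemma mem_iUnion_iInter_iff_bddAbove_leastUnrefuted :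
    x ∈ ⋃ m, ⋂ i, D m i ↔ BddAbove (Set.range fun s => leastUnrefuted D s x) := by
  simp only [Set.mem_iUnion, Set.mem_iInter, bddAbove_def, Set.forall_mem_range]
  refine ⟨fun ⟨m, hm⟩ => ⟨m, fun s => leastUnrefuted_le_iff.2 ⟨m, le_rfl, .inl fun i _ => hm i⟩⟩,
    fun ⟨M, hM⟩ => ?_⟩
  by_contra! hrefuted
  choose i hi using hrefuted
  obtain ⟨S, hS⟩ := ((Set.finite_Iic M).image i).bddAbove
  obtain ⟨k, hk, h | h⟩ := leastUnrefuted_le_iff.1 (hM (max (S + 1) (M + 1)))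
  · have := hS (Set.mem_image_of_mem i hk)
    exact hi k (h _ (by lia))
  · lia

lemma leastUnrefuted_congr (h : ∀ k < s, ∀ i < s, y ∈ D k i ↔ x ∈ D k i) :
    leastUnrefuted D s y = leastUnrefuted D s x := by
  refine eq_of_forall_ge_iff fun m => ?_
  simp only [leastUnrefuted_le_iff]
  refine exists_congr fun k => and_congr_right fun _ => or_congr_left' fun hk => ?_
  exact forall₂_congr fun i hi => h k (not_le.1 hk) i hi

lemma isLocallyConstant_leastUnrefuted [TopologicalSpace X] (hD : ∀ m i, IsClopen (D m i))
    (s : ℕ) : IsLocallyConstant (leastUnrefuted D s) := by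
  refine (IsLocallyConstant.iff_eventually_eq _).2 fun x => ?_
  have hmem (k i : ℕ) : ∀ᶠ y in nhds x, (y ∈ D k i ↔ x ∈ D k i) := by
    by_cases hx : x ∈ D k i
    · filter_upwards [(hD k i).isOpen.mem_nhds hx] with y hy using iff_of_true hy hx
    · filter_upwards [(hD k i).compl.isOpen.mem_nhds hx] with y hy using iff_of_false hy hx
  have hall : ∀ᶠ y in nhds x, ∀ k < s, ∀ i < s, y ∈ D k i ↔ x ∈ D k i :=
    (Filter.eventually_all_finite (Set.finite_Iio s)).2 fun k _ =>
      (Filter.eventually_all_finite (Set.finite_Iio s)).2 fun i _ => hmem k i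
  exact hall.mono fun y hy => leastUnrefuted_congr hy

lemma bddAbove_range_iff_eventually_eq_of_monotone {u : ℕ → ℕ} (hu : Monotone u) :
    BddAbove (Set.range u) ↔ ∀ᶠ s in atTop, u s = u (s + 1) := by
  refine ⟨fun h => ?_, fun h => ?_⟩
  · have hlim := tendsto_atTop_ciSup hu h
    rw [nhds_discrete, tendsto_pure] at hlim
    filter_upwards [hlim, (tendsto_add_atTop_nat 1).eventually hlim] with s hs hs'
    rw [hs, hs']
  · obtain ⟨S, hS⟩ := eventually_atTop.1 h
    have hconst : ∀ s ≥ S, u s = u S :=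
      Nat.le_induction rfl fun s hs hsS => (hS s hs).symm.trans hsS
    refine ⟨u S, Set.forall_mem_range.2 fun s => ?_⟩
    exact (hu (le_max_left s S)).trans_eq (hconst _ (le_max_right s S))

lemma exists_continuous_mem_iff_eventually_eq_false [TopologicalSpace X]
    (hD : ∀ m i, IsClopen (D m i)) :
    ∃ Φ : X → ℕ → Bool, Continuous Φ ∧
      ∀ x, x ∈ ⋃ m, ⋂ i, D m i ↔ ∀ᶠ s in atTop, Φ x s = false := by
  refine ⟨fun x s => decide (leastUnrefuted D s x ≠ leastUnrefuted D (s + 1) x), ?_, fun x => ?_⟩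
  · exact continuous_pi fun s => ((isLocallyConstant_leastUnrefuted hD s).comp₂
      (isLocallyConstant_leastUnrefuted hD (s + 1)) fun k l => decide (k ≠ l)).continuous
  · rw [mem_iUnion_iInter_iff_bddAbove_leastUnrefuted,
      bddAbove_range_iff_eventually_eq_of_monotone (monotone_leastUnrefuted D x)]
    simp only [decide_eq_false_iff_not, not_not]

/-- At stage `t`, coding a condition `n`, a base `k + 2` and a time `s`, request a zero run of
proportion `1 / (n + k + 1)` in that base if the `n`-th condition fires at time `s`, and no zero run
otherwise. Each proportion is shared by finitely many pairs `(n, k)` only. -/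
def zeroRunRequest (Φ : ℕ → ℕ → Bool) (t : ℕ × ℕ × ℕ) : ℕ :=
  bif Φ t.1 t.2.2 then t.1 + t.2.1 + 1 else 0

lemma finite_zeroRunRequest_eq {Φ : ℕ → ℕ → Bool}
    (hΦ : ∀ n, ∀ᶠ s in atTop, Φ n s = false) {p : ℕ} (hp : 0 < p) :
    {t | zeroRunRequest Φ t = p}.Finite := by
  have hfire (n : ℕ) : {s | Φ n s = true}.Finite := by
    have := Nat.cofinite_eq_atTop ▸ hΦ n
    simpa [eventually_cofinite] using this
  refine ((Set.finite_Iio p).biUnion fun n _ =>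
    (Set.finite_singleton n).prod ((Set.finite_Iio p).prod (hfire n))).subset ?_
  rintro ⟨n, k, s⟩ ht
  cases hs : Φ n s
  · simp [zeroRunRequest, hs, hp.ne] at ht
  · simp only [zeroRunRequest, Set.mem_ofPred_eq, hs, cond_true, Set.mem_Iio, Set.mem_iUnion,
      Set.mem_prod, Set.mem_singleton_iff, exists_and_left, exists_prop, exists_eq_left',
      and_true] at ht ⊢
    lia

lemma infinite_zeroRunRequest_eq {Φ : ℕ → ℕ → Bool} {n : ℕ}
    (hn : ∃ᶠ s in atTop, Φ n s = true) (k : ℕ) :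
    {t : ℕ × ℕ × ℕ | t.2.1 = k ∧ zeroRunRequest Φ t = n + k + 1}.Infinite := by
  refine ((Nat.frequently_atTop_iff_infinite.1 hn).image (f := fun s => (n, k, s))
    fun s _ s' _ h => by simpa using h).mono ?_
  rintro _ ⟨s, hs, rfl⟩
  simp only [Set.mem_ofPred_eq] at hs ⊢
  simp [zeroRunRequest, hs]

lemma continuous_zeroRunRequest : Continuous zeroRunRequest :=
  continuous_pi fun t => (continuous_of_discreteTopology
    (f := fun v => bif v then t.1 + t.2.1 + 1 else 0)).comp (continuous_apply_apply t.1 t.2.2)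

theorem exists_continuous_simplyNormal_of_eventually_eq_false :
    ∃ g : (ℕ → ℕ → Bool) → ℝ, Continuous g ∧ ∀ Φ,
      ((∀ n, ∀ᶠ s in atTop, Φ n s = false) → ∀ b, 2 ≤ b → SimplyNormal b (g Φ)) ∧
      ∀ n, (∃ᶠ s in atTop, Φ n s = true) → ∀ b, 2 ≤ b → ¬ SimplyNormal b (g Φ) := by
  let e : ℕ ≃ ℕ × ℕ × ℕ := (Denumerable.eqv _).symm
  obtain ⟨g, hg, hnormal⟩ :=
    exists_continuous_simplyNormal_of_eventually_ne (β := fun t => (e t).2.1 + 2) (by lia)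
  refine ⟨fun Φ => g (zeroRunRequest Φ ∘ e), hg.comp ((Pi.continuous_precomp e).comp
    continuous_zeroRunRequest), fun Φ => ⟨fun hΦ => (hnormal _).1 fun p hp => ?_,
    fun n hn b hb => (hnormal _).2 b (n + (b - 2) + 1) (Nat.succ_pos _) ?_⟩⟩
  · rw [← Nat.cofinite_eq_atTop]
    exact e.injective.tendsto_cofinite.eventually
      (finite_zeroRunRequest_eq hΦ hp).eventually_cofinite_notMem
  · refine Nat.frequently_atTop_iff_infinite.2 (((infinite_zeroRunRequest_eq hn (b - 2)).preimage
      (by simp)).mono fun t ht => ⟨?_, ht.2⟩)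
    · have := ht.1
      lia

lemma NormalBase.simplyNormal {b : ℕ} {x : ℝ} (h : NormalBase b x) : SimplyNormal b x := by
  simpa using h 1 le_rfl

theorem absolutelyNormal_pi03_hard_general {X : Type*} [TopologicalSpace X] {C : ℕ → ℕ → Set X}
    (hC : ∀ n m, ∃ D : ℕ → Set X, (∀ s, IsClopen (D s)) ∧ C n m = ⋂ s, D s) :
    ∃ g : X → ℝ, Continuous g ∧ ∀ x,
      (x ∈ ⋂ n, ⋃ m, C n m → AbsolutelyNormal (g x)) ∧
      (x ∉ ⋂ n, ⋃ m, C n m → ∀ b, 2 ≤ b → ¬ SimplyNormal b (g x)) := by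
  choose D hD hCD using hC
  choose Φ hΦ hmem using fun n => exists_continuous_mem_iff_eventually_eq_false (hD n)
  obtain ⟨g, hg, hnormal⟩ := exists_continuous_simplyNormal_of_eventually_eq_false
  simp only [hCD, Set.mem_iInter (s := fun n => ⋃ m, ⋂ s, D n m s), hmem]
  refine ⟨fun x => g fun n => Φ n x, hg.comp (continuous_pi hΦ), fun x =>
    ⟨fun hx b hb l hl => (hnormal _).1 hx (b ^ l) ?_, fun hx => ?_⟩⟩
  · exact hb.trans (Nat.le_self_pow (Nat.one_le_iff_ne_zero.1 hl) b)
  · obtain ⟨n, hn⟩ := not_forall.1 hx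
    exact (hnormal _).2 n ((not_eventually.1 hn).mono fun s => Bool.eq_true_of_not_eq_false)

end Reduction

/-- The set of absolutely normal numbers is `Π⁰₃`-hard: for every `Π⁰₃` subset `A` of
Baire space `ℕ^ℕ` (a countable intersection of countable unions of closed sets in the
product topology) there is a continuous `g : ℕ^ℕ → ℝ` such that `g` maps members of `A`
to absolutely normal reals and non-members to absolutely abnormal reals; in particular
`f ∈ A` iff `g f` is absolutely normal. -/
theorem absolutelyNormal_pi03_hard
    (A : Set (ℕ → ℕ)) (C : ℕ → ℕ → Set (ℕ → ℕ))
    (hC : ∀ n m, IsClosed (C n m)) (hA : A = ⋂ n, ⋃ m, C n m) :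
    ∃ g : (ℕ → ℕ) → ℝ, Continuous g ∧ ∀ f : ℕ → ℕ,
      (f ∈ A → AbsolutelyNormal (g f)) ∧
      (f ∉ A → AbsolutelyAbnormal (g f)) ∧
      (f ∈ A ↔ AbsolutelyNormal (g f)) := by
  subst hA
  obtain ⟨g, hg, h⟩ := absolutelyNormal_pi03_hard_general
    fun n m => exists_isClopen_iInter_eq_of_isClosed (hC n m)
  refine ⟨g, hg, fun f => ⟨(h f).1, fun hf b hb hnormal => (h f).2 hf b hb hnormal.simplyNormal,
    (h f).1, not_imp_not.1 fun hf hnormal => ?_⟩⟩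
  exact (h f).2 hf 2 le_rfl (hnormal 2 le_rfl).simplyNormal
end

section
/- For every base b ≥ 2, the set of numbers normal to base b is Π⁰₃-hard: for every set A ⊆ ℕ^ℕ that is Π⁰₃ in Baire space (i.e., A = ⋂_n ⋃_m C_{n,m} for closed sets C_{n,m} ⊆ ℕ^ℕ in the product topology), there is a continuous function g : ℕ^ℕ → ℝ such that for every f ∈ ℕ^ℕ, f ∈ A if and only if g(f) is normal to base b. -/
open Filter

/-!
By the strong law of large numbers, almost every sequence `x : ℕ → Fin b` is normal. Given
`L : ℕ → ℕ`, overwrite with zeros the initial segment of relative length `2 ^ (-L k)` of each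
dyadic interval `[2 ^ k, 2 ^ (k + 1))` of positions. If `L k → ∞`, the overwritten positions have
density zero and the sequence stays normal; if `L` is bounded along a subsequence, runs of zeros
of length proportional to their position recur, and already the frequency of the digit `0` is
wrong. The zeros also recur forever, so the sequence is the actual expansion of its sum.

It remains to find `L f`, with `L f k` depending on finitely many entries of `f`, such that `f`
lies in `⋂ n, ⋃ m, C n m` iff `L f k → ∞`. Guess at stage `k` the least `m` such that `C n m`
meets the cylinder of `f` of length `k`. The guesses increase with `k`, and since the `C n m` are
closed they stabilise iff `f ∈ ⋃ m, C n m`. Let `L f k` be the least `n` whose guess changes at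
stage `k`.
-/

open MeasureTheory ProbabilityTheory Topology

section NatDensity

variable {S T D : Set ℕ} {c : ℝ}

open Classical in
/-- The set `S` has natural density `c`: the proportion of elements of `S` among the first `n`
natural numbers tends to `c`. -/
def HasNatDensity (S : Set ℕ) (c : ℝ) : Prop :=
  Tendsto (fun n ↦ (Nat.count (· ∈ S) n : ℝ) / n) atTop (𝓝 c)

lemma hasNatDensity_iff [DecidablePred (· ∈ S)] :
    HasNatDensity S c ↔ Tendsto (fun n ↦ (Nat.count (· ∈ S) n : ℝ) / n) atTop (𝓝 c) := by
  unfold HasNatDensity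
  congr!

lemma count_le_count_add_count_of_subset_union [DecidablePred (· ∈ S)] [DecidablePred (· ∈ T)]
    [DecidablePred (· ∈ D)] (h : S ⊆ T ∪ D) (n : ℕ) :
    Nat.count (· ∈ S) n ≤ Nat.count (· ∈ T) n + Nat.count (· ∈ D) n := by
  simp only [Nat.count_eq_card_filter_range]
  refine (Finset.card_le_card fun i hi ↦ ?_).trans (Finset.card_union_le _ _)
  have := @h i
  simp_all

lemma hasNatDensity_zero_of_count_le [DecidablePred (· ∈ S)]
    (h : ∀ ε > 0, ∃ K : ℝ, ∀ n, (Nat.count (· ∈ S) n : ℝ) ≤ K + ε * n) : HasNatDensity S 0 := by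
  refine hasNatDensity_iff.2 <| Metric.tendsto_atTop.2 fun ε hε ↦ ?_
  obtain ⟨K, hK⟩ := h (ε / 2) (half_pos hε)
  obtain ⟨N, hN⟩ := exists_nat_gt (K / (ε / 2))
  refine ⟨N + 1, fun n hn ↦ ?_⟩
  have hn0 : (0 : ℝ) < n := mod_cast (show 0 < n by omega)
  have hNn : (N : ℝ) ≤ n := mod_cast (show N ≤ n by omega)
  have hKn : K < n * (ε / 2) := (div_lt_iff₀ (half_pos hε)).1 (hN.trans_le hNn)
  rw [Real.dist_0_eq_abs, abs_of_nonneg (by positivity), div_lt_iff₀ hn0]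
  linarith [hK n]

lemma HasNatDensity.of_eqOn_compl (hS : HasNatDensity S c) (hD : HasNatDensity D 0)
    (h : ∀ i ∉ D, i ∈ S ↔ i ∈ T) : HasNatDensity T c := by
  classical
  have hST : S ⊆ T ∪ D := fun i hi ↦ or_iff_not_imp_right.2 fun hiD ↦ (h i hiD).1 hi
  have hTS : T ⊆ S ∪ D := fun i hi ↦ or_iff_not_imp_right.2 fun hiD ↦ (h i hiD).2 hi
  rw [hasNatDensity_iff] at *
  refine tendsto_of_tendsto_of_tendsto_of_le_of_le (by simpa using hS.sub hD)
    (by simpa using hS.add hD) (fun n ↦ ?_) fun n ↦ ?_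
  · have hcount : (Nat.count (· ∈ S) n : ℝ) ≤ Nat.count (· ∈ T) n + Nat.count (· ∈ D) n :=
      mod_cast count_le_count_add_count_of_subset_union hST n
    simp only [← sub_div]
    gcongr
    linarith
  · have hcount : (Nat.count (· ∈ T) n : ℝ) ≤ Nat.count (· ∈ S) n + Nat.count (· ∈ D) n :=
      mod_cast count_le_count_add_count_of_subset_union hTS n
    simp only [← add_div]
    gcongr

lemma count_exists_block_mem_le [DecidablePred (· ∈ D)] (l n : ℕ)
    [DecidablePred (· ∈ {i | ∃ j < l, l * i + j ∈ D})] :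
    Nat.count (· ∈ {i | ∃ j < l, l * i + j ∈ D}) n ≤ Nat.count (· ∈ D) (l * n) := by
  induction n with
  | zero => simp
  | succ n ih =>
    rw [Nat.count_succ, mul_add_one, Nat.count_add]
    refine add_le_add ih ?_
    split_ifs with hn
    · exact Nat.one_le_iff_ne_zero.2 (Nat.count_ne_iff_exists.2 hn)
    · exact Nat.zero_le _

lemma HasNatDensity.exists_block_mem (hD : HasNatDensity D 0) (l : ℕ) :
    HasNatDensity {i | ∃ j < l, l * i + j ∈ D} 0 := by
  classical
  obtain rfl | hl := Nat.eq_zero_or_pos l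
  · simp [hasNatDensity_iff]
  rw [hasNatDensity_iff] at *
  have hlim : Tendsto (fun n ↦ l * ((Nat.count (· ∈ D) (l * n) : ℝ) / (l * n : ℕ)))
      atTop (𝓝 0) := by
    simpa using (hD.comp (tendsto_id.const_mul_atTop' hl)).const_mul (l : ℝ)
  refine squeeze_zero (fun n ↦ by positivity) (fun n ↦ ?_) hlim
  calc (Nat.count (· ∈ {i | ∃ j < l, l * i + j ∈ D}) n : ℝ) / n
      ≤ (Nat.count (· ∈ D) (l * n) : ℝ) / n := by
        gcongr
        exact count_exists_block_mem_le l n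
    _ = l * ((Nat.count (· ∈ D) (l * n) : ℝ) / (l * n : ℕ)) := by push_cast; field_simp

lemma count_add_of_Ico_subset [DecidablePred (· ∈ S)] {M d : ℕ} (h : Set.Ico M (M + d) ⊆ S) :
    Nat.count (· ∈ S) (M + d) = Nat.count (· ∈ S) M + d := by
  have hcount : Nat.count (fun j ↦ M + j ∈ S) d = d :=
    Nat.count_of_forall fun j hj ↦ h ⟨Nat.le_add_right M j, Nat.add_lt_add_left hj M⟩
  rw [Nat.count_add, hcount]

lemma HasNatDensity.one_le_of_frequently_Ico_subset (hS : HasNatDensity S c) {δ : ℝ} (hδ : 0 < δ)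
    (h : ∃ᶠ M : ℕ in atTop, ∃ d : ℕ, δ * M ≤ d ∧ Set.Ico M (M + d) ⊆ S) : 1 ≤ c := by
  classical
  by_contra! hc
  -- chosen so that counting up to `M` and up to `M + d` with relative error `η` leaves no room
  -- for `d` extra elements when `δ * M ≤ d`
  set η : ℝ := (1 - c) * δ / (δ + 2) with hη_def
  have hη : 0 < η := by have := sub_pos.2 hc; positivity
  obtain ⟨N, hN⟩ := Metric.tendsto_atTop.1 (hasNatDensity_iff.1 hS) η hη
  have hcount (n : ℕ) (hn : N < n) : |(Nat.count (· ∈ S) n : ℝ) - c * n| < η * n := by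
    have hn0 : (0 : ℝ) < n := mod_cast (show 0 < n by omega)
    have hdist := hN n hn.le
    rwa [Real.dist_eq, div_sub' hn0.ne', abs_div, abs_of_pos hn0, div_lt_iff₀ hn0,
      mul_comm (n : ℝ) c] at hdist
  obtain ⟨M, hM, d, hd, hsub⟩ := frequently_atTop.1 h (N + 1)
  have hlow := (abs_lt.1 (hcount M hM)).1
  have hupp := (abs_lt.1 (hcount (M + d) (by omega))).2
  rw [count_add_of_Ico_subset hsub] at hupp
  push_cast at hupp
  have hexcess : (1 - c) * d < η * (2 * M + d) := by linarith
  have hroom : η * (2 * M + d) ≤ (1 - c) * d := by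
    calc η * (2 * M + d) = (1 - c) * ((2 * (δ * M) + δ * d) / (δ + 2)) := by
          rw [hη_def]; field_simp
      _ ≤ (1 - c) * ((2 * d + δ * d) / (δ + 2)) := by gcongr
      _ = (1 - c) * d := by field_simp; ring
  exact hexcess.not_ge hroom

end NatDensity

section Digits

variable {b : ℕ}

/-- The sequence obtained from `y` by grouping its entries into consecutive blocks of length `l`,
each block being read as a digit in base `b ^ l` (most significant entry first, whereas
`finFunctionFinEquiv` puts the least significant one first). -/
def blocks (l : ℕ) (y : ℕ → Fin b) (i : ℕ) : Fin (b ^ l) :=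
  finFunctionFinEquiv fun j ↦ y (l * i + j.rev)

/-- A sequence over `Fin b` is normal if, for each `l ≥ 1`, all its blocks of length `l` at
positions divisible by `l` occur with the same frequency. This is normality of a real number
expressed through a chosen sequence of digits. -/
def IsNormalSeq (y : ℕ → Fin b) : Prop :=
  ∀ l : ℕ, 1 ≤ l → ∀ d : Fin (b ^ l), HasNatDensity {i | blocks l y i = d} (1 / (b : ℝ) ^ l)

lemma blocks_eq_iff {l : ℕ} {y : ℕ → Fin b} {i : ℕ} {d : Fin (b ^ l)} :
    blocks l y i = d ↔ ∀ j : Fin l, y (l * i + j.rev) = finFunctionFinEquiv.symm d j := by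
  rw [blocks, ← Equiv.eq_symm_apply, funext_iff]

lemma blocks_congr {l : ℕ} {x y : ℕ → Fin b} {i : ℕ}
    (h : ∀ j < l, x (l * i + j) = y (l * i + j)) : blocks l x i = blocks l y i :=
  congrArg finFunctionFinEquiv <| funext fun j ↦ h j.rev j.rev.isLt

lemma IsNormalSeq.hasNatDensity_eq {y : ℕ → Fin b} (hy : IsNormalSeq y) (a : Fin b) :
    HasNatDensity {i | y i = a} (1 / b) := by
  simpa [blocks_eq_iff] using hy 1 le_rfl (finFunctionFinEquiv fun _ ↦ a)

lemma ofDigits_lt_one {y : ℕ → Fin b} {i : ℕ} (hi : (y i : ℕ) + 1 < b) :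
    Real.ofDigits y < 1 := by
  have hb : (0 : ℝ) < b := mod_cast (show 0 < b by omega)
  let y' : ℕ → Fin b := Function.update y i ⟨y i + 1, hi⟩
  refine lt_of_lt_of_le ?_ (Real.ofDigits_le_one y')
  refine Summable.tsum_lt_tsum (i := i) (fun j ↦ ?_) ?_ Real.summable_ofDigitsTerm
    Real.summable_ofDigitsTerm
  · obtain rfl | hji := eq_or_ne j i
    · simp only [Real.ofDigitsTerm, y', Function.update_self]
      gcongr
      simp
    · simp [Real.ofDigitsTerm, y', hji]
  · simp only [Real.ofDigitsTerm, y', Function.update_self]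
    gcongr
    simp

lemma pow_mul_sum_ofDigitsTerm (y : ℕ → Fin b) (n : ℕ) :
    (b : ℝ) ^ n * ∑ i ∈ Finset.range n, Real.ofDigitsTerm y i =
      (∑ i ∈ Finset.range n, (y i : ℕ) * b ^ (n - 1 - i) : ℕ) := by
  have hb0 : (b : ℝ) ≠ 0 := mod_cast (Fin.pos (y 0)).ne'
  rw [Finset.mul_sum]
  push_cast
  refine Finset.sum_congr rfl fun i hi ↦ ?_
  have hn : n = n - 1 - i + (i + 1) := by have := Finset.mem_range.1 hi; omega
  rw [Real.ofDigitsTerm, mul_left_comm]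
  nth_rw 1 [hn]
  rw [pow_add, mul_inv_cancel_right₀ (pow_ne_zero _ hb0)]

lemma rdigit_ofDigits {y : ℕ → Fin b} (hy : Real.ofDigits y < 1) {i : ℕ}
    (htail : Real.ofDigits (fun j ↦ y (j + (i + 1))) < 1) :
    rdigit b (Real.ofDigits y) i = y i := by
  have hb0 : (b : ℝ) ≠ 0 := mod_cast (Fin.pos (y 0)).ne'
  set A : ℕ := ∑ j ∈ Finset.range i, (y j : ℕ) * b ^ (i - 1 - j)
  have hshift : Real.ofDigits y * (b : ℝ) ^ (i + 1) =
      (b * A + y i : ℕ) + Real.ofDigits fun j ↦ y (j + (i + 1)) := by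
    push_cast
    rw [← pow_mul_sum_ofDigitsTerm, Real.ofDigits_eq_sum_add_ofDigits y (i + 1),
      Finset.sum_range_succ, Real.ofDigitsTerm]
    field_simp
    ring
  have hfloor : ⌊Real.ofDigits y * (b : ℝ) ^ (i + 1)⌋ = (b * A + y i : ℕ) := by
    rw [hshift, Int.floor_natCast_add, Int.floor_eq_zero_iff.2 ⟨Real.ofDigits_nonneg _, htail⟩,
      add_zero]
  rw [rdigit, Int.fract_eq_self.2 ⟨Real.ofDigits_nonneg _, hy⟩, hfloor, Int.toNat_natCast,
    Nat.mul_add_mod, Nat.mod_eq_of_lt (y i).isLt]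

lemma sum_ofDigitsTerm_block (y : ℕ → Fin b) (l i : ℕ) :
    ∑ j ∈ Finset.range l, Real.ofDigitsTerm y (l * i + j) =
      Real.ofDigitsTerm (blocks l y) i := by
  have hb0 : (b : ℝ) ≠ 0 := mod_cast (Fin.pos (y 0)).ne'
  rw [Real.ofDigitsTerm, blocks, finFunctionFinEquiv_apply, ← Equiv.sum_comp Fin.revPerm,
    Finset.sum_range]
  push_cast
  rw [Finset.sum_mul]
  refine Finset.sum_congr rfl fun j _ ↦ ?_
  have hpow : (b : ℝ) ^ (l * (i + 1)) = b ^ (l - (j + 1)) * b ^ (l * i + j + 1) := by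
    rw [← pow_add]
    congr 1
    rw [mul_add_one]
    omega
  simp only [Real.ofDigitsTerm, Fin.revPerm_apply, Fin.rev_rev, Fin.val_rev]
  rw [← pow_mul, hpow, mul_inv, mul_assoc, mul_inv_cancel_left₀ (pow_ne_zero _ hb0)]

lemma ofDigits_blocks {l : ℕ} (hl : l ≠ 0) (y : ℕ → Fin b) :
    Real.ofDigits (blocks l y) = Real.ofDigits y := by
  have hpartial (n : ℕ) : ∑ i ∈ Finset.range n, Real.ofDigitsTerm (blocks l y) i =
      ∑ i ∈ Finset.range (l * n), Real.ofDigitsTerm y i := by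
    induction n with
    | zero => simp
    | succ n ih =>
      rw [Finset.sum_range_succ, ih, mul_add_one, Finset.sum_range_add, sum_ofDigitsTerm_block]
  refine tendsto_nhds_unique Real.summable_ofDigitsTerm.hasSum.tendsto_sum_nat ?_
  simp only [hpartial]
  exact Real.summable_ofDigitsTerm.hasSum.tendsto_sum_nat.comp
    (tendsto_id.const_mul_atTop' (Nat.pos_of_ne_zero hl))

lemma rdigit_pow_ofDigits {y : ℕ → Fin b} (hy : ∃ᶠ i in atTop, (y i : ℕ) + 1 < b)
    {l : ℕ} (hl : l ≠ 0) (i : ℕ) : rdigit (b ^ l) (Real.ofDigits y) i = blocks l y i := by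
  have htail (n : ℕ) : Real.ofDigits (fun j ↦ blocks l y (j + n)) < 1 := by
    have hshift : (fun j ↦ blocks l y (j + n)) = blocks l fun j ↦ y (j + l * n) := by
      funext j
      exact congrArg finFunctionFinEquiv <| funext fun k ↦ congrArg y (by ring)
    obtain ⟨m, hm, hmb⟩ := frequently_atTop.1 hy (l * n)
    rw [hshift, ofDigits_blocks hl]
    exact ofDigits_lt_one (i := m - l * n) (by rwa [Nat.sub_add_cancel hm])
  rw [← ofDigits_blocks hl y]
  exact rdigit_ofDigits (htail 0) (htail (i + 1))

lemma simplyNormal_iff_hasNatDensity {R : ℝ} :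
    SimplyNormal b R ↔ ∀ d < b, HasNatDensity {i | rdigit b R i = d} (1 / b) := by
  have hcount (d n : ℕ) :
      (rdigits b R n).count d = Nat.count (· ∈ {i | rdigit b R i = d}) n := by
    rw [rdigits, List.count_eq_countP, List.countP_map, Nat.count]
    rfl
  simp only [SimplyNormal, hasNatDensity_iff, hcount]

theorem normalBase_ofDigits_iff {y : ℕ → Fin b}
    (hy : ∃ᶠ i in atTop, (y i : ℕ) + 1 < b) : NormalBase b (Real.ofDigits y) ↔ IsNormalSeq y := by
  refine forall₂_congr fun l hl ↦ ?_
  simp only [simplyNormal_iff_hasNatDensity, Fin.forall_iff, Fin.ext_iff, Nat.cast_pow,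
    rdigit_pow_ofDigits hy (Nat.one_le_iff_ne_zero.1 hl)]

end Digits

section Borel

variable {Ω : Type*} [MeasurableSpace Ω] {μ : Measure Ω}

lemma ae_hasNatDensity_setOf_eq [IsFiniteMeasure μ] {α : Type*} [MeasurableSpace α]
    [MeasurableSingletonClass α] {X : ℕ → Ω → α} (hindep : Pairwise fun i j ↦ X i ⟂ᵢ[μ] X j)
    (hident : ∀ i, IdentDistrib (X i) (X 0) μ μ) (a : α) :
    ∀ᵐ ω ∂μ, HasNatDensity {i | X i ω = a} ((μ.map (X 0)).real {a}) := by
  classical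
  let φ : α → ℝ := ({a} : Set α).indicator 1
  have hφ : Measurable φ := measurable_one.indicator (measurableSet_singleton a)
  have hφX : AEStronglyMeasurable φ (μ.map (X 0)) := hφ.aestronglyMeasurable
  have hmean : ∫ ω, φ (X 0 ω) ∂μ = (μ.map (X 0)).real {a} := by
    rw [← integral_map (hident 0).aemeasurable_fst hφX,
      integral_indicator_one (measurableSet_singleton a)]
  have hint : Integrable (φ ∘ X 0) μ :=
    (integrable_map_measure hφX (hident 0).aemeasurable_fst).1
      ((integrable_const 1).indicator (measurableSet_singleton a))
  filter_upwards [strong_law_ae_real (fun i ↦ φ ∘ X i) hint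
    (fun i j hij ↦ (hindep hij).comp hφ hφ) fun i ↦ (hident i).comp hφ] with ω hω
  rw [hasNatDensity_iff]
  convert hω using 3 with n
  · simp only [Nat.count_eq_card_filter_range, Finset.card_filter, φ, Function.comp_apply,
      Set.indicator_apply, Set.mem_singleton_iff, Set.mem_ofPred_eq, Pi.one_apply]
    push_cast
    rfl
  · exact hmean.symm

lemma identDistrib_of_forall_singleton {α : Type*} [MeasurableSpace α] [Countable α]
    [MeasurableSingletonClass α] {X Y : Ω → α} (hX : Measurable X) (hY : Measurable Y)
    (h : ∀ a, μ (X ⁻¹' {a}) = μ (Y ⁻¹' {a})) : IdentDistrib X Y μ μ := by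
  refine ⟨hX.aemeasurable, hY.aemeasurable, Measure.ext_of_singleton fun a ↦ ?_⟩
  rw [Measure.map_apply hX (measurableSet_singleton a),
    Measure.map_apply hY (measurableSet_singleton a), h]

variable {b : ℕ} {X : ℕ → Ω → Fin b}

lemma measurable_blocks (hX : ∀ i, Measurable (X i)) (l i : ℕ) :
    Measurable fun ω ↦ blocks l (X · ω) i :=
  (Measurable.of_discrete (f := finFunctionFinEquiv)).comp (measurable_pi_lambda _ fun _ ↦ hX _)

lemma measure_blocks_eq (hX : iIndepFun X μ) (hunif : ∀ i a, μ (X i ⁻¹' {a}) = (b : ENNReal)⁻¹)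
    (l i : ℕ) (d : Fin (b ^ l)) :
    μ ((fun ω ↦ blocks l (X · ω) i) ⁻¹' {d}) = ((b : ENNReal) ^ l)⁻¹ := by
  have hinj : Function.Injective fun j : Fin l ↦ l * i + (j.rev : ℕ) := fun j k hjk ↦
    Fin.rev_injective (Fin.ext (Nat.add_left_cancel hjk))
  have hpre : (fun ω ↦ blocks l (X · ω) i) ⁻¹' {d} = ⋂ j ∈ (Finset.univ : Finset (Fin l)),
      X (l * i + j.rev) ⁻¹' {finFunctionFinEquiv.symm d j} := by
    ext ω
    simp [blocks_eq_iff]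
  rw [hpre, (hX.precomp hinj).measure_inter_preimage_eq_mul Finset.univ
    fun _ _ ↦ measurableSet_singleton _]
  simp [hunif, ENNReal.inv_pow]

lemma indepFun_blocks (hX : iIndepFun X μ) (hmeas : ∀ i, Measurable (X i)) (l : ℕ) {i k : ℕ}
    (hik : i ≠ k) : (fun ω ↦ blocks l (X · ω) i) ⟂ᵢ[μ] (fun ω ↦ blocks l (X · ω) k) := by
  let I (i : ℕ) : Finset ℕ := Finset.Ico (l * i) (l * (i + 1))
  have hI {i n : ℕ} (hn : n ∈ I i) : n / l = i :=
    Nat.div_eq_of_lt_le (by grind) (by grind)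
  have hdisj : Disjoint (I i) (I k) :=
    Finset.disjoint_left.2 fun n hi hk ↦ hik ((hI hi).symm.trans (hI hk))
  let read (i : ℕ) (v : I i → Fin b) : Fin (b ^ l) := finFunctionFinEquiv fun j ↦
    v ⟨l * i + j.rev, Finset.mem_Ico.2 ⟨Nat.le_add_right _ _, by grind⟩⟩
  exact (hX.indepFun_finset (I i) (I k) hdisj hmeas).comp
    (Measurable.of_discrete (f := read i)) (Measurable.of_discrete (f := read k))

theorem ae_isNormalSeq (hX : iIndepFun X μ) (hmeas : ∀ i, Measurable (X i))
    (hunif : ∀ i a, μ (X i ⁻¹' {a}) = (b : ENNReal)⁻¹) : ∀ᵐ ω ∂μ, IsNormalSeq (X · ω) := by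
  have := hX.isProbabilityMeasure
  simp only [IsNormalSeq, ae_all_iff]
  intro l _ d
  have hident (i : ℕ) : IdentDistrib (fun ω ↦ blocks l (X · ω) i)
      (fun ω ↦ blocks l (X · ω) 0) μ μ :=
    identDistrib_of_forall_singleton (measurable_blocks hmeas l i) (measurable_blocks hmeas l 0)
      fun d ↦ by simp only [measure_blocks_eq hX hunif]
  have hprob : (μ.map fun ω ↦ blocks l (X · ω) 0).real {d} = 1 / (b : ℝ) ^ l := by
    rw [map_measureReal_apply (measurable_blocks hmeas l 0) (measurableSet_singleton d),
      measureReal_def, measure_blocks_eq hX hunif]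
    simp
  rw [← hprob]
  exact ae_hasNatDensity_setOf_eq (fun i k ↦ indepFun_blocks hX hmeas l) hident d

theorem exists_isNormalSeq (b : ℕ) [NeZero b] : ∃ y : ℕ → Fin b, IsNormalSeq y := by
  let ν : Measure (Fin b) := (PMF.uniformOfFintype (Fin b)).toMeasure
  have hν (a : Fin b) : ν {a} = (b : ENNReal)⁻¹ := by
    simp [ν, PMF.toMeasure_apply_singleton _ _ (measurableSet_singleton a)]
  have hindep : iIndepFun (fun (i : ℕ) (y : ℕ → Fin b) ↦ y i) (Measure.infinitePi fun _ ↦ ν) :=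
    iIndepFun_infinitePi fun _ ↦ measurable_id
  refine (ae_isNormalSeq hindep measurable_pi_apply fun i a ↦ ?_).exists
  rw [← hν a, ← Measure.map_apply (measurable_pi_apply i) (measurableSet_singleton a),
    Measure.infinitePi_map_eval (fun _ ↦ ν) i]

end Borel

section Padding

variable {L : ℕ → ℕ}

/-- The union over `k` of the initial segments of length `2 ^ (k - L k)` of the dyadic intervals
`[2 ^ k, 2 ^ (k + 1))`, where a normal sequence is to be overwritten.
Because of the truncated subtraction, `2 ^ k` always belongs to it. -/
def padding (L : ℕ → ℕ) : Set ℕ :=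
  {i | i < 2 ^ Nat.log 2 i + 2 ^ (Nat.log 2 i - L (Nat.log 2 i))}

lemma mem_padding_iff {i k : ℕ} (hi : i ∈ Set.Ico (2 ^ k) (2 ^ (k + 1))) :
    i ∈ padding L ↔ i < 2 ^ k + 2 ^ (k - L k) := by
  have hlog : Nat.log 2 i = k := Nat.log_eq_of_pow_le_of_lt_pow hi.1 hi.2
  rw [padding, Set.mem_ofPred_eq, hlog]

lemma Ico_subset_padding (L : ℕ → ℕ) (k : ℕ) :
    Set.Ico (2 ^ k) (2 ^ k + 2 ^ (k - L k)) ⊆ padding L := fun i hi ↦ by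
  have hle : 2 ^ (k - L k) ≤ 2 ^ k := Nat.pow_le_pow_right two_pos (Nat.sub_le _ _)
  exact (mem_padding_iff ⟨hi.1, by have := hi.2; omega⟩).2 hi.2

lemma count_padding_two_pow_succ [DecidablePred (· ∈ padding L)] (k : ℕ) :
    Nat.count (· ∈ padding L) (2 ^ (k + 1)) =
      Nat.count (· ∈ padding L) (2 ^ k) + 2 ^ (k - L k) := by
  have hle : 2 ^ (k - L k) ≤ 2 ^ k := Nat.pow_le_pow_right two_pos (Nat.sub_le _ _)
  have hmem (j : ℕ) (hj : j < 2 ^ k) : 2 ^ k + j ∈ padding L ↔ j < 2 ^ (k - L k) := by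
    rw [mem_padding_iff ⟨Nat.le_add_right _ _, by omega⟩, Nat.add_lt_add_iff_left]
  have hfilter : {j ∈ Finset.range (2 ^ k) | 2 ^ k + j ∈ padding L} =
      Finset.range (2 ^ (k - L k)) := by
    ext j
    have := hmem j
    grind
  rw [pow_succ, mul_two, Nat.count_add, Nat.count_eq_card_filter_range (fun j ↦ _ + j ∈ _),
    hfilter, Finset.card_range]

lemma eventually_two_pow_sub_le (hL : Tendsto L atTop atTop) {ε : ℝ} (hε : 0 < ε) :
    ∀ᶠ k in atTop, (2 : ℝ) ^ (k - L k) ≤ ε * 2 ^ k := by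
  obtain ⟨q, hq⟩ := exists_pow_lt_of_lt_one hε (show (1 / 2 : ℝ) < 1 by norm_num)
  filter_upwards [hL.eventually_ge_atTop q, eventually_ge_atTop q] with k hLk hk
  calc (2 : ℝ) ^ (k - L k) ≤ 2 ^ (k - q) := by gcongr; norm_num
    _ = (1 / 2) ^ q * 2 ^ k := by
      rw [pow_sub₀ _ two_ne_zero hk, one_div, inv_pow, mul_comm]
    _ ≤ ε * 2 ^ k := by gcongr

lemma hasNatDensity_padding (hL : Tendsto L atTop atTop) : HasNatDensity (padding L) 0 := by
  classical
  refine hasNatDensity_zero_of_count_le fun ε hε ↦ ?_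
  obtain ⟨K, hK⟩ := eventually_atTop.1 (eventually_two_pow_sub_le hL (half_pos hε))
  let c (n : ℕ) : ℝ := Nat.count (· ∈ padding L) n
  have hc : Monotone c := fun m n hmn ↦ Nat.cast_le.2 (Nat.count_monotone _ hmn)
  have hdyadic (k : ℕ) (hk : K ≤ k) : c (2 ^ k) ≤ c (2 ^ K) + ε / 2 * 2 ^ k := by
    induction k, hk using Nat.le_induction with
    | base => exact le_add_of_nonneg_right (by positivity)
    | succ k hk ih =>
      calc c (2 ^ (k + 1)) = c (2 ^ k) + 2 ^ (k - L k) := by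
            simp only [c, count_padding_two_pow_succ]; push_cast; rfl
        _ ≤ c (2 ^ K) + ε / 2 * 2 ^ k + ε / 2 * 2 ^ k := add_le_add ih (hK k hk)
        _ = c (2 ^ K) + ε / 2 * 2 ^ (k + 1) := by ring
  refine ⟨c (2 ^ K), fun n ↦ ?_⟩
  obtain hn | hn := le_total n (2 ^ K)
  · calc c n ≤ c (2 ^ K) := hc hn
      _ ≤ c (2 ^ K) + ε * n := le_add_of_nonneg_right (by positivity)
  · have hn0 : n ≠ 0 := ((Nat.two_pow_pos K).trans_le hn).ne'
    have hlog : (2 : ℝ) ^ Nat.log 2 n ≤ n := mod_cast Nat.pow_log_le_self 2 hn0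
    have hKlog : K ≤ Nat.log 2 n := Nat.le_log_of_pow_le one_lt_two hn
    calc c n ≤ c (2 ^ (Nat.log 2 n + 1)) :=
          hc (Nat.lt_pow_succ_log_self one_lt_two n).le
      _ ≤ c (2 ^ K) + ε / 2 * 2 ^ (Nat.log 2 n + 1) := hdyadic _ (hKlog.trans (Nat.le_succ _))
      _ = c (2 ^ K) + ε * 2 ^ Nat.log 2 n := by ring
      _ ≤ c (2 ^ K) + ε * n := by gcongr

variable {b : ℕ} [NeZero b] {x : ℕ → Fin b}

open Classical in
/-- The sequence `x` with its entries at the positions in `padding L` replaced by `0`; the digit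
sequence produced by the reduction. -/
noncomputable def padded (x : ℕ → Fin b) (L : ℕ → ℕ) (i : ℕ) : Fin b :=
  if i ∈ padding L then 0 else x i

lemma padded_of_mem {i : ℕ} (hi : i ∈ padding L) : padded x L i = 0 := if_pos hi

lemma padded_of_notMem {i : ℕ} (hi : i ∉ padding L) : padded x L i = x i := if_neg hi

lemma frequently_padded_add_one_lt (hb : 2 ≤ b) (x : ℕ → Fin b) (L : ℕ → ℕ) :
    ∃ᶠ i in atTop, (padded x L i : ℕ) + 1 < b := by
  refine frequently_atTop.2 fun k ↦ ⟨2 ^ k, Nat.lt_two_pow_self.le, ?_⟩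
  rw [padded_of_mem (Ico_subset_padding L k ⟨le_rfl, by simp⟩), Fin.val_zero]
  exact hb

lemma isNormalSeq_padded (hx : IsNormalSeq x) (hL : Tendsto L atTop atTop) :
    IsNormalSeq (padded x L) := fun l hl d ↦ by
  refine (hx l hl d).of_eqOn_compl ((hasNatDensity_padding hL).exists_block_mem l) fun i hi ↦ ?_
  have hblocks : blocks l (padded x L) i = blocks l x i :=
    blocks_congr fun j hj ↦ padded_of_notMem fun hmem ↦ hi ⟨j, hj, hmem⟩
  rw [Set.mem_ofPred_eq, Set.mem_ofPred_eq, hblocks]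

lemma tendsto_of_isNormalSeq_padded (hb : 2 ≤ b) (h : IsNormalSeq (padded x L)) :
    Tendsto L atTop atTop := by
  by_contra hL
  obtain ⟨q, hq⟩ : ∃ q, ∃ᶠ k in atTop, L k < q := by
    simpa [tendsto_atTop, Filter.Frequently, not_lt] using hL
  have hlong : ∃ᶠ M : ℕ in atTop, ∃ d : ℕ, (1 / 2 : ℝ) ^ q * M ≤ d ∧
      Set.Ico M (M + d) ⊆ {i | padded x L i = 0} := by
    refine (tendsto_pow_atTop_atTop_of_one_lt one_lt_two).frequently (hq.mono fun k hk ↦ ?_)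
    refine ⟨2 ^ (k - L k), ?_, fun i hi ↦ padded_of_mem (Ico_subset_padding L k hi)⟩
    have hpow : 2 ^ k ≤ 2 ^ q * 2 ^ (k - L k) := by
      rw [← pow_add]
      exact Nat.pow_le_pow_right two_pos (by omega)
    rw [one_div, inv_pow, inv_mul_le_iff₀ (by positivity)]
    exact_mod_cast hpow
  have hle : (1 : ℝ) ≤ 1 / b :=
    (h.hasNatDensity_eq 0).one_le_of_frequently_Ico_subset (by positivity) hlong
  have hb' : (1 : ℝ) < b := mod_cast hb
  exact hle.not_gt ((div_lt_one (by positivity)).2 hb')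

theorem isNormalSeq_padded_iff (hb : 2 ≤ b) (hx : IsNormalSeq x) :
    IsNormalSeq (padded x L) ↔ Tendsto L atTop atTop :=
  ⟨tendsto_of_isNormalSeq_padded hb, isNormalSeq_padded hx⟩

end Padding

section Reduction

variable {α : ℕ → Type*}

/-- The stage `k` guess at an index `m` with `f ∈ C m`: the least `m` such that `C m` meets the
cylinder of points agreeing with `f` below `k`, capped at `k`. -/
noncomputable def witness (C : ℕ → Set (∀ i, α i)) (f : ∀ i, α i) (k : ℕ) : ℕ :=
  sInf {m | (PiNat.cylinder f k ∩ C m).Nonempty ∨ m = k}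

/-- The least `n` such that `P n k` fails, capped at `k`. It tends to infinity with `k` iff each
`P n` holds eventually. -/
noncomputable def firstFailure (P : ℕ → ℕ → Prop) (k : ℕ) : ℕ :=
  sInf {n | ¬ P n k ∨ n = k}

lemma tendsto_firstFailure_iff {P : ℕ → ℕ → Prop} :
    Tendsto (firstFailure P) atTop atTop ↔ ∀ n, ∀ᶠ k in atTop, P n k := by
  refine ⟨fun h n ↦ ?_, fun h ↦ tendsto_atTop.2 fun q ↦ ?_⟩
  · filter_upwards [h.eventually_gt_atTop n] with k hk
    by_contra hP
    exact hk.not_ge (Nat.sInf_le (.inl hP))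
  · filter_upwards [(Set.finite_Iio q).eventually_all.2 fun n _ ↦ h n, eventually_ge_atTop q]
      with k hP hk
    refine le_csInf ⟨k, .inr rfl⟩ ?_
    rintro n (hn | rfl)
    · exact not_lt.1 fun hnq ↦ hn (hP n hnq)
    · exact hk

variable {C : ℕ → Set (∀ i, α i)} {f g : ∀ i, α i} {k m : ℕ}

lemma witness_congr (h : g ∈ PiNat.cylinder f k) : witness C g k = witness C f k := by
  rw [witness, witness, PiNat.mem_cylinder_iff_eq.1 h]

lemma witness_le (h : (PiNat.cylinder f k ∩ C m).Nonempty) : witness C f k ≤ m :=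
  Nat.sInf_le (.inl h)

lemma witness_le_self : witness C f k ≤ k := Nat.sInf_le (.inr rfl)

lemma cylinder_inter_nonempty_of_witness_lt (h : witness C f k < k) :
    (PiNat.cylinder f k ∩ C (witness C f k)).Nonempty :=
  (Nat.sInf_mem (s := {m | (PiNat.cylinder f k ∩ C m).Nonempty ∨ m = k})
    ⟨k, .inr rfl⟩).resolve_right h.ne

lemma witness_mono (C : ℕ → Set (∀ i, α i)) (f : ∀ i, α i) : Monotone (witness C f) := by
  intro k l hkl
  obtain hl | hl := witness_le_self (C := C) (f := f) (k := l) |>.lt_or_eq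
  · exact witness_le <| (cylinder_inter_nonempty_of_witness_lt hl).mono <|
      Set.inter_subset_inter_left _ (PiNat.cylinder_anti f hkl)
  · exact witness_le_self.trans (hkl.trans_eq hl.symm)

lemma eventually_witness_eq (hf : f ∈ C m) : ∃ N, ∀ᶠ k in atTop, witness C f k = N := by
  have hbdd : BddAbove (Set.range (witness C f)) :=
    ⟨m, Set.forall_mem_range.2 fun k ↦ witness_le ⟨f, PiNat.self_mem_cylinder f k, hf⟩⟩
  exact ⟨_, by simpa using tendsto_atTop_ciSup (witness_mono C f) hbdd⟩

variable [∀ i, TopologicalSpace (α i)] [∀ i, DiscreteTopology (α i)]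

lemma mem_of_frequently_cylinder_inter_nonempty {s : Set (∀ i, α i)} (hs : IsClosed s)
    (h : ∃ᶠ k in atTop, (PiNat.cylinder f k ∩ s).Nonempty) : f ∈ s := by
  by_contra hf
  obtain ⟨l, hl⟩ := PiNat.exists_disjoint_cylinder hs hf
  obtain ⟨k, hk, g, hgf, hgs⟩ := frequently_atTop.1 h l
  exact Set.disjoint_left.1 hl hgs (PiNat.cylinder_anti f hk hgf)

lemma mem_iUnion_iff_eventually_witness_succ_eq (hC : ∀ m, IsClosed (C m)) :
    f ∈ ⋃ m, C m ↔ ∀ᶠ k in atTop, witness C f (k + 1) = witness C f k := by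
  rw [Set.mem_iUnion]
  refine ⟨fun ⟨m, hm⟩ ↦ ?_, fun h ↦ ?_⟩
  · obtain ⟨N, hN⟩ := eventually_witness_eq hm
    filter_upwards [hN, (tendsto_add_atTop_nat 1).eventually hN] with k hk hk'
    rw [hk, hk']
  · obtain ⟨K, hK⟩ := eventually_atTop.1 h
    have hconst (k : ℕ) (hk : K ≤ k) : witness C f k = witness C f K := by
      induction k, hk using Nat.le_induction with
      | base => rfl
      | succ k hk ih => rw [hK k hk, ih]
    refine ⟨witness C f K, mem_of_frequently_cylinder_inter_nonempty (hC _) ?_⟩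
    refine Eventually.frequently ?_
    filter_upwards [eventually_ge_atTop K, eventually_gt_atTop (witness C f K)] with k hk hlt
    rw [← hconst k hk] at hlt ⊢
    exact cylinder_inter_nonempty_of_witness_lt hlt

lemma isLocallyConstant_of_cylinder {β : Type*} {F : (∀ i, α i) → β} (k : ℕ)
    (h : ∀ f, ∀ g ∈ PiNat.cylinder f k, F g = F f) : IsLocallyConstant F :=
  (IsLocallyConstant.iff_exists_open F).2 fun f ↦
    ⟨PiNat.cylinder f k, PiNat.isOpen_cylinder _ f k, PiNat.self_mem_cylinder f k, h f⟩

theorem exists_isLocallyConstant_mem_iff_tendsto {C : ℕ → ℕ → Set (∀ i, α i)}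
    (hC : ∀ n m, IsClosed (C n m)) :
    ∃ L : (∀ i, α i) → ℕ → ℕ, (∀ k, IsLocallyConstant fun f ↦ L f k) ∧
      ∀ f, f ∈ ⋂ n, ⋃ m, C n m ↔ Tendsto (L f) atTop atTop := by
  let stable (f : ∀ i, α i) (n k : ℕ) : Prop := witness (C n) f (k + 1) = witness (C n) f k
  refine ⟨fun f ↦ firstFailure (stable f), fun k ↦ ?_, fun f ↦ ?_⟩
  · refine isLocallyConstant_of_cylinder (k + 1) fun f g hg ↦ ?_
    simp only [firstFailure, stable, witness_congr hg,
      witness_congr (PiNat.cylinder_anti f k.le_succ hg)]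
  · rw [Set.mem_iInter, tendsto_firstFailure_iff]
    exact forall_congr' fun n ↦ mem_iUnion_iff_eventually_witness_succ_eq (hC n)

end Reduction

section Hardness

lemma continuous_ofDigits_padded {X : Type*} [TopologicalSpace X] {b : ℕ} [NeZero b]
    (x : ℕ → Fin b) {L : X → ℕ → ℕ} (hL : ∀ k, IsLocallyConstant fun f ↦ L f k) :
    Continuous fun f ↦ Real.ofDigits (padded x (L f)) := by
  refine Real.continuous_ofDigits.comp (continuous_pi fun i ↦ ?_)
  have hdigit : (fun f ↦ padded x (L f) i) = (fun t ↦ padded x (fun _ ↦ t) i) ∘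
      fun f ↦ L f (Nat.log 2 i) := rfl
  rw [hdigit]
  exact ((hL (Nat.log 2 i)).comp _).continuous

theorem normalBase_pi03_hard_general (b : ℕ) (hb : 2 ≤ b) {α : ℕ → Type*}
    [∀ i, TopologicalSpace (α i)] [∀ i, DiscreteTopology (α i)]
    (C : ℕ → ℕ → Set (∀ i, α i)) (hC : ∀ n m, IsClosed (C n m)) :
    ∃ g : (∀ i, α i) → ℝ, Continuous g ∧ ∀ f, f ∈ ⋂ n, ⋃ m, C n m ↔ NormalBase b (g f) := by
  have : NeZero b := ⟨by omega⟩
  obtain ⟨x, hx⟩ := exists_isNormalSeq b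
  obtain ⟨L, hL, hLmem⟩ := exists_isLocallyConstant_mem_iff_tendsto hC
  refine ⟨fun f ↦ Real.ofDigits (padded x (L f)), continuous_ofDigits_padded x hL, fun f ↦ ?_⟩
  rw [hLmem, normalBase_ofDigits_iff (frequently_padded_add_one_lt hb x (L f)),
    isNormalSeq_padded_iff hb hx]

end Hardness

/-- For every base `b ≥ 2`, the set of numbers normal to base `b` is `Π⁰₃`-hard: for
every `Π⁰₃` subset `A` of Baire space `ℕ^ℕ` (a countable intersection of countable
unions of closed sets in the product topology) there is a continuous `g : ℕ^ℕ → ℝ`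
such that `f ∈ A` iff `g f` is normal to base `b`. -/
theorem normalBase_pi03_hard (b : ℕ) (hb : 2 ≤ b)
    (A : Set (ℕ → ℕ)) (C : ℕ → ℕ → Set (ℕ → ℕ))
    (hC : ∀ n m, IsClosed (C n m)) (hA : A = ⋂ n, ⋃ m, C n m) :
    ∃ g : (ℕ → ℕ) → ℝ, Continuous g ∧ ∀ f : ℕ → ℕ, f ∈ A ↔ NormalBase b (g f) :=
  hA ▸ normalBase_pi03_hard_general b hb C hC
end

section
/- The set of absolutely abnormal real numbers is Σ⁰₃-hard: for every set A ⊆ ℕ^ℕ that is Σ⁰₃ in Baire space (i.e., A = ⋃_n ⋂_m U_{n,m} for open sets U_{n,m} ⊆ ℕ^ℕ in the product topology), there is a continuous function g : ℕ^ℕ → ℝ such that for every f ∈ ℕ^ℕ: if f ∈ A then g(f) is absolutely abnormal, and if f ∉ A then g(f) is absolutely normal. -/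
open Filter

/-!
The real number `g x` is the limit of nested intervals, which are described by the logarithms `T` of
their inverse lengths, so that all bases can be treated simultaneously. One step with slack `n`
passes from `T` to `T + T / n + T / n ^ 2`. On the part of length `T / n` the next interval is
chosen by a second moment argument so that the Weyl sums to all bases and frequencies considered so
far are small; on the part of length `T / n ^ 2` the digits to one prescribed base are all zero.
Every base is prescribed infinitely often. If `n` tends to infinity, the runs of zeros are
negligible and the limit is simply normal to every base by Weyl's criterion, hence absolutely
normal. If `n` stays bounded along infinitely many stages at which the base `b` is prescribed, the
runs occupy a fixed proportion of the digits and the limit is not simply normal to base `b`.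

The slacks decide the `Σ⁰₃` question: in a zero-dimensional space every `⋂ m, ⋃ k, C m k` with all
`C m k` clopen is the limit superior of a sequence of clopen sets, so that `Σ⁰₃` sets take the form
`⋃ n, limsup (D n) atTop` with all `D n p` clopen. Each event `x ∈ D n p`, for every base, requests
a slack depending on `n` and the prescribed base only, and all other stages request slacks that tend
to infinity. As every stage depends on finitely many clopen conditions, `g` is continuous.
-/

open MeasureTheory Set Topology Asymptotics
open scoped ENNReal ComplexConjugate FourierTransform

section EmpiricalMeasure

variable {E : Type*} [MeasurableSpace E]

/-- The empirical probability measure of the first `n + 1` terms of the sequence `u`; the shift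
makes it a probability measure for every `n`. -/
noncomputable def empiricalMeasure (u : ℕ → E) (n : ℕ) : ProbabilityMeasure E :=
  ⟨(n + 1 : ℝ≥0∞)⁻¹ • ∑ i ∈ Finset.range (n + 1), Measure.dirac (u i),
    ⟨by simp [ENNReal.inv_mul_cancel]⟩⟩

variable [MeasurableSingletonClass E]

theorem integral_empiricalMeasure {F : Type*} [NormedAddCommGroup F] [NormedSpace ℝ F]
    [CompleteSpace F] (u : ℕ → E) (n : ℕ) (f : E → F) :
    ∫ x, f x ∂(empiricalMeasure u n : Measure E)
      = ((n + 1 : ℕ) : ℝ)⁻¹ • ∑ i ∈ Finset.range (n + 1), f (u i) := by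
  have hf : ∀ i ∈ Finset.range (n + 1), Integrable f (Measure.dirac (u i)) := fun i _ ↦
    integrable_dirac enorm_lt_top
  rw [empiricalMeasure, ProbabilityMeasure.coe_mk, integral_smul_measure,
    integral_finsetSum_measure hf]
  simp [integral_dirac, ENNReal.toReal_inv, ENNReal.toReal_add]

theorem measureReal_empiricalMeasure (u : ℕ → E) (n : ℕ) (S : Set E) [DecidablePred (· ∈ S)] :
    (empiricalMeasure u n : Measure E).real S
      = ((Finset.range (n + 1)).filter (u · ∈ S)).card / ((n + 1 : ℕ) : ℝ) := by
  simp [empiricalMeasure, measureReal_def, Measure.dirac_apply, indicator_apply,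
    ENNReal.toReal_add, div_eq_inv_mul]

end EmpiricalMeasure

section WeylCriterion

variable {T : ℝ} [hT : Fact (0 < T)]

theorem integral_fourier_haarAddCircle (k : ℤ) :
    ∫ x : AddCircle T, fourier k x ∂(AddCircle.haarAddCircle (T := T))
      = if k = 0 then 1 else 0 := by
  simpa [fourierCoeff, Pi.single_apply, eq_comm] using congrFun (fourierCoeff_fourier (T := T) k) 0

theorem tendsto_integral_empiricalMeasure_fourier {u : ℕ → AddCircle T}
    (hu : ∀ q : ℕ, q ≠ 0 →
      (fun n ↦ ∑ i ∈ Finset.range n, fourier (q : ℤ) (u i)) =o[atTop] fun n ↦ (n : ℝ))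
    (k : ℤ) :
    Tendsto (fun n ↦ ∫ x, fourier k x ∂(empiricalMeasure u n : Measure (AddCircle T))) atTop
      (𝓝 (∫ x, fourier k x ∂(AddCircle.haarAddCircle (T := T)))) := by
  simp only [integral_empiricalMeasure, integral_fourier_haarAddCircle]
  rw [tendsto_add_atTop_iff_nat (f := fun n : ℕ ↦
    (n : ℝ)⁻¹ • ∑ i ∈ Finset.range n, fourier k (u i)) 1]
  split_ifs with hk
  · refine tendsto_const_nhds.congr' ?_
    filter_upwards [eventually_ne_atTop 0] with n hn
    simp [hk, hn]
  · refine IsLittleO.tendsto_inv_smul_nhds_zero ?_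
    obtain ⟨q, rfl | rfl⟩ := k.eq_nat_or_neg
    · exact hu q (by simpa using hk)
    · have hconj := (hu q (by simpa using hk)).norm_left
      refine (hconj.congr_left fun n ↦ ?_).of_norm_left
      simp only [fourier_neg, ← map_sum, RCLike.norm_conj]

theorem tendsto_empiricalMeasure_haarAddCircle {u : ℕ → AddCircle T}
    (hu : ∀ q : ℕ, q ≠ 0 →
      (fun n ↦ ∑ i ∈ Finset.range n, fourier (q : ℤ) (u i)) =o[atTop] fun n ↦ (n : ℝ)) :
    Tendsto (empiricalMeasure u) atTop (𝓝 ⟨AddCircle.haarAddCircle, inferInstance⟩) := by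
  refine ProbabilityMeasure.tendsto_of_tight_of_separatesPoints ℂ .of_compactSpace
    (A := fourierSubalgebra.comap (BoundedContinuousFunction.toContinuousMapStarₐ ℂ)) ?_ ?_
  · intro x y hxy
    obtain ⟨_, ⟨f, hf, rfl⟩, hfxy⟩ := fourierSubalgebra_separatesPoints hxy
    exact ⟨f, ⟨f, ⟨.mkOfCompact f, hf, rfl⟩, rfl⟩, hfxy⟩
  · suffices h : ∀ f ∈ Submodule.span ℂ (range (fourier (T := T))),
        Tendsto (fun n ↦ ∫ x, f x ∂(empiricalMeasure u n : Measure (AddCircle T))) atTop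
          (𝓝 (∫ x, f x ∂AddCircle.haarAddCircle)) from
      fun g hg ↦ h g (fourierSubalgebra_coe (T := T) ▸ hg)
    have hint (f : C(AddCircle T, ℂ)) (μ : Measure (AddCircle T)) [IsFiniteMeasure μ] :
        Integrable f μ :=
      f.continuous.integrable_of_hasCompactSupport (.of_compactSpace _)
    intro f hf
    induction hf using Submodule.span_induction with
    | mem f hf =>
      obtain ⟨k, rfl⟩ := hf
      exact tendsto_integral_empiricalMeasure_fourier hu k
    | zero => simp
    | add f g _ _ hf hg =>
      simpa [integral_add (hint f _) (hint g _)] using hf.add hg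
    | smul r f _ hf =>
      simpa [integral_const_mul] using hf.const_mul r

end WeylCriterion

section Arc

variable {a b x : ℝ}

/-- The half-open arc of the circle `ℝ / ℤ` which is the image of the interval `[a, b)`. -/
def circleArc (a b : ℝ) : Set UnitAddCircle := (↑) '' Ico a b

theorem coe_mem_circleArc_iff (ha : 0 ≤ a) (hb : b ≤ 1) :
    (x : UnitAddCircle) ∈ circleArc a b ↔ Int.fract x ∈ Ico a b := by
  have hfract : ((Int.fract x : ℝ) : UnitAddCircle) = x := by
    rw [Int.fract, AddCircle.coe_sub, sub_eq_self, AddCircle.coe_eq_zero_iff]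
    exact ⟨⌊x⌋, by simp⟩
  refine ⟨?_, fun h ↦ ⟨_, h, hfract⟩⟩
  rintro ⟨t, ht, htx⟩
  have hmem : t ∈ Ico (0 : ℝ) (0 + 1) := ⟨ha.trans ht.1, by linarith [ht.2]⟩
  have hfmem : Int.fract x ∈ Ico (0 : ℝ) (0 + 1) :=
    ⟨Int.fract_nonneg x, by linarith [Int.fract_lt_one x]⟩
  rwa [← (AddCircle.coe_eq_coe_iff_of_mem_Ico hmem hfmem).1 (htx.trans hfract.symm)]

theorem ball_subset_circleArc :
    Metric.ball (((a + b) / 2 : ℝ) : UnitAddCircle) ((b - a) / 2) ⊆ circleArc a b := by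
  intro y hy
  induction y using QuotientAddGroup.induction_on with | H t =>
  set s := t - (a + b) / 2 with hs
  have habs : |s - round s| < (b - a) / 2 := by
    rw [← UnitAddCircle.norm_eq, hs, AddCircle.coe_sub, ← dist_eq_norm]
    exact hy
  rw [abs_lt] at habs
  refine ⟨t - round s, ⟨by linarith, by linarith⟩, ?_⟩
  rw [AddCircle.coe_sub, sub_eq_self, AddCircle.coe_eq_zero_iff]
  exact ⟨round s, by simp⟩

theorem circleArc_subset_closedBall :
    circleArc a b ⊆ Metric.closedBall (((a + b) / 2 : ℝ) : UnitAddCircle) ((b - a) / 2) := by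
  rintro _ ⟨t, ⟨hat, htb⟩, rfl⟩
  rw [Metric.mem_closedBall, dist_eq_norm, ← AddCircle.coe_sub]
  refine (QuotientAddGroup.norm_mk_le_norm).trans ?_
  rw [Real.norm_eq_abs, abs_le]
  constructor <;> linarith

theorem haarAddCircle_frontier_circleArc :
    AddCircle.haarAddCircle (frontier (circleArc a b)) = 0 := by
  have hvol := (ae_eq_set.1 (AddCircle.closedBall_ae_eq_ball
    (x := (((a + b) / 2 : ℝ) : UnitAddCircle)) (ε := (b - a) / 2))).1
  rw [AddCircle.volume_eq_smul_haarAddCircle, ENNReal.ofReal_one, one_smul] at hvol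
  refine measure_mono_null (sdiff_subset_sdiff ?_ ?_) hvol
  · exact closure_minimal circleArc_subset_closedBall Metric.isClosed_closedBall
  · exact interior_maximal ball_subset_circleArc Metric.isOpen_ball

theorem measureReal_haarAddCircle_circleArc (hab : a ≤ b) (hba : b ≤ a + 1) :
    AddCircle.haarAddCircle.real (circleArc a b) = b - a := by
  have hball := measure_congr (AddCircle.closedBall_ae_eq_ball
    (x := (((a + b) / 2 : ℝ) : UnitAddCircle)) (ε := (b - a) / 2))
  have hclosed := AddCircle.volume_closedBall 1
    (x := (((a + b) / 2 : ℝ) : UnitAddCircle)) ((b - a) / 2)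
  rw [AddCircle.volume_eq_smul_haarAddCircle, ENNReal.ofReal_one, one_smul] at hball hclosed
  rw [mul_div_cancel₀ _ two_ne_zero, min_eq_right (by linarith)] at hclosed
  have harc : AddCircle.haarAddCircle (circleArc a b) = ENNReal.ofReal (b - a) :=
    le_antisymm ((measure_mono circleArc_subset_closedBall).trans_eq hclosed)
      ((hclosed.symm.trans hball).trans_le (measure_mono ball_subset_circleArc))
  rw [measureReal_def, harc, ENNReal.toReal_ofReal (by linarith)]

theorem tendsto_empiricalMeasure_circleArc {u : ℕ → UnitAddCircle}
    (hu : ∀ q : ℕ, q ≠ 0 →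
      (fun n ↦ ∑ i ∈ Finset.range n, fourier (q : ℤ) (u i)) =o[atTop] fun n ↦ (n : ℝ))
    (hab : a ≤ b) (hba : b ≤ a + 1) :
    Tendsto (fun n ↦ (empiricalMeasure u n : Measure UnitAddCircle).real (circleArc a b)) atTop
      (𝓝 (b - a)) := by
  have hmeas := ProbabilityMeasure.tendsto_measure_of_null_frontier_of_tendsto'
    (tendsto_empiricalMeasure_haarAddCircle hu) (haarAddCircle_frontier_circleArc (a := a) (b := b))
  rw [← measureReal_haarAddCircle_circleArc hab hba]
  exact (ENNReal.tendsto_toReal (measure_ne_top AddCircle.haarAddCircle _)).comp hmeas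

end Arc

section Digits

theorem rdigit_eq_floor {b : ℕ} (hb : 0 < b) (x : ℝ) (i : ℕ) :
    (rdigit b x i : ℤ) = ⌊b * Int.fract ((b : ℝ) ^ i * x)⌋ := by
  have hb' : (0 : ℝ) < b := by exact_mod_cast hb
  have hshift : Int.fract x * (b : ℝ) ^ (i + 1) = b * Int.fract ((b : ℝ) ^ i * x)
      + ((b * (⌊(b : ℝ) ^ i * x⌋ - b ^ i * ⌊x⌋) : ℤ) : ℝ) := by
    unfold Int.fract
    push_cast
    ring
  have hnonneg : 0 ≤ ⌊Int.fract x * (b : ℝ) ^ (i + 1)⌋ :=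
    Int.floor_nonneg.2 (mul_nonneg (Int.fract_nonneg _) (by positivity))
  rw [rdigit, Int.natCast_emod, Int.toNat_of_nonneg hnonneg, hshift, Int.floor_add_intCast,
    Int.add_mul_emod_self_left]
  refine Int.emod_eq_of_lt (Int.floor_nonneg.2 (mul_nonneg hb'.le (Int.fract_nonneg _))) ?_
  rw [Int.floor_lt, Int.cast_natCast]
  exact mul_lt_of_lt_one_right hb' (Int.fract_lt_one _)

theorem rdigit_eq_iff {b : ℕ} (hb : 0 < b) {d : ℕ} {x : ℝ} {i : ℕ} :
    rdigit b x i = d ↔ Int.fract ((b : ℝ) ^ i * x) ∈ Ico ((d : ℝ) / b) ((d + 1) / b) := by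
  have hb' : (0 : ℝ) < b := by exact_mod_cast hb
  rw [← Nat.cast_inj (R := ℤ), rdigit_eq_floor hb, Int.floor_eq_iff, mem_Ico, div_le_iff₀' hb',
    lt_div_iff₀' hb', Int.cast_natCast]

theorem count_rdigits (b : ℕ) (x : ℝ) (n d : ℕ) :
    (rdigits b x n).count d = ((Finset.range n).filter (rdigit b x · = d)).card := by
  rw [rdigits, List.count, List.countP_map, Finset.card_def, Finset.filter_val,
    ← Multiset.countP_eq_card_filter]
  rfl

/-- The exponential sum `∑ exp (2πi q b ^ i x)` over the indices `i ∈ s`; Weyl's criterion reads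
normality of `x` to base `b` off the growth of these sums. -/
noncomputable def weylSum (q b : ℕ) (s : Finset ℕ) (x : ℝ) : ℂ :=
  ∑ i ∈ s, (𝐞 (q * b ^ i * x) : ℂ)

theorem fourier_coe_eq_fourierChar (q : ℤ) (x : ℝ) :
    fourier q (x : UnitAddCircle) = (𝐞 (q * x) : ℂ) := by
  rw [fourier_coe_apply, Real.fourierChar_apply]
  push_cast
  ring_nf

theorem simplyNormal_of_weylSum_isLittleO {b : ℕ} (hb : 0 < b) {x : ℝ}
    (hx : ∀ q : ℕ, q ≠ 0 →
      (fun n ↦ weylSum q b (Finset.range n) x) =o[atTop] fun n ↦ (n : ℝ)) :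
    SimplyNormal b x := by
  classical
  intro d hd
  have hb' : (0 : ℝ) < b := by exact_mod_cast hb
  have hb1 : 1 / (b : ℝ) ≤ 1 := (div_le_one hb').2 (by exact_mod_cast hb)
  have hd1 : (d + 1 : ℝ) / b ≤ 1 := (div_le_one hb').2 (by exact_mod_cast hd)
  have hlength : ((d : ℝ) + 1) / b - d / b = 1 / b := by ring
  let u : ℕ → UnitAddCircle := fun i ↦ ((b ^ i * x : ℝ) : UnitAddCircle)
  have hu (q : ℕ) (n : ℕ) :
      ∑ i ∈ Finset.range n, fourier (q : ℤ) (u i) = weylSum q b (Finset.range n) x := by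
    simp only [u, weylSum, fourier_coe_eq_fourierChar, Int.cast_natCast, mul_assoc]
  have hmem (i : ℕ) : u i ∈ circleArc (d / b) ((d + 1) / b) ↔ rdigit b x i = d := by
    rw [coe_mem_circleArc_iff (by positivity) hd1, rdigit_eq_iff hb]
  have harc := tendsto_empiricalMeasure_circleArc (u := u) (a := d / b) (b := (d + 1) / b)
    (by simpa only [hu] using hx) (by linarith [one_div_pos.2 hb']) (by linarith)
  simp only [measureReal_empiricalMeasure, hmem, ← count_rdigits, hlength] at harc
  rwa [tendsto_add_atTop_iff_nat (f := fun n : ℕ ↦ ((rdigits b x n).count d : ℝ) / n) 1] at harc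

end Digits

section SecondMoment

variable {a b : ℝ}

theorem norm_integral_fourierChar_mul_le {w : ℝ} (hw : w ≠ 0) :
    ‖∫ y in a..b, (𝐞 (w * y) : ℂ)‖ ≤ 1 / |w| := by
  have hc : (2 * Real.pi * w * Complex.I : ℂ) ≠ 0 := by simp [hw, Real.pi_ne_zero]
  have hexp (y : ℝ) : (𝐞 (w * y) : ℂ) = Complex.exp (2 * Real.pi * w * Complex.I * y) := by
    rw [Real.fourierChar_apply]
    push_cast
    ring_nf
  have hnorm : ‖(2 * Real.pi * w * Complex.I : ℂ)‖ = 2 * Real.pi * |w| := by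
    simp [abs_of_pos Real.pi_pos]
  have hnum : ‖(𝐞 (w * b) : ℂ) - 𝐞 (w * a)‖ ≤ 2 := by
    refine (norm_sub_le _ _).trans ?_
    rw [Circle.norm_coe, Circle.norm_coe, one_add_one_eq_two]
  simp_rw [hexp]
  rw [integral_exp_mul_complex hc, ← hexp, ← hexp, norm_div, hnorm,
    div_le_div_iff₀ (by positivity) (by positivity), one_mul]
  gcongr
  nlinarith [Real.pi_gt_three]

theorem sum_half_pow_le_two_of_injOn {ι : Type*} {s : Finset ι} {f : ι → ℕ} (hf : InjOn f s) :
    ∑ i ∈ s, (1 / 2 : ℝ) ^ f i ≤ 2 := by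
  rw [← Finset.sum_image (f := fun n ↦ (1 / 2 : ℝ) ^ n) hf]
  exact (summable_geometric_two.sum_le_tsum _ fun n _ ↦ by positivity).trans_eq tsum_geometric_two

theorem sum_half_pow_dist_le_four (s : Finset ℕ) (i : ℕ) :
    ∑ j ∈ s, (1 / 2 : ℝ) ^ Nat.dist i j ≤ 4 := by
  rw [← Finset.sum_filter_add_sum_filter_not s (· ≤ i), show (4 : ℝ) = 2 + 2 by norm_num]
  gcongr <;> refine sum_half_pow_le_two_of_injOn fun j hj k hk hjk ↦ ?_ <;>
  · simp only [Finset.coe_filter, mem_ofPred_eq, Nat.dist] at hj hk hjk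
    omega

theorem integral_norm_sum_fourierChar_sq (s : Finset ℕ) (w : ℕ → ℝ) :
    ((∫ y in a..b, ‖∑ i ∈ s, (𝐞 (w i * y) : ℂ)‖ ^ 2 : ℝ) : ℂ)
      = ∑ i ∈ s, ∑ j ∈ s, ∫ y in a..b, (𝐞 ((w i - w j) * y) : ℂ) := by
  have hprod (i j : ℕ) (y : ℝ) :
      (𝐞 (w i * y) : ℂ) * conj (𝐞 (w j * y) : ℂ) = 𝐞 ((w i - w j) * y) := by
    rw [← Circle.coe_inv_eq_conj, ← AddChar.map_neg_eq_inv, ← Circle.coe_mul,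
      ← AddChar.map_add_eq_mul]
    ring_nf
  have hexpand (y : ℝ) : ((‖∑ i ∈ s, (𝐞 (w i * y) : ℂ)‖ ^ 2 : ℝ) : ℂ)
      = ∑ i ∈ s, ∑ j ∈ s, (𝐞 ((w i - w j) * y) : ℂ) := by
    simp only [← hprod]
    rw [← Finset.sum_mul_sum, ← map_sum, Complex.mul_conj, Complex.normSq_eq_norm_sq]
  have hcont (v : ℝ) : Continuous fun y ↦ (𝐞 (v * y) : ℂ) := by fun_prop
  rw [← intervalIntegral.integral_ofReal]
  simp_rw [hexpand]
  rw [intervalIntegral.integral_finsetSum fun i _ ↦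
    (continuous_finsetSum s fun j _ ↦ hcont (w i - w j)).intervalIntegrable a b]
  exact Finset.sum_congr rfl fun i _ ↦
    intervalIntegral.integral_finsetSum fun j _ ↦ (hcont _).intervalIntegrable a b

/-- Frequencies with geometrically growing gaps are almost orthogonal already on an interval whose
length is comparable to the inverse of the smallest gap. -/
theorem integral_norm_sum_fourierChar_sq_le {s : Finset ℕ} {w : ℕ → ℝ} {K : ℝ} (hab : a ≤ b)
    (hK : b - a ≤ K)
    (hw : ∀ i ∈ s, ∀ j ∈ s, i ≠ j → 2 ^ Nat.dist i j ≤ K * |w i - w j|) :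
    ∫ y in a..b, ‖∑ i ∈ s, (𝐞 (w i * y) : ℂ)‖ ^ 2 ≤ 4 * K * s.card := by
  have hcorr : ∀ i ∈ s, ∀ j ∈ s,
      ‖∫ y in a..b, (𝐞 ((w i - w j) * y) : ℂ)‖ ≤ K * (1 / 2) ^ Nat.dist i j := by
    intro i hi j hj
    rcases eq_or_ne i j with rfl | hij
    · simpa [← Complex.ofReal_sub, abs_of_nonneg (sub_nonneg.2 hab)] using hK
    · have hgap := hw i hi j hj hij
      have hne : w i - w j ≠ 0 := by
        intro h
        rw [h, abs_zero, mul_zero] at hgap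
        exact hgap.not_gt (by positivity)
      refine (norm_integral_fourierChar_mul_le hne).trans ?_
      rwa [div_le_iff₀ (by positivity), one_div, inv_pow, mul_right_comm, ← div_eq_mul_inv,
        one_le_div (by positivity)]
  have hrow : ∀ i ∈ s, ‖∑ j ∈ s, ∫ y in a..b, (𝐞 ((w i - w j) * y) : ℂ)‖ ≤ K * 4 := by
    intro i hi
    refine (norm_sum_le_of_le s (hcorr i hi)).trans ?_
    rw [← Finset.mul_sum]
    exact mul_le_mul_of_nonneg_left (sum_half_pow_dist_le_four s i) ((sub_nonneg.2 hab).trans hK)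
  calc _ ≤ ‖∫ y in a..b, ‖∑ i ∈ s, (𝐞 (w i * y) : ℂ)‖ ^ 2‖ := Real.le_norm_self _
    _ = ‖∑ i ∈ s, ∑ j ∈ s, ∫ y in a..b, (𝐞 ((w i - w j) * y) : ℂ)‖ := by
      rw [← integral_norm_sum_fourierChar_sq, Complex.norm_real]
    _ ≤ s.card • (K * 4) := (norm_sum_le_of_le s hrow).trans_eq (Finset.sum_const _)
    _ = 4 * K * s.card := by rw [nsmul_eq_mul]; ring

theorem two_pow_dist_le_mul_abs_pow_sub_pow {c i j : ℕ} {L : ℝ} (hc : 2 ≤ c) (hL : 0 < L)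
    (hi : L ≤ c ^ i) (hj : L ≤ c ^ j) (hij : i ≠ j) :
    (2 : ℝ) ^ Nat.dist i j ≤ 2 / L * |(c : ℝ) ^ i - c ^ j| := by
  wlog hlt : i < j generalizing i j
  · rw [Nat.dist_comm, abs_sub_comm]
    exact this hj hi hij.symm (by omega)
  obtain ⟨d, rfl⟩ := Nat.exists_eq_add_of_lt hlt
  have hc' : (2 : ℝ) ≤ c := by exact_mod_cast hc
  have hpow : (2 : ℝ) ^ (d + 1) ≤ c ^ (d + 1) := by gcongr
  have htwo : (1 : ℝ) ≤ 2 ^ d := one_le_pow₀ one_le_two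
  have hdist : Nat.dist i (i + d + 1) = d + 1 := by simp only [Nat.dist]; omega
  rw [hdist, div_mul_eq_mul_div, le_div_iff₀ hL]
  calc (2 : ℝ) ^ (d + 1) * L ≤ 2 * (c ^ (d + 1) - 1) * c ^ i := by
        have hsucc : (2 : ℝ) ^ (d + 1) ≤ 2 * (c ^ (d + 1) - 1) := by linarith [pow_succ (2 : ℝ) d]
        exact mul_le_mul hsucc hi hL.le (by linarith [pow_succ (2 : ℝ) d])
    _ = 2 * (c ^ (i + d + 1) - c ^ i) := by ring
    _ ≤ 2 * |(c : ℝ) ^ i - c ^ (i + d + 1)| := by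
      rw [abs_sub_comm]
      gcongr
      exact le_abs_self _

theorem integral_norm_weylSum_sq_le {q c : ℕ} {s : Finset ℕ} {L : ℝ} (hq : q ≠ 0) (hc : 2 ≤ c)
    (hL : 0 < L) (hs : ∀ i ∈ s, L ≤ (c : ℝ) ^ i) (hab : a ≤ b) (hba : b - a ≤ 2 / L) :
    ∫ y in a..b, ‖weylSum q c s y‖ ^ 2 ≤ 8 / L * s.card := by
  have hq' : (1 : ℝ) ≤ q := by exact_mod_cast Nat.one_le_iff_ne_zero.2 hq
  refine (integral_norm_sum_fourierChar_sq_le hab hba fun i hi j hj hij ↦ ?_).trans_eq (by ring)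
  refine (two_pow_dist_le_mul_abs_pow_sub_pow hc hL (hs i hi) (hs j hj) hij).trans ?_
  rw [← mul_sub, abs_mul, Nat.abs_cast]
  gcongr
  exact le_mul_of_one_le_left (abs_nonneg _) hq'

theorem exists_forall_mem_le_of_integral_le {ι : Type*} {s : Finset ι} {F : ι → ℝ → ℝ} {M B : ℝ}
    (hab : a < b) (hF : ∀ i ∈ s, Continuous (F i)) (hF_nonneg : ∀ i ∈ s, ∀ y, 0 ≤ F i y)
    (hM : ∀ i ∈ s, ∫ y in a..b, F i y ≤ M) (hB : s.card * M ≤ (b - a) * B) :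
    ∃ y ∈ Icc a b, ∀ i ∈ s, F i y ≤ B := by
  have hcont : Continuous fun y ↦ ∑ i ∈ s, F i y := continuous_finsetSum s hF
  have hint : ∫ y in a..b, ∑ i ∈ s, F i y ≤ (b - a) * B := by
    rw [intervalIntegral.integral_finsetSum fun i hi ↦ (hF i hi).intervalIntegrable a b]
    refine (Finset.sum_le_card_nsmul s _ M hM).trans ?_
    rwa [nsmul_eq_mul]
  have havg : ⨍ y in Icc a b, ∑ i ∈ s, F i y ≤ B := by
    rw [setAverage_eq, integral_Icc_eq_integral_Ioc, ← intervalIntegral.integral_of_le hab.le,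
      Real.volume_real_Icc_of_le hab.le, smul_eq_mul, inv_mul_le_iff₀ (sub_pos.2 hab)]
    exact hint
  obtain ⟨y, hy, hle⟩ := exists_le_setAverage (μ := volume) (s := Icc a b)
    (by simp [hab]) (by simp) hcont.continuousOn.integrableOn_Icc
  exact ⟨y, hy, fun i hi ↦
    (Finset.single_le_sum (fun j hj ↦ hF_nonneg j hj y) hi).trans (hle.trans havg)⟩

end SecondMoment

section DigitIndex

variable {b : ℕ} {T T' : ℝ}

/-- The first digit position to base `b` at which the resolution `b ^ (-i)` has become as small
as `exp (-T)`. The base-independent scale `T` allows all bases to be treated at once. -/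
noncomputable def digitIndex (b : ℕ) (T : ℝ) : ℕ := ⌈T / Real.log b⌉₊

theorem two_thirds_le_log (hb : 2 ≤ b) : 2 / 3 ≤ Real.log b := by
  have hlog : Real.log 2 ≤ Real.log b := Real.log_le_log two_pos (by exact_mod_cast hb)
  linarith [Real.log_two_gt_d9]

theorem digitIndex_le_iff (hb : 2 ≤ b) {i : ℕ} : digitIndex b T ≤ i ↔ Real.exp T ≤ (b : ℝ) ^ i := by
  have hlog : 0 < Real.log b := by linarith [two_thirds_le_log hb]
  rw [digitIndex, Nat.ceil_le, div_le_iff₀ hlog, ← Real.exp_le_exp, Real.exp_nat_mul,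
    Real.exp_log (by positivity)]

theorem digitIndex_mono (b : ℕ) : Monotone (digitIndex b) := fun _ _ h ↦
  Nat.ceil_mono (div_le_div_of_nonneg_right h (Real.log_natCast_nonneg b))

theorem pow_digitIndex_le (hb : 2 ≤ b) (hT : 0 ≤ T) :
    (b : ℝ) ^ digitIndex b T ≤ b * Real.exp T := by
  have hb' : (1 : ℝ) ≤ b := by exact_mod_cast one_le_two.trans hb
  rcases h : digitIndex b T with _ | i
  · simpa using one_le_mul_of_one_le_of_one_le hb' (Real.one_le_exp hT)
  · have hi : (b : ℝ) ^ i < Real.exp T := by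
      rw [← not_le, ← digitIndex_le_iff hb]
      omega
    rw [pow_succ']
    gcongr

theorem digitIndex_sub_digitIndex_le (hb : 2 ≤ b) (hT : T ≤ T') (hT' : 0 ≤ T') :
    (digitIndex b T' : ℝ) - digitIndex b T ≤ 3 / 2 * (T' - T) + 1 := by
  have hlog := two_thirds_le_log hb
  have hlt := Nat.ceil_lt_add_one (div_nonneg hT' (by linarith : 0 ≤ Real.log b))
  have hle := Nat.le_ceil (T / Real.log b)
  have hdiv : (T' - T) / Real.log b ≤ 3 / 2 * (T' - T) := by
    rw [div_le_iff₀ (by linarith)]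
    nlinarith
  rw [sub_div] at hdiv
  simp only [digitIndex]
  linarith

theorem div_log_sub_one_le_digitIndex_pred (b : ℕ) (T : ℝ) :
    T / Real.log b - 1 ≤ (digitIndex b T - 1 : ℕ) := by
  refine (sub_le_sub_right (Nat.le_ceil _) 1).trans ?_
  rw [sub_le_iff_le_add]
  exact_mod_cast Nat.le_add_of_sub_le le_rfl

theorem digitIndex_pred_le_div_log (b : ℕ) (hT : 0 ≤ T) :
    ((digitIndex b T - 1 : ℕ) : ℝ) ≤ T / Real.log b := by
  refine (Nat.cast_le.2 ?_).trans (Nat.floor_le (div_nonneg hT (Real.log_natCast_nonneg b)))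
  exact Nat.sub_le_iff_le_add.2 (Nat.ceil_le_floor_add_one _)

theorem rdigit_eq_zero_of_mem_Ico (hb : 0 < b) {p : ℤ} {N i : ℕ} (hNi : N ≤ i) {x : ℝ}
    (hx : x ∈ Ico (p / (b : ℝ) ^ N) (p / (b : ℝ) ^ N + 1 / (b : ℝ) ^ (i + 1))) :
    rdigit b x i = 0 := by
  have hb' : (1 : ℝ) ≤ b := by exact_mod_cast hb
  obtain ⟨d, rfl⟩ := Nat.exists_eq_add_of_le hNi
  set t := (b : ℝ) ^ (N + d) * (x - p / (b : ℝ) ^ N) with ht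
  have ht0 : 0 ≤ t := mul_nonneg (by positivity) (by linarith [hx.1])
  have htb : t < 1 / b := by
    calc t < (b : ℝ) ^ (N + d) * (1 / (b : ℝ) ^ (N + d + 1)) :=
          mul_lt_mul_of_pos_left (by linarith [hx.2]) (by positivity)
      _ = 1 / b := by rw [pow_succ]; field_simp
  have ht1 : t < 1 := htb.trans_le ((div_le_one (by positivity)).2 hb')
  have hsplit : (b : ℝ) ^ (N + d) * x = t + ((p * (b : ℤ) ^ d : ℤ) : ℝ) := by
    rw [ht]
    push_cast
    field_simp
    ring
  rw [rdigit_eq_iff hb, hsplit, Int.fract_add_intCast, Int.fract_eq_self.2 ⟨ht0, ht1⟩]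
  simpa using And.intro ht0 htb

theorem rdigit_eq_zero_of_mem_Icc (hb : 2 ≤ b) {p : ℤ} {N i : ℕ}
    (hi : i ∈ Ico N (digitIndex b T - 1)) {x : ℝ}
    (hx : x ∈ Icc (p / (b : ℝ) ^ N) (p / (b : ℝ) ^ N + Real.exp (-T))) : rdigit b x i = 0 := by
  refine rdigit_eq_zero_of_mem_Ico (by omega) hi.1 ⟨hx.1, hx.2.trans_lt ?_⟩
  have hlt : (b : ℝ) ^ (i + 1) < Real.exp T := by
    rw [← not_le, ← digitIndex_le_iff hb]
    have := hi.2
    omega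
  rw [Real.exp_neg, ← one_div]
  gcongr

end DigitIndex

section WeylSum

variable {q c n : ℕ} {s : Finset ℕ} {x y : ℝ}

theorem norm_weylSum_le_card (q c : ℕ) (s : Finset ℕ) (x : ℝ) : ‖weylSum q c s x‖ ≤ s.card := by
  refine (norm_sum_le _ _).trans_eq ?_
  simp only [Circle.norm_coe, Finset.sum_const, nsmul_eq_mul, mul_one]

theorem norm_fourierChar_sub_le (x y : ℝ) :
    ‖(𝐞 x : ℂ) - 𝐞 y‖ ≤ 2 * Real.pi * |x - y| := by
  have hfactor : (𝐞 x : ℂ) - 𝐞 y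
      = 𝐞 y * (Complex.exp (Complex.I * (2 * Real.pi * (x - y) : ℝ)) - 1) := by
    rw [mul_sub, mul_one, Real.fourierChar_apply, Real.fourierChar_apply, ← Complex.exp_add]
    push_cast
    ring_nf
  rw [hfactor, norm_mul, Circle.norm_coe, one_mul]
  refine (Real.norm_exp_I_mul_ofReal_sub_one_le).trans_eq ?_
  rw [norm_mul, Real.norm_of_nonneg Real.two_pi_pos.le, Real.norm_eq_abs]

theorem norm_weylSum_sub_le (hc : 2 ≤ c) (hs : ∀ i ∈ s, i < n) :
    ‖weylSum q c s x - weylSum q c s y‖ ≤ 2 * Real.pi * q * (c : ℝ) ^ n * |x - y| := by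
  have hterm : ∀ i ∈ s, ‖(𝐞 (q * c ^ i * x) : ℂ) - 𝐞 (q * c ^ i * y)‖
      ≤ 2 * Real.pi * q * |x - y| * (c : ℝ) ^ i := by
    intro i _
    refine (norm_fourierChar_sub_le _ _).trans_eq ?_
    rw [← mul_sub, abs_mul, abs_of_nonneg (by positivity)]
    ring
  have hgeom : ∑ i ∈ s, (c : ℝ) ^ i ≤ (c : ℝ) ^ n := by
    exact_mod_cast (Nat.geomSum_lt hc hs).le
  rw [weylSum, weylSum, ← Finset.sum_sub_distrib]
  calc _ ≤ ∑ i ∈ s, 2 * Real.pi * q * |x - y| * (c : ℝ) ^ i := norm_sum_le_of_le s hterm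
    _ ≤ 2 * Real.pi * q * |x - y| * (c : ℝ) ^ n := by
      rw [← Finset.mul_sum]
      gcongr
    _ = _ := by ring

end WeylSum

section Step

/-- The logarithmic scale reached from `T` by one step of the construction with slack `n`: over the
part of relative length `1 / n` the point is chosen generically, over the part of relative length
`1 / n ^ 2` its digits to one base vanish. -/
noncomputable def nextScale (n : ℕ) (T : ℝ) : ℝ := T + T / n + T / (n : ℝ) ^ 2

theorem le_nextScale (n : ℕ) {T : ℝ} (hT : 0 ≤ T) : T ≤ nextScale n T := by
  rw [nextScale, add_assoc]
  exact le_add_of_nonneg_right (by positivity)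

theorem nextScale_le {n : ℕ} (hn : 1 ≤ n) {T : ℝ} (hT : 0 ≤ T) : nextScale n T ≤ 3 * T := by
  have hn' : (1 : ℝ) ≤ n := by exact_mod_cast hn
  have hlin : T / n ≤ T := div_le_self hT hn'
  have hsq : T / (n : ℝ) ^ 2 ≤ T := div_le_self hT (one_le_pow₀ hn')
  rw [nextScale]
  linarith

/-- The interval `[a', a' + exp (-nextScale n T)]` refines `[a, a + exp (-T)]` in such a way that
every point in it has a long run of zeros in its base `b` expansion, while its exponential sums
to all bases up to `s + 1` with frequencies up to `s` remain small. -/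
structure IsRefinement (s n b : ℕ) (a T a' : ℝ) : Prop where
  le_left : a ≤ a'
  right_le : a' + Real.exp (-nextScale n T) ≤ a + Real.exp (-T)
  exists_zero_run : ∃ N N' : ℕ, T ≤ b * N' ∧ (N : ℝ) ≤ (1 - 1 / (6 * (n : ℝ) ^ 2)) * N' ∧
    ∀ x ∈ Icc a' (a' + Real.exp (-nextScale n T)), ∀ i ∈ Ico N N', rdigit b x i = 0
  norm_weylSum_le : ∀ x ∈ Icc a' (a' + Real.exp (-nextScale n T)),
    ∀ c ∈ Finset.Icc 2 (s + 1), ∀ q ∈ Finset.Icc 1 s,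
      ‖weylSum q c (Finset.Ico (digitIndex c T) (digitIndex c (nextScale n T))) x‖
        ≤ 3 * (T / (n : ℝ) ^ 2)

variable {s n b : ℕ} {T T₁ T₂ B x y : ℝ}

theorem exists_norm_weylSum_le (s : ℕ) (a : ℝ) (hT : 0 ≤ T) (hT₁ : T ≤ T₁) (hB : 0 ≤ B)
    (hsB : 16 * (s : ℝ) ^ 2 * (3 / 2 * (T₁ - T) + 1) ≤ B ^ 2) :
    ∃ y ∈ Icc a (a + Real.exp (-T) / 2), ∀ c ∈ Finset.Icc 2 (s + 1), ∀ q ∈ Finset.Icc 1 s,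
      ‖weylSum q c (Finset.Ico (digitIndex c T) (digitIndex c T₁)) y‖ ≤ B := by
  have hexp := Real.exp_pos (-T)
  have hlength : a + Real.exp (-T) / 2 - a ≤ 2 / Real.exp T := by
    rw [add_sub_cancel_left, div_eq_mul_inv 2, ← Real.exp_neg]
    linarith
  have hmoment : ∀ p ∈ Finset.Icc 2 (s + 1) ×ˢ Finset.Icc 1 s,
      ∫ y in a..a + Real.exp (-T) / 2,
          ‖weylSum p.2 p.1 (Finset.Ico (digitIndex p.1 T) (digitIndex p.1 T₁)) y‖ ^ 2
        ≤ 8 / Real.exp T * (3 / 2 * (T₁ - T) + 1) := by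
    rintro ⟨c, q⟩ hp
    simp only [Finset.mem_product, Finset.mem_Icc] at hp ⊢
    refine (integral_norm_weylSum_sq_le (by omega) hp.1.1 (Real.exp_pos T) (fun i hi ↦ ?_)
      (by linarith) hlength).trans ?_
    · exact (digitIndex_le_iff hp.1.1).1 (Finset.mem_Ico.1 hi).1
    · rw [Nat.card_Ico, Nat.cast_sub (digitIndex_mono c hT₁)]
      gcongr
      exact digitIndex_sub_digitIndex_le hp.1.1 hT₁ (hT.trans hT₁)
  have hbound : ((Finset.Icc 2 (s + 1) ×ˢ Finset.Icc 1 s).card : ℝ)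
      * (8 / Real.exp T * (3 / 2 * (T₁ - T) + 1)) ≤ (a + Real.exp (-T) / 2 - a) * B ^ 2 := by
    have hcard : (Finset.Icc 2 (s + 1) ×ˢ Finset.Icc 1 s).card = s * s := by simp
    rw [hcard, add_sub_cancel_left, div_eq_mul_inv 8, ← Real.exp_neg]
    push_cast
    nlinarith [mul_le_mul_of_nonneg_left hsB hexp.le]
  obtain ⟨y, hy, hle⟩ := exists_forall_mem_le_of_integral_le (B := B ^ 2) (by linarith)
    (fun p _ ↦ by unfold weylSum; fun_prop) (fun p _ y ↦ by positivity) hmoment hbound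
  refine ⟨y, hy, fun c hc q hq ↦ ?_⟩
  exact abs_le_of_sq_le_sq' (hle (c, q) (Finset.mk_mem_product hc hq)) hB |>.2

theorem norm_weylSum_le_of_abs_sub_le {q c : ℕ} (hc : 2 ≤ c) (hT : T ≤ T₁) (hT₁ : T₁ ≤ T₂)
    (hT₁0 : 0 ≤ T₁) (hxy : |x - y| ≤ 2 * Real.exp (-T₁)) :
    ‖weylSum q c (Finset.Ico (digitIndex c T) (digitIndex c T₂)) x‖
      ≤ ‖weylSum q c (Finset.Ico (digitIndex c T) (digitIndex c T₁)) y‖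
        + 16 * q * c + (3 / 2 * (T₂ - T₁) + 1) := by
  have hlip : ‖weylSum q c (Finset.Ico (digitIndex c T) (digitIndex c T₁)) x
      - weylSum q c (Finset.Ico (digitIndex c T) (digitIndex c T₁)) y‖ ≤ 16 * q * c := by
    calc _ ≤ 2 * Real.pi * q * (c : ℝ) ^ digitIndex c T₁ * |x - y| :=
          norm_weylSum_sub_le hc fun i hi ↦ (Finset.mem_Ico.1 hi).2
      _ ≤ 2 * 4 * q * (c * Real.exp T₁) * (2 * Real.exp (-T₁)) := by
        gcongr
        · exact Real.pi_le_four
        · exact pow_digitIndex_le hc hT₁0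
      _ = 16 * q * c * (Real.exp T₁ * Real.exp (-T₁)) := by ring
      _ = 16 * q * c := by rw [← Real.exp_add, add_neg_cancel, Real.exp_zero, mul_one]
  have htail : ‖weylSum q c (Finset.Ico (digitIndex c T₁) (digitIndex c T₂)) x‖
      ≤ 3 / 2 * (T₂ - T₁) + 1 := by
    refine (norm_weylSum_le_card _ _ _ _).trans ?_
    rw [Nat.card_Ico, Nat.cast_sub (digitIndex_mono c hT₁)]
    exact digitIndex_sub_digitIndex_le hc hT₁ (hT₁0.trans hT₁)
  rw [weylSum, ← Finset.sum_Ico_consecutive _ (digitIndex_mono c hT) (digitIndex_mono c hT₁),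
    ← weylSum, ← weylSum]
  refine (norm_add_le _ _).trans ?_
  gcongr
  exact (norm_le_norm_add_norm_sub' _ _).trans (by gcongr)

theorem digitIndex_le_mul_digitIndex_pred (hb : 2 ≤ b) (hn : 1 ≤ n)
    (hbT : 4 * b ≤ T / (n : ℝ) ^ 2) :
    (digitIndex b (T + T / n) : ℝ)
      ≤ (1 - 1 / (6 * (n : ℝ) ^ 2)) * (digitIndex b (nextScale n T) - 1 : ℕ) := by
  have : (0 : ℝ) < n := by exact_mod_cast hn
  have hlog : 0 < Real.log b := by linarith [two_thirds_le_log hb]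
  have hlogb : Real.log b ≤ b := Real.log_le_self (by positivity)
  have hT : 0 < T := by
    have hquot : 0 < T / (n : ℝ) ^ 2 := by linarith
    exact (div_pos_iff_of_pos_right (by positivity)).1 hquot
  have hstart : (digitIndex b (T + T / n) : ℝ) < (T + T / n) / Real.log b + 1 :=
    Nat.ceil_lt_add_one (by positivity)
  have hlower := div_log_sub_one_le_digitIndex_pred b (nextScale n T)
  have hupper : ((digitIndex b (nextScale n T) - 1 : ℕ) : ℝ) ≤ 3 * T / Real.log b := by
    refine (digitIndex_pred_le_div_log b ?_).trans ?_
    · exact hT.le.trans (le_nextScale n hT.le)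
    · gcongr
      exact nextScale_le hn hT.le
  have hlong : 4 ≤ T / (n : ℝ) ^ 2 / Real.log b := by
    rw [le_div_iff₀ hlog]
    linarith
  have hloss : 1 / (6 * (n : ℝ) ^ 2) * (digitIndex b (nextScale n T) - 1 : ℕ)
      ≤ T / (n : ℝ) ^ 2 / Real.log b / 2 := by
    refine (mul_le_mul_of_nonneg_left hupper (by positivity)).trans_eq ?_
    field_simp
    ring
  rw [nextScale, add_div] at hlower
  rw [nextScale] at hloss ⊢
  linarith

theorem le_mul_digitIndex_pred (hb : 2 ≤ b) (hT : 0 ≤ T) (hbT : 4 * b ≤ T / (n : ℝ) ^ 2) :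
    T ≤ b * (digitIndex b (nextScale n T) - 1 : ℕ) := by
  have hlog : 0 < Real.log b := by linarith [two_thirds_le_log hb]
  have hlogb : Real.log b ≤ b := Real.log_le_self (by positivity)
  have hlower := div_log_sub_one_le_digitIndex_pred b (nextScale n T)
  rw [sub_le_iff_le_add, div_le_iff₀ hlog] at hlower
  have hquot : 0 ≤ T / (n : ℝ) := by positivity
  calc T ≤ nextScale n T - Real.log b := by rw [nextScale]; linarith
    _ ≤ (digitIndex b (nextScale n T) - 1 : ℕ) * Real.log b := by linarith
    _ ≤ b * (digitIndex b (nextScale n T) - 1 : ℕ) := by rw [mul_comm]; gcongr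

theorem exists_int_div_pow_mem_Icc (hb : 2 ≤ b) (y T : ℝ) :
    ∃ p : ℤ, p / (b : ℝ) ^ digitIndex b T ∈ Icc y (y + Real.exp (-T)) := by
  have hpow : 0 < (b : ℝ) ^ digitIndex b T := by positivity
  refine ⟨⌈y * (b : ℝ) ^ digitIndex b T⌉, ?_, ?_⟩
  · rw [le_div_iff₀ hpow]
    exact Int.le_ceil _
  · calc _ ≤ (y * (b : ℝ) ^ digitIndex b T + 1) / (b : ℝ) ^ digitIndex b T := by
          gcongr
          exact (Int.ceil_lt_add_one _).le
      _ = y + ((b : ℝ) ^ digitIndex b T)⁻¹ := by field_simp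
      _ ≤ y + Real.exp (-T) := by
          rw [Real.exp_neg]
          gcongr
          exact (digitIndex_le_iff hb).1 le_rfl

theorem four_mul_exp_neg_add_le {T u : ℝ} (hu : 3 ≤ u) :
    4 * Real.exp (-(T + u)) ≤ Real.exp (-T) := by
  calc 4 * Real.exp (-(T + u)) ≤ Real.exp u * Real.exp (-(T + u)) := by
        gcongr
        linarith [Real.add_one_le_exp u]
    _ = Real.exp (-T) := by rw [← Real.exp_add]; ring_nf

theorem mul_pow_four_le_div_sq (hn : 1 ≤ n) (hns : n ≤ s) (hT : 100 * (s : ℝ) ^ 6 ≤ T) :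
    100 * (s : ℝ) ^ 4 ≤ T / (n : ℝ) ^ 2 := by
  have : (0 : ℝ) < n := by exact_mod_cast hn
  rw [le_div_iff₀ (by positivity)]
  calc 100 * (s : ℝ) ^ 4 * (n : ℝ) ^ 2 ≤ 100 * (s : ℝ) ^ 4 * (s : ℝ) ^ 2 := by gcongr
    _ = 100 * (s : ℝ) ^ 6 := by ring
    _ ≤ T := hT

theorem mul_sq_mul_le_div_sq_sq (hn : 1 ≤ n) (hns : n ≤ s) (hT : 100 * (s : ℝ) ^ 6 ≤ T) :
    16 * (s : ℝ) ^ 2 * (3 / 2 * (T / n) + 1) ≤ (T / (n : ℝ) ^ 2) ^ 2 := by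
  have hn' : (1 : ℝ) ≤ n := by exact_mod_cast hn
  have hns' : (n : ℝ) ≤ s := by exact_mod_cast hns
  have hs : (1 : ℝ) ≤ s := hn'.trans hns'
  have hD := mul_pow_four_le_div_sq hn hns hT
  set D := T / (n : ℝ) ^ 2 with hDdef
  have hTn : T / n = n * D := by rw [hDdef]; field_simp
  have hD1 : 1 ≤ D := by nlinarith [one_le_pow₀ hs (n := 4)]
  rw [hTn]
  calc 16 * (s : ℝ) ^ 2 * (3 / 2 * (n * D) + 1) ≤ 16 * (s : ℝ) ^ 2 * (3 / 2 * (s * D) + s * D) := by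
        gcongr
        exact one_le_mul_of_one_le_of_one_le hs hD1
    _ = 40 * (s : ℝ) ^ 3 * D := by ring
    _ ≤ 100 * (s : ℝ) ^ 4 * D := by
        gcongr <;> first | assumption | norm_num
    _ ≤ D ^ 2 := by rw [sq D]; gcongr

/-- The lower bound on `T` makes the square-root cancellation at generic points of the interval
beat `T / n ^ 2`. -/
theorem exists_isRefinement (hn : 1 ≤ n) (hns : n ≤ s) (hb : 2 ≤ b) (hbs : b ≤ s + 1)
    (hT : 100 * (s : ℝ) ^ 6 ≤ T) (a : ℝ) : ∃ a', IsRefinement s n b a T a' := by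
  have hs : (1 : ℝ) ≤ s := by exact_mod_cast hn.trans hns
  have hbs' : (b : ℝ) ≤ s + 1 := by exact_mod_cast hbs
  have hD := mul_pow_four_le_div_sq hn hns hT
  have hss : (s : ℝ) ≤ s ^ 2 := le_self_pow₀ hs two_ne_zero
  have hs4 : (s : ℝ) ^ 2 ≤ s ^ 4 := pow_le_pow_right₀ hs (by norm_num)
  have hbD : 4 * b ≤ T / (n : ℝ) ^ 2 := by linarith
  have hT0 : 0 ≤ T := le_trans (by positivity) hT
  have hT₁ : T ≤ T + T / n := le_add_of_nonneg_right (by positivity)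
  have hT₂ : T + T / n ≤ nextScale n T := le_add_of_nonneg_right (by positivity)
  have hu : 3 ≤ T / n := by
    have hle : T / (n : ℝ) ^ 2 ≤ T / n := by
      gcongr
      exact le_self_pow₀ (by exact_mod_cast hn) two_ne_zero
    linarith
  have hexp : Real.exp (-nextScale n T) ≤ Real.exp (-(T + T / n)) := by gcongr
  have hexp' := four_mul_exp_neg_add_le (T := T) hu
  obtain ⟨y, ⟨hay, hya⟩, hsum⟩ := exists_norm_weylSum_le (B := T / (n : ℝ) ^ 2) s a hT0 hT₁
    (by positivity) (by simpa only [add_sub_cancel_left] using mul_sq_mul_le_div_sq_sq hn hns hT)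
  obtain ⟨p, hyp, hpy⟩ := exists_int_div_pow_mem_Icc hb y (T + T / n)
  refine ⟨p / (b : ℝ) ^ digitIndex b (T + T / n), hay.trans hyp, by linarith,
    ⟨_, _, le_mul_digitIndex_pred hb hT0 hbD, digitIndex_le_mul_digitIndex_pred hb hn hbD,
      fun x hx i hi ↦ rdigit_eq_zero_of_mem_Icc hb hi hx⟩, fun x hx c hc q hq ↦ ?_⟩
  have hxy : |x - y| ≤ 2 * Real.exp (-(T + T / n)) := by
    rw [abs_le]
    constructor <;> linarith [hx.1, hx.2]
  have hq' : (q : ℝ) ≤ s := by exact_mod_cast (Finset.mem_Icc.1 hq).2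
  have hc' : (c : ℝ) ≤ s + 1 := by exact_mod_cast (Finset.mem_Icc.1 hc).2
  have hqc : (q : ℝ) * c ≤ s * (s + 1) := by gcongr
  have htransfer := norm_weylSum_le_of_abs_sub_le (q := q) (Finset.mem_Icc.1 hc).1 hT₁ hT₂
    (hT0.trans hT₁) hxy
  have hlength : nextScale n T - (T + T / n) = T / (n : ℝ) ^ 2 := add_sub_cancel_left _ _
  rw [hlength] at htransfer
  linarith [hsum c hc q hq]

end Step

section Construction

/-- A bound on the bases, frequencies and slacks that are handled at stage `k`. It grows to
infinity slowly enough for `exists_isRefinement` to apply at every stage. -/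
noncomputable def precision (k : ℕ) : ℕ := Nat.nthRoot 6 (k + 1)

/-- The base to which a run of zeros is inserted at stage `k`; every base recurs. -/
noncomputable def stageBase (k : ℕ) : ℕ := min ((Nat.unpair k).1 + 2) (precision k + 1)

/-- The slack used at stage `k` when `h k` is requested: a bounded slack at infinitely many stages
for a base spoils normality to that base, a slack tending to infinity preserves it. -/
noncomputable def slack (h : ℕ → ℕ) (k : ℕ) : ℕ := min (h k + 1) (precision k)

/-- The logarithmic scale of the `k`-th interval of the construction. -/
noncomputable def scale (h : ℕ → ℕ) : ℕ → ℝ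
  | 0 => 100
  | k + 1 => nextScale (slack h k) (scale h k)

/-- The left endpoint of the `k`-th interval of the construction. -/
noncomputable def leftEndpoint (h : ℕ → ℕ) : ℕ → ℝ
  | 0 => 0
  | k + 1 => Classical.epsilon
      (IsRefinement (precision k) (slack h k) (stageBase k) (leftEndpoint h k) (scale h k))

/-- The `k`-th of the nested intervals that are constructed from the requests `h`. -/
noncomputable def stageInterval (h : ℕ → ℕ) (k : ℕ) : Set ℝ :=
  Icc (leftEndpoint h k) (leftEndpoint h k + Real.exp (-scale h k))

/-- The real number determined by the nested intervals that are constructed from `h`. -/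
noncomputable def limitPoint (h : ℕ → ℕ) : ℝ := ⨆ k, leftEndpoint h k

theorem one_le_precision (k : ℕ) : 1 ≤ precision k :=
  (Nat.le_nthRoot_iff (by norm_num)).2 (by simp)

theorem precision_pow_le (k : ℕ) : precision k ^ 6 ≤ k + 1 :=
  (Nat.le_nthRoot_iff (by norm_num)).1 le_rfl

theorem tendsto_precision_atTop : Tendsto precision atTop atTop := by
  refine tendsto_atTop.2 fun s ↦ ?_
  filter_upwards [eventually_ge_atTop (s ^ 6)] with k hk
  exact (Nat.le_nthRoot_iff (by norm_num)).2 (hk.trans k.le_succ)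

theorem one_le_slack (h : ℕ → ℕ) (k : ℕ) : 1 ≤ slack h k :=
  le_min (Nat.le_add_left _ _) (one_le_precision k)

theorem slack_le_precision (h : ℕ → ℕ) (k : ℕ) : slack h k ≤ precision k := min_le_right _ _

theorem mul_add_one_le_scale (h : ℕ → ℕ) (k : ℕ) : 100 * ((k : ℝ) + 1) ≤ scale h k := by
  induction k with
  | zero => simp [scale]
  | succ k ih =>
    have hslack : (1 : ℝ) ≤ slack h k := by exact_mod_cast one_le_slack h k
    have hslack_le : (slack h k : ℝ) ≤ k + 1 := by
      exact_mod_cast (slack_le_precision h k).trans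
        ((Nat.le_self_pow (by norm_num) _).trans (precision_pow_le k))
    have hrandom : 100 ≤ scale h k / slack h k := by
      rw [le_div_iff₀ (by positivity)]
      linarith
    have hrun : 0 ≤ scale h k / (slack h k : ℝ) ^ 2 := div_nonneg (by linarith) (by positivity)
    rw [scale, nextScale]
    push_cast
    linarith

theorem scale_pos (h : ℕ → ℕ) (k : ℕ) : 0 < scale h k :=
  lt_of_lt_of_le (by positivity) (mul_add_one_le_scale h k)

theorem natCast_le_scale (h : ℕ → ℕ) (k : ℕ) : (k : ℝ) ≤ scale h k := by
  linarith [mul_add_one_le_scale h k, k.cast_nonneg (α := ℝ)]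

theorem tendsto_scale_atTop (h : ℕ → ℕ) : Tendsto (scale h) atTop atTop :=
  tendsto_atTop_mono (natCast_le_scale h) tendsto_natCast_atTop_atTop

theorem isRefinement_leftEndpoint (h : ℕ → ℕ) (k : ℕ) :
    IsRefinement (precision k) (slack h k) (stageBase k) (leftEndpoint h k) (scale h k)
      (leftEndpoint h (k + 1)) := by
  have hpow : 100 * (precision k : ℝ) ^ 6 ≤ scale h k := by
    refine le_trans ?_ (mul_add_one_le_scale h k)
    gcongr
    exact_mod_cast precision_pow_le k
  have hbase : 2 ≤ stageBase k :=
    le_min (Nat.le_add_left _ _) (Nat.succ_le_succ (one_le_precision k))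
  exact Classical.epsilon_spec (exists_isRefinement (one_le_slack h k) (slack_le_precision h k)
    hbase (min_le_right _ _) hpow _)

theorem antitone_stageInterval (h : ℕ → ℕ) : Antitone (stageInterval h) :=
  antitone_nat_of_succ_le fun k ↦ Icc_subset_Icc (isRefinement_leftEndpoint h k).le_left
    (isRefinement_leftEndpoint h k).right_le

theorem limitPoint_mem_stageInterval (h : ℕ → ℕ) (k : ℕ) : limitPoint h ∈ stageInterval h k :=
  mem_iInter.1 (ciSup_mem_iInter_Icc_of_antitone_Icc (antitone_stageInterval h)
    fun _ ↦ le_add_of_nonneg_right (Real.exp_pos _).le) k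

theorem isLocallyConstant_scale (k : ℕ) : IsLocallyConstant fun h ↦ scale h k := by
  induction k with
  | zero => exact .const _
  | succ k ih =>
    exact ((IsLocallyConstant.iff_continuous _).2 (continuous_apply k)).comp₂ ih
      fun m T ↦ nextScale (min (m + 1) (precision k)) T

theorem isLocallyConstant_leftEndpoint (k : ℕ) : IsLocallyConstant fun h ↦ leftEndpoint h k := by
  induction k with
  | zero => exact .const _
  | succ k ih =>
    exact (((IsLocallyConstant.iff_continuous _).2 (continuous_apply k)).prodMk ih).comp₂
      (isLocallyConstant_scale k) fun p T ↦ Classical.epsilon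
        (IsRefinement (precision k) (min (p.1 + 1) (precision k)) (stageBase k) p.2 T)

theorem continuous_limitPoint : Continuous limitPoint := by
  have hunif : TendstoUniformly (fun k h ↦ leftEndpoint h k) limitPoint atTop := by
    refine Metric.tendstoUniformly_iff.2 fun ε hε ↦ ?_
    have hexp := Real.tendsto_exp_neg_atTop_nhds_zero.comp (tendsto_natCast_atTop_atTop (R := ℝ))
    filter_upwards [hexp.eventually_lt_const hε] with k hk h
    obtain ⟨hleft, hright⟩ := limitPoint_mem_stageInterval h k
    rw [Real.dist_eq, abs_of_nonneg (sub_nonneg.2 hleft)]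
    calc _ ≤ Real.exp (-scale h k) := sub_le_iff_le_add'.2 hright
      _ ≤ Real.exp (-k) := by
        gcongr
        exact natCast_le_scale h k
      _ < ε := hk
  exact hunif.continuous (.of_forall fun k ↦ (isLocallyConstant_leftEndpoint k).continuous)

end Construction

section Blocks

variable {E : Type*} [NormedAddCommGroup E] {z : ℕ → E} {m : ℕ → ℕ}

theorem isLittleO_sum_range_of_subsequence (hz : ∀ i, ‖z i‖ ≤ 1) (hm : Monotone m)
    (hm_top : Tendsto m atTop atTop)
    (hgap : (fun k ↦ (m (k + 1) : ℝ) - m k) =o[atTop] fun k ↦ (m k : ℝ))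
    (hsum : (fun k ↦ ∑ i ∈ Finset.range (m k), z i) =o[atTop] fun k ↦ (m k : ℝ)) :
    (fun n ↦ ∑ i ∈ Finset.range n, z i) =o[atTop] fun n ↦ (n : ℝ) := by
  refine isLittleO_iff.2 fun ε hε ↦ ?_
  obtain ⟨K, hK⟩ := eventually_atTop.1
    ((isLittleO_iff.1 hgap (half_pos hε)).and (isLittleO_iff.1 hsum (half_pos hε)))
  filter_upwards [eventually_ge_atTop (m K)] with n hn
  have hunbounded : ¬BddAbove (m '' Ici K) := fun ⟨B, hB⟩ ↦ by
    obtain ⟨k, hBk, hKk⟩ := ((hm_top.eventually_gt_atTop B).and (eventually_ge_atTop K)).exists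
    exact hBk.not_ge (hB ⟨k, hKk, rfl⟩)
  obtain ⟨k, hkn, hKk, hnk⟩ : ∃ k, m k ≤ n ∧ K ≤ k ∧ n < m (k + 1) := by
    simpa using (biUnion_Ici_Ico_map_succ (fun i hi ↦ hm hi) hunbounded).superset hn
  obtain ⟨hgapk, hsumk⟩ := hK k hKk
  have hkn' : (m k : ℝ) ≤ n := by exact_mod_cast hkn
  have hnk' : (n : ℝ) ≤ m (k + 1) := by exact_mod_cast hnk.le
  simp only [Real.norm_natCast] at hgapk hsumk ⊢
  rw [← Finset.sum_range_add_sum_Ico _ hkn]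
  calc _ ≤ ε / 2 * m k + ((n : ℝ) - m k) := by
        refine (norm_add_le _ _).trans (add_le_add hsumk ?_)
        refine (norm_sum_le_of_le _ fun i _ ↦ hz i).trans_eq ?_
        rw [Finset.sum_const, Nat.card_Ico, nsmul_one, Nat.cast_sub hkn]
    _ ≤ ε / 2 * m k + ε / 2 * m k := by
        gcongr
        exact (sub_le_sub_right hnk' _).trans ((le_abs_self _).trans hgapk)
    _ ≤ ε * n := by rw [← add_mul, add_halves]; gcongr

theorem isLittleO_sum_range_of_blocks {T : ℕ → ℝ} (hz : ∀ i, ‖z i‖ ≤ 1) (hm : Monotone m)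
    (hT : Monotone T) (hT_top : Tendsto T atTop atTop)
    (hTm : T =O[atTop] fun k ↦ (m k : ℝ))
    (hgap : (fun k ↦ (m (k + 1) : ℝ) - m k) =o[atTop] T)
    (hblock : (fun k ↦ ∑ i ∈ Finset.Ico (m k) (m (k + 1)), z i)
      =o[atTop] fun k ↦ T (k + 1) - T k) :
    (fun n ↦ ∑ i ∈ Finset.range n, z i) =o[atTop] fun n ↦ (n : ℝ) := by
  have hnorm_top : Tendsto (fun k ↦ ‖T k‖) atTop atTop := tendsto_norm_atTop_atTop.comp hT_top
  have htelescope : (fun k ↦ ∑ j ∈ Finset.range k, (T (j + 1) - T j)) =O[atTop] T := by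
    simp only [Finset.sum_range_sub]
    exact (isBigO_refl T atTop).sub (isLittleO_const_left.2 (.inr hnorm_top)).isBigO
  have hsum_top : Tendsto (fun k ↦ ∑ j ∈ Finset.range k, (T (j + 1) - T j)) atTop atTop := by
    simp only [Finset.sum_range_sub]
    exact tendsto_atTop_add_const_right _ _ hT_top
  have hblocks (k : ℕ) : ∑ i ∈ Finset.range (m k), z i = ∑ i ∈ Finset.range (m 0), z i
      + ∑ j ∈ Finset.range k, ∑ i ∈ Finset.Ico (m j) (m (j + 1)), z i := by
    simp only [fun j : ℕ ↦ Finset.sum_Ico_eq_sub z (hm j.le_succ)]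
    rw [Finset.sum_range_sub fun j ↦ ∑ i ∈ Finset.range (m j), z i, add_sub_cancel]
  have hm_top : Tendsto m atTop atTop := by
    have := hTm.trans_tendsto_norm_atTop hnorm_top
    simpa only [Real.norm_natCast, tendsto_natCast_atTop_iff] using this
  refine isLittleO_sum_range_of_subsequence hz hm hm_top (hgap.trans_isBigO hTm) ?_
  rw [funext hblocks]
  refine ((isLittleO_const_left.2 (.inr hnorm_top)).add ?_).trans_isBigO hTm
  exact (hblock.sum_range (fun k ↦ sub_nonneg.2 (hT k.le_succ)) hsum_top).trans_isBigO htelescope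

end Blocks

section Normality

theorem tendsto_slack_atTop {h : ℕ → ℕ} (hh : Tendsto h atTop atTop) :
    Tendsto (slack h) atTop atTop := by
  refine tendsto_atTop.2 fun s ↦ ?_
  filter_upwards [hh.eventually_ge_atTop s, tendsto_precision_atTop.eventually_ge_atTop s]
    with k hs hprec
  exact le_min (hs.trans (Nat.le_succ _)) hprec

theorem monotone_scale (h : ℕ → ℕ) : Monotone (scale h) :=
  monotone_nat_of_le_succ fun k ↦ le_nextScale _ (scale_pos h k).le

theorem scale_sub_scale_isLittleO {h : ℕ → ℕ} (hh : Tendsto h atTop atTop) :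
    (fun k ↦ scale h (k + 1) - scale h k) =o[atTop] scale h := by
  have hinv := (tendsto_inv_atTop_nhds_zero_nat (𝕜 := ℝ)).comp (tendsto_slack_atTop hh)
  have hfactor : (fun k ↦ (slack h k : ℝ)⁻¹ + (slack h k : ℝ)⁻¹ ^ 2) =o[atTop] fun _ ↦ (1 : ℝ) :=
    (isLittleO_one_iff ℝ).2 (by simpa using hinv.add (hinv.pow 2))
  refine (hfactor.mul_isBigO (isBigO_refl (scale h) atTop)).congr (fun k ↦ ?_) fun k ↦ one_mul _
  rw [scale, nextScale]
  ring

theorem scale_isBigO_digitIndex (h : ℕ → ℕ) {c : ℕ} (hc : 2 ≤ c) :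
    scale h =O[atTop] fun k ↦ (digitIndex c (scale h k) : ℝ) := by
  have hlog : 0 < Real.log c := by linarith [two_thirds_le_log hc]
  refine .of_bound (Real.log c) (.of_forall fun k ↦ ?_)
  rw [Real.norm_natCast, Real.norm_of_nonneg (scale_pos h k).le, ← div_le_iff₀' hlog]
  exact Nat.le_ceil _

theorem digitIndex_sub_isLittleO_scale {h : ℕ → ℕ} (hh : Tendsto h atTop atTop) {c : ℕ}
    (hc : 2 ≤ c) :
    (fun k ↦ (digitIndex c (scale h (k + 1)) : ℝ) - digitIndex c (scale h k))
      =o[atTop] scale h := by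
  have hone : (fun _ ↦ (1 : ℝ)) =o[atTop] scale h :=
    isLittleO_const_left.2 (.inr (tendsto_norm_atTop_atTop.comp (tendsto_scale_atTop h)))
  refine IsBigO.trans_isLittleO (.of_bound 1 (.of_forall fun k ↦ ?_))
    (((scale_sub_scale_isLittleO hh).const_mul_left (3 / 2)).add hone)
  have hmono : scale h k ≤ scale h (k + 1) := monotone_scale h k.le_succ
  have hidx : (digitIndex c (scale h k) : ℝ) ≤ digitIndex c (scale h (k + 1)) := by
    exact_mod_cast digitIndex_mono c hmono
  rw [one_mul, Real.norm_of_nonneg (sub_nonneg.2 hidx)]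
  exact (digitIndex_sub_digitIndex_le hc hmono (scale_pos h _).le).trans (Real.le_norm_self _)

theorem weylSum_limitPoint_isLittleO_scale_sub {h : ℕ → ℕ} (hh : Tendsto h atTop atTop) {q c : ℕ}
    (hq : q ≠ 0) (hc : 2 ≤ c) :
    (fun k ↦ weylSum q c
        (Finset.Ico (digitIndex c (scale h k)) (digitIndex c (scale h (k + 1)))) (limitPoint h))
      =o[atTop] fun k ↦ scale h (k + 1) - scale h k := by
  have hinv := (tendsto_inv_atTop_nhds_zero_nat (𝕜 := ℝ)).comp (tendsto_slack_atTop hh)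
  refine IsBigO.trans_isLittleO
    (g := fun k ↦ (slack h k : ℝ)⁻¹ * (scale h (k + 1) - scale h k)) ?_ ?_
  · refine .of_bound 3 ?_
    filter_upwards [tendsto_precision_atTop.eventually_ge_atTop (max q c)] with k hk
    refine ((isRefinement_leftEndpoint h k).norm_weylSum_le _
      (limitPoint_mem_stageInterval h (k + 1)) c (Finset.mem_Icc.2 ⟨hc, by omega⟩) q
      (Finset.mem_Icc.2 ⟨by omega, by omega⟩)).trans ?_
    have hT := scale_pos h k
    have hslack : (0 : ℝ) < slack h k := by exact_mod_cast one_le_slack h k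
    refine mul_le_mul_of_nonneg_left (le_trans ?_ (Real.le_norm_self _)) (by norm_num)
    calc scale h k / (slack h k : ℝ) ^ 2 = (slack h k : ℝ)⁻¹ * (scale h k / slack h k) := by
          field_simp
      _ ≤ (slack h k : ℝ)⁻¹ * (scale h (k + 1) - scale h k) := by
          gcongr
          rw [scale, nextScale]
          have := div_nonneg hT.le (sq_nonneg (slack h k : ℝ))
          linarith
  · simpa using ((isLittleO_one_iff ℝ).2 hinv).mul_isBigO
      (isBigO_refl (fun k ↦ scale h (k + 1) - scale h k) atTop)

theorem simplyNormal_limitPoint {h : ℕ → ℕ} (hh : Tendsto h atTop atTop) {c : ℕ} (hc : 2 ≤ c) :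
    SimplyNormal c (limitPoint h) :=
  simplyNormal_of_weylSum_isLittleO (by omega) fun _ hq ↦
    isLittleO_sum_range_of_blocks (fun _ ↦ (Circle.norm_coe _).le)
      ((digitIndex_mono c).comp (monotone_scale h)) (monotone_scale h) (tendsto_scale_atTop h)
      (scale_isBigO_digitIndex h hc) (digitIndex_sub_isLittleO_scale hh hc)
      (weylSum_limitPoint_isLittleO_scale_sub hh hq hc)

theorem absolutelyNormal_limitPoint {h : ℕ → ℕ} (hh : Tendsto h atTop atTop) :
    AbsolutelyNormal (limitPoint h) := fun _ hb _ hℓ ↦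
  simplyNormal_limitPoint hh (hb.trans (Nat.le_self_pow (by omega) _))

end Normality

section Abnormality

variable {b : ℕ} {x : ℝ}

theorem count_rdigits_of_forall_Ico {d N n : ℕ} (hN : N ≤ n)
    (hrun : ∀ i ∈ Ico N n, rdigit b x i = d) :
    (rdigits b x n).count d = (rdigits b x N).count d + (n - N) := by
  induction n, hN using Nat.le_induction with
  | base => simp
  | succ n hN ih =>
    have hlast : rdigit b x n = d := hrun n ⟨hN, n.lt_succ_self⟩
    have hinit := ih fun i hi ↦ hrun i ⟨hi.1, hi.2.trans n.lt_succ_self⟩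
    simp only [rdigits, List.range_succ, List.map_append, List.map_singleton, List.count_append,
      hlast, List.count_singleton_self] at hinit ⊢
    omega

theorem not_simplyNormal_of_frequently_run {d : ℕ} {ρ : ℝ} (hb : 2 ≤ b) (hd : d < b) (hρ0 : 0 < ρ)
    (hρ1 : ρ < 1) (hrun : ∃ᶠ n : ℕ in atTop, ∀ i ∈ Ico ⌊ρ * n⌋₊ n, rdigit b x i = d) :
    ¬SimplyNormal b x := by
  intro hx
  have hn_top : Tendsto (fun n : ℕ ↦ (n : ℝ)) atTop atTop := tendsto_natCast_atTop_atTop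
  have hfloor_top : Tendsto (fun n : ℕ ↦ ⌊ρ * n⌋₊) atTop atTop :=
    tendsto_nat_floor_atTop.comp (hn_top.const_mul_atTop hρ0)
  have hfreq := hx d hd
  have hother := hfreq.const_sub 1
  have hlimit := hother.sub
    (((tendsto_nat_floor_mul_div_atTop hρ0.le).comp hn_top).mul (hother.comp hfloor_top))
  have hb' : 1 / (b : ℝ) < 1 := by
    rw [div_lt_one (by positivity)]
    exact_mod_cast hb
  obtain ⟨n, hn, hpos, hn0, hfloor0⟩ := (hrun.and_eventually ((hlimit.eventually_const_lt
    (by nlinarith : 0 < 1 - 1 / (b : ℝ) - ρ * (1 - 1 / (b : ℝ)))).and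
    ((eventually_ge_atTop 1).and (hfloor_top.eventually_ge_atTop 1)))).exists
  have hle : ⌊ρ * n⌋₊ ≤ n := Nat.floor_le_of_le (mul_le_of_le_one_left n.cast_nonneg hρ1.le)
  refine hpos.ne' ?_
  have hn0' : (n : ℝ) ≠ 0 := by positivity
  have hfloor0' : (⌊ρ * n⌋₊ : ℝ) ≠ 0 := by positivity
  simp only [Function.comp_apply, count_rdigits_of_forall_Ico hle hn, Nat.cast_add,
    Nat.cast_sub hle]
  field_simp
  ring

theorem not_simplyNormal_limitPoint {h : ℕ → ℕ} {m : ℕ} (hb : 2 ≤ b)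
    (hfreq : ∃ᶠ k in atTop, (Nat.unpair k).1 + 2 = b ∧ h k ≤ m) :
    ¬SimplyNormal b (limitPoint h) := by
  have hfrac : 1 / (6 * ((m : ℝ) + 1) ^ 2) < 1 := by
    rw [div_lt_one (by positivity)]
    nlinarith [m.cast_nonneg (α := ℝ)]
  refine not_simplyNormal_of_frequently_run (d := 0) (ρ := 1 - 1 / (6 * ((m : ℝ) + 1) ^ 2)) hb
    (by omega) (by linarith) (by linarith [show 0 < 1 / (6 * ((m : ℝ) + 1) ^ 2) by positivity])
    (frequently_atTop.2 fun K ↦ ?_)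
  obtain ⟨k, ⟨hbase, hm⟩, hprec, hk⟩ := (hfreq.and_eventually
    ((tendsto_precision_atTop.eventually_ge_atTop b).and (eventually_ge_atTop (b * K)))).exists
  obtain ⟨N, N', hscale, hN, hzero⟩ := (isRefinement_leftEndpoint h k).exists_zero_run
  have hstage : stageBase k = b := by rw [stageBase, hbase, min_eq_left (by omega)]
  rw [hstage] at hscale hzero
  have hKN' : K ≤ N' := by
    have : (b * K : ℝ) ≤ b * N' := by
      exact_mod_cast (Nat.cast_le.2 hk).trans ((natCast_le_scale h k).trans hscale)
    exact_mod_cast le_of_mul_le_mul_left this (by positivity)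
  have hslack : (slack h k : ℝ) ≤ m + 1 := by
    exact_mod_cast (min_le_left _ _).trans (Nat.succ_le_succ hm)
  have hslack_pos : (0 : ℝ) < slack h k := by exact_mod_cast one_le_slack h k
  refine ⟨N', hKN', fun i hi ↦ hzero _ (limitPoint_mem_stageInterval h (k + 1)) i
    ⟨(Nat.le_floor (hN.trans ?_)).trans hi.1, hi.2⟩⟩
  gcongr

end Abnormality

section Reduction

variable {X : Type*}

theorem exists_isClopen_iUnion_eq [TopologicalSpace X] [SecondCountableTopology X]
    (hX : TopologicalSpace.IsTopologicalBasis {s : Set X | IsClopen s}) {U : Set X}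
    (hU : IsOpen U) : ∃ C : ℕ → Set X, (∀ k, IsClopen (C k)) ∧ ⋃ k, C k = U := by
  obtain ⟨T, hT_countable, hT, hT_eq⟩ := TopologicalSpace.isOpen_sUnion_countable
    {s | IsClopen s ∧ s ⊆ U} fun s hs ↦ hs.1.isOpen
  obtain ⟨C, hC⟩ := (hT_countable.insert ∅).exists_eq_range (insert_nonempty _ _)
  refine ⟨C, fun k ↦ ?_, ?_⟩
  · rcases hC.superset (mem_range_self k) with hk | hk
    · exact hk ▸ isClopen_empty
    · exact (hT hk).1
  · rw [← sUnion_range, ← hC, sUnion_insert, empty_union, hT_eq]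
    exact (hX.open_eq_sUnion' hU).symm

-- The set indexed by `Nat.pair m i` collects the points for which `i` is the least bound on the
-- first indices at which they enter `⋃ k, C j k` for all `j ≤ m`; so each point lies in at most
-- one of these sets for a given `m`.
theorem exists_isClopen_limsup_eq [TopologicalSpace X] {C : ℕ → ℕ → Set X}
    (hC : ∀ m k, IsClopen (C m k)) :
    ∃ D : ℕ → Set X, (∀ p, IsClopen (D p)) ∧ limsup D atTop = ⋂ m, ⋃ k, C m k := by
  let S : ℕ → ℕ → Set X := fun m i ↦ ⋂ j ∈ Iic m, ⋃ k ∈ Iic i, C j k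
  have hS_clopen (m i : ℕ) : IsClopen (S m i) :=
    (finite_Iic m).isClopen_biInter fun j _ ↦ (finite_Iic i).isClopen_biUnion fun k _ ↦ hC j k
  refine ⟨fun p ↦ disjointed (S p.unpair.1) p.unpair.2, fun p ↦
    disjointedRec (p := IsClopen) (fun _ i ht ↦ ht.diff (hS_clopen _ i)) (hS_clopen _ _), ?_⟩
  ext x
  rw [mem_limsup_iff_frequently_mem]
  refine ⟨fun hx ↦ mem_iInter.2 fun m ↦ ?_, fun hx ↦ frequently_atTop.2 fun m ↦ ?_⟩
  · by_contra hm
    refine Nat.frequently_atTop_iff_infinite.1 hx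
      (.of_injOn (f := fun p ↦ p.unpair.1) (t := Iio m) (fun p hp ↦ ?_) ?_ (finite_Iio m))
    · by_contra hmp
      have hmem : x ∈ S p.unpair.1 p.unpair.2 := disjointed_le (S p.unpair.1) p.unpair.2 hp
      obtain ⟨k, -, hk⟩ := mem_iUnion₂.1 (mem_iInter₂.1 hmem m (mem_Iic.2 (not_lt.1 hmp)))
      exact hm (mem_iUnion.2 ⟨k, hk⟩)
    · intro p hp q hq hpq
      refine Nat.pairEquiv.symm.injective (Prod.ext hpq (by_contra fun hne ↦ ?_))
      refine (disjoint_disjointed (S p.unpair.1) hne).notMem_of_mem_left hp ?_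
      have hpq' : p.unpair.1 = q.unpair.1 := hpq
      exact hpq' ▸ hq
  · have hentry (j : ℕ) : ∃ k, x ∈ C j k := mem_iUnion.1 (mem_iInter.1 hx j)
    choose k hk using hentry
    have hmem : x ∈ ⋃ i, S m i := mem_iUnion.2 ⟨(Finset.Iic m).sup k, mem_iInter₂.2 fun j hj ↦
      mem_iUnion₂.2 ⟨k j, Finset.le_sup (f := k) (Finset.mem_Iic.2 hj), hk j⟩⟩
    rw [← iUnion_disjointed] at hmem
    obtain ⟨i, hi⟩ := mem_iUnion.1 hmem
    exact ⟨Nat.pair m i, Nat.left_le_pair m i, by simpa using hi⟩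

open Classical in
/-- The requests that reduce `⋃ n, limsup (D n) atTop` to abnormality. Stage
`Nat.pair β (Nat.pair n p)` inserts a run to base `β + 2`, whose slack is bounded in terms of `n`
and `β` if the point lies in `D n p`. -/
noncomputable def request (D : ℕ → ℕ → Set X) (x : X) (s : ℕ) : ℕ :=
  if x ∈ D s.unpair.2.unpair.1 s.unpair.2.unpair.2 then max s.unpair.2.unpair.1 s.unpair.1 else s

theorem continuous_request [TopologicalSpace X] {D : ℕ → ℕ → Set X}
    (hD : ∀ n p, IsClopen (D n p)) : Continuous (request D) := by
  classical
  exact continuous_pi fun s ↦ continuous_const.if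
    (fun x hx ↦ absurd hx ((hD _ _).frontier_eq.symm ▸ notMem_empty x)) continuous_const

theorem frequently_request_le {D : ℕ → ℕ → Set X} {x : X} {n : ℕ}
    (hx : x ∈ limsup (D n) atTop) (β : ℕ) :
    ∃ᶠ s in atTop, (Nat.unpair s).1 = β ∧ request D x s ≤ max n β := by
  refine frequently_atTop.2 fun K ↦ ?_
  obtain ⟨p, hKp, hp⟩ := frequently_atTop.1 (mem_limsup_iff_frequently_mem.1 hx) K
  refine ⟨Nat.pair β (Nat.pair n p),
    hKp.trans ((Nat.right_le_pair n p).trans (Nat.right_le_pair β _)), ?_⟩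
  simp [request, hp]

theorem tendsto_request_atTop {D : ℕ → ℕ → Set X} {x : X}
    (hx : x ∉ ⋃ n, limsup (D n) atTop) : Tendsto (request D x) atTop atTop := by
  have hfinite (n : ℕ) : {p | x ∈ D n p}.Finite := by
    rw [← not_infinite, ← Nat.frequently_atTop_iff_infinite, ← mem_limsup_iff_frequently_mem]
    exact fun hn ↦ hx (mem_iUnion.2 ⟨n, hn⟩)
  refine tendsto_atTop.2 fun B ↦ ?_
  rw [← Nat.cofinite_eq_atTop]
  have hfinite_union : (Iio B ∪ ⋃ β ∈ Iio B, ⋃ n ∈ Iio B,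
      (fun p ↦ Nat.pair β (Nat.pair n p)) '' {p | x ∈ D n p}).Finite :=
    (finite_Iio B).union ((finite_Iio B).biUnion fun β _ ↦ (finite_Iio B).biUnion fun n _ ↦
      (hfinite n).image _)
  refine hfinite_union.subset fun s hs ↦ ?_
  have hlt : request D x s < B := not_le.1 hs
  rw [request] at hlt
  split_ifs at hlt with hmem
  · obtain ⟨hn, hβ⟩ := max_lt_iff.1 hlt
    exact .inr (mem_iUnion₂.2 ⟨_, hβ, mem_iUnion₂.2 ⟨_, hn, _, hmem, by simp⟩⟩)
  · exact .inl hlt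

end Reduction

theorem absolutelyAbnormal_sigma03_hard_general {X : Type*} [TopologicalSpace X]
    [SecondCountableTopology X]
    (hX : TopologicalSpace.IsTopologicalBasis {s : Set X | IsClopen s}) (U : ℕ → ℕ → Set X)
    (hU : ∀ n m, IsOpen (U n m)) :
    ∃ g : X → ℝ, Continuous g ∧ ∀ x,
      (x ∈ ⋃ n, ⋂ m, U n m → ∀ b, 2 ≤ b → ¬SimplyNormal b (g x)) ∧
      (x ∉ ⋃ n, ⋂ m, U n m → AbsolutelyNormal (g x)) := by
  choose C hC hCU using fun n m ↦ exists_isClopen_iUnion_eq hX (hU n m)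
  choose D hD hDC using fun n ↦ exists_isClopen_limsup_eq (hC n)
  simp only [← hCU, ← hDC]
  refine ⟨limitPoint ∘ request D, continuous_limitPoint.comp (continuous_request hD), fun x ↦
    ⟨fun hx b hb ↦ ?_, fun hx ↦ absolutelyNormal_limitPoint (tendsto_request_atTop hx)⟩⟩
  obtain ⟨n, hn⟩ := mem_iUnion.1 hx
  exact not_simplyNormal_limitPoint hb
    ((frequently_request_le hn (b - 2)).mono fun s hs ↦ ⟨by omega, hs.2⟩)

/-- The set of absolutely abnormal reals is `Σ⁰₃`-hard: for every `Σ⁰₃` subset `A` of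
Baire space `ℕ^ℕ` (a countable union of countable intersections of open sets in the
product topology) there is a continuous `g : ℕ^ℕ → ℝ` such that `g` maps members of `A`
to absolutely abnormal reals and non-members to absolutely normal reals. -/
theorem absolutelyAbnormal_sigma03_hard
    (A : Set (ℕ → ℕ)) (U : ℕ → ℕ → Set (ℕ → ℕ))
    (hU : ∀ n m, IsOpen (U n m)) (hA : A = ⋃ n, ⋂ m, U n m) :
    ∃ g : (ℕ → ℕ) → ℝ, Continuous g ∧ ∀ f : ℕ → ℕ,
      (f ∈ A → AbsolutelyAbnormal (g f)) ∧
      (f ∉ A → AbsolutelyNormal (g f)) := by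
  obtain ⟨g, hg, hgU⟩ :=
    absolutelyAbnormal_sigma03_hard_general TopologicalSpace.isTopologicalBasis_clopens U hU
  exact ⟨g, hg, fun f ↦ hA ▸ ⟨fun hf b hb hN ↦ (hgU f).1 hf b hb (pow_one b ▸ hN 1 le_rfl),
    (hgU f).2⟩⟩
end
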